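/- Let G=(V,E) be a graph, let S ⊆ V, and let 𝒯 be an S-nice tree decomposition of G of width k. Then there exists a slim S-nice tree decomposition 𝒯' of G of width at most k. -/

import Mathlib

/-! Preliminary definitions: rooted tree decompositions, `S`-traces, `S`-nice and
slim tree decompositions, following Chapelle et al. -/

/-- A walk in `G` all of whose vertices lie in the set `W`. -/
def SimpleGraph.ReachableIn {V : Type} (G : SimpleGraph V) (W : Set V) (u v : V) : Prop :=
  ∃ p : G.Walk u v, ∀ x ∈ p.support, x ∈ W

/-- The open neighborhood of a set of vertices. -/
def SimpleGraph.nbhdSet {V : Type} (G : SimpleGraph V) (W : Set V) : Set V :=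
  {x | x ∉ W ∧ ∃ w ∈ W, G.Adj w x}

/-- The vertex set of the connected component of `G − X` that contains `v`
(assuming `v ∉ X`). -/
def SimpleGraph.compOutside {V : Type} (G : SimpleGraph V) (X : Set V) (v : V) : Set V :=
  {w | G.ReachableIn Xᶜ v w}

/-- A rooted tree decomposition of a graph `G` on vertex type `V`, with node type `ι`.
The rooted tree is given by a parent function: the root is a fixed point of `parent`
and every node reaches the root by iterating `parent`.  The bags satisfy the three
usual conditions of a tree decomposition; connectedness of `{t | v ∈ bag t}` is
expressed by the existence of a highest node `m` containing `v` such that from any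
node whose bag contains `v` the whole ancestor chain up to `m` contains `v`. -/
structure RootedTreeDecomp (V ι : Type) (G : SimpleGraph V) where
  root : ι
  parent : ι → ι
  parent_root : parent root = root
  reaches_root : ∀ t : ι, ∃ n : ℕ, parent^[n] t = root
  bag : ι → Set V
  bags_cover : ∀ v : V, ∃ t : ι, v ∈ bag t
  bags_of_edges : ∀ ⦃u v : V⦄, G.Adj u v → ∃ t : ι, u ∈ bag t ∧ v ∈ bag t
  bags_connected : ∀ v : V, ∃ m : ι, v ∈ bag m ∧
    ∀ t : ι, v ∈ bag t → ∃ n : ℕ, parent^[n] t = m ∧ ∀ i ≤ n, v ∈ bag (parent^[i] t)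

namespace RootedTreeDecomp

variable {V ι : Type} {G : SimpleGraph V}

/-- `t'` lies in the subtree `T_t` rooted at `t`; equivalently, `t` is an
ancestor (possibly equal) of `t'`. -/
def InSubtree (𝒯 : RootedTreeDecomp V ι G) (t t' : ι) : Prop :=
  ∃ n : ℕ, 𝒯.parent^[n] t' = t

/-- `t` is the parent of `t'`. -/
def IsParent (𝒯 : RootedTreeDecomp V ι G) (t t' : ι) : Prop :=
  t' ≠ 𝒯.root ∧ 𝒯.parent t' = t

/-- `V_t`: the union of the bags of the nodes of the subtree rooted at `t`. -/
def Vt (𝒯 : RootedTreeDecomp V ι G) (t : ι) : Set V :=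
  {v | ∃ t', 𝒯.InSubtree t t' ∧ v ∈ 𝒯.bag t'}

/-- `L_t = V_t ∖ X_t`. -/
def Lt (𝒯 : RootedTreeDecomp V ι G) (t : ι) : Set V := 𝒯.Vt t \ 𝒯.bag t

/-- `R_t = V ∖ V_t`. -/
def Rt (𝒯 : RootedTreeDecomp V ι G) (t : ι) : Set V := (𝒯.Vt t)ᶜ

/-- `L_t^S = L_t ∩ S`. -/
def LS (𝒯 : RootedTreeDecomp V ι G) (S : Set V) (t : ι) : Set V := 𝒯.Lt t ∩ S

/-- `X_t^S = X_t ∩ S`. -/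
def XS (𝒯 : RootedTreeDecomp V ι G) (S : Set V) (t : ι) : Set V := 𝒯.bag t ∩ S

/-- `R_t^S = R_t ∩ S`. -/
def RS (𝒯 : RootedTreeDecomp V ι G) (S : Set V) (t : ι) : Set V := 𝒯.Rt t ∩ S

/-- The `S`-trace of a node `t`. -/
def STrace (𝒯 : RootedTreeDecomp V ι G) (S : Set V) (t : ι) : Set V × Set V × Set V :=
  (𝒯.LS S t, 𝒯.XS S t, 𝒯.RS S t)

/-- Every bag has size at most `k + 1`, i.e. the width is at most `k`. -/
def WidthAtMost (𝒯 : RootedTreeDecomp V ι G) (k : ℕ) : Prop :=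
  ∀ t : ι, (𝒯.bag t).ncard ≤ k + 1

/-- The width of the decomposition (max bag size minus one) is exactly `k`. -/
def HasWidth (𝒯 : RootedTreeDecomp V ι G) (k : ℕ) : Prop :=
  𝒯.WidthAtMost k ∧ ∃ t : ι, (𝒯.bag t).ncard = k + 1

/-- `t'` is an `S`-child of `t`. -/
def IsSChild (𝒯 : RootedTreeDecomp V ι G) (S : Set V) (t t' : ι) : Prop :=
  𝒯.IsParent t t' ∧ ((𝒯.LS S t' ∪ 𝒯.XS S t') \ (𝒯.RS S t ∪ 𝒯.XS S t)).Nonempty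

/-- `t` is an `S`-bottom node: `L_t^S ≠ ∅` and `t` is the bottom node of the
directed path of its own `S`-trace (every node with the same `S`-trace is an
ancestor of `t`). -/
def IsSBottom (𝒯 : RootedTreeDecomp V ι G) (S : Set V) (t : ι) : Prop :=
  (𝒯.LS S t).Nonempty ∧ ∀ t', 𝒯.STrace S t' = 𝒯.STrace S t → 𝒯.InSubtree t' t

/-- `t` admits the `S`-operation `introduce(v)`. -/
def AdmitsIntroduce (𝒯 : RootedTreeDecomp V ι G) (S : Set V) (t : ι) (v : V) : Prop :=
  ∃ t₁, 𝒯.IsSChild S t t₁ ∧ (∀ t₂, 𝒯.IsSChild S t t₂ → t₂ = t₁) ∧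
    v ∈ S ∧ v ∉ 𝒯.bag t₁ ∧ 𝒯.XS S t = 𝒯.XS S t₁ ∪ {v}

/-- `t` admits the `S`-operation `forget(v)`. -/
def AdmitsForget (𝒯 : RootedTreeDecomp V ι G) (S : Set V) (t : ι) (v : V) : Prop :=
  ∃ t₁, 𝒯.IsSChild S t t₁ ∧ (∀ t₂, 𝒯.IsSChild S t t₂ → t₂ = t₁) ∧
    v ∈ S ∧ v ∈ 𝒯.bag t₁ ∧ 𝒯.XS S t = 𝒯.XS S t₁ \ {v}

/-- `t` admits the `S`-operation `join` with the two `S`-children `t₁, t₂`. -/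
def AdmitsJoin (𝒯 : RootedTreeDecomp V ι G) (S : Set V) (t t₁ t₂ : ι) : Prop :=
  t₁ ≠ t₂ ∧ 𝒯.IsSChild S t t₁ ∧ 𝒯.IsSChild S t t₂ ∧
    (∀ t₃, 𝒯.IsSChild S t t₃ → t₃ = t₁ ∨ t₃ = t₂) ∧
    𝒯.XS S t₁ ∪ 𝒯.XS S t₂ ⊆ 𝒯.XS S t

/-- `S`-nice tree decomposition: bags along tree edges are comparable and differ in
size by at most one, and every `S`-bottom node admits one of the `S`-operations. -/
def IsSNice (𝒯 : RootedTreeDecomp V ι G) (S : Set V) : Prop :=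
  (∀ t t' : ι, 𝒯.IsParent t' t →
      (𝒯.bag t ⊆ 𝒯.bag t' ∨ 𝒯.bag t' ⊆ 𝒯.bag t) ∧
      (𝒯.bag t).ncard ≤ (𝒯.bag t').ncard + 1 ∧ (𝒯.bag t').ncard ≤ (𝒯.bag t).ncard + 1) ∧
  ∀ t : ι, 𝒯.IsSBottom S t →
    (∃ v, 𝒯.AdmitsIntroduce S t v) ∨ (∃ v, 𝒯.AdmitsForget S t v) ∨
      (∃ t₁ t₂, 𝒯.AdmitsJoin S t t₁ t₂)

/-- Nice tree decomposition: root and leaves have empty bags, and every internal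
node is an introduce, forget, or join node. -/
def IsNice (𝒯 : RootedTreeDecomp V ι G) : Prop :=
  𝒯.bag 𝒯.root = ∅ ∧
  (∀ t : ι, (∀ t', ¬𝒯.IsParent t t') → 𝒯.bag t = ∅) ∧
  ∀ t : ι, (∃ t', 𝒯.IsParent t t') →
    (∃ t', 𝒯.IsParent t t' ∧ (∀ t'', 𝒯.IsParent t t'' → t'' = t') ∧
      ((∃ v, v ∉ 𝒯.bag t' ∧ 𝒯.bag t = 𝒯.bag t' ∪ {v}) ∨
        (∃ v, v ∈ 𝒯.bag t' ∧ 𝒯.bag t = 𝒯.bag t' \ {v}))) ∨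
    (∃ t₁ t₂, t₁ ≠ t₂ ∧ 𝒯.IsParent t t₁ ∧ 𝒯.IsParent t t₂ ∧
      (∀ t₃, 𝒯.IsParent t t₃ → t₃ = t₁ ∨ t₃ = t₂) ∧
      𝒯.bag t = 𝒯.bag t₁ ∧ 𝒯.bag t = 𝒯.bag t₂)

/-- A set of nodes inducing a connected subtree of the tree: it contains a node `m`
such that from every node of the set the whole ancestor chain up to `m` stays in
the set. -/
def ConnectedNodeSet (𝒯 : RootedTreeDecomp V ι G) (A : Set ι) : Prop :=
  ∃ m ∈ A, ∀ t ∈ A, ∃ n : ℕ, 𝒯.parent^[n] t = m ∧ ∀ i ≤ n, 𝒯.parent^[i] t ∈ A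

/-- A full join tree: a non-trivial inclusion-maximal connected set of nodes all of
which share one and the same full bag `X` (of size `k + 1`). -/
def IsFullJoinTree (𝒯 : RootedTreeDecomp V ι G) (k : ℕ) (A : Set ι) (X : Set V) : Prop :=
  A.Nontrivial ∧ 𝒯.ConnectedNodeSet A ∧ X.ncard = k + 1 ∧ (∀ t ∈ A, 𝒯.bag t = X) ∧
  ∀ A' : Set ι, A ⊆ A' → 𝒯.ConnectedNodeSet A' → (∀ t ∈ A', 𝒯.bag t = X) → A' = A

/-- `m` is the root (top node) of the node set `A`. -/
def IsTopOf (𝒯 : RootedTreeDecomp V ι G) (A : Set ι) (m : ι) : Prop :=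
  m ∈ A ∧ ∀ t ∈ A, 𝒯.InSubtree m t

/-- The condition on a pair `(u, ti)` appearing in condition (7) of slimness:
either `ti` belongs to `T'_C` (it is an `S`-child of a node of the full join tree
`A` but is not itself in `A`) and `u ∈ V_{ti}`, or `ti` is the parent of the root
`tr` of the full join tree and `u ∈ V ∖ V_{tr}`. -/
def FullJoinBranch (𝒯 : RootedTreeDecomp V ι G) (S : Set V) (A : Set ι) (tr : ι)
    (u : V) (ti : ι) : Prop :=
  (ti ∉ A ∧ (∃ ta ∈ A, 𝒯.IsSChild S ta ti) ∧ u ∈ 𝒯.Vt ti) ∨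
  (tr ≠ 𝒯.root ∧ ti = 𝒯.parent tr ∧ u ∉ 𝒯.Vt tr)

/-- Slim `S`-nice tree decomposition of width `k` (the seven conditions of the
paper; a bag is *full* if it has size `k + 1`). -/
def IsSlim (𝒯 : RootedTreeDecomp V ι G) (S : Set V) (k : ℕ) : Prop :=
  -- (1) the root is not an S-bottom node
  (¬𝒯.IsSBottom S 𝒯.root) ∧
  -- (2) S-bottom nodes with two S-children
  (∀ t t₁ t₂ : ι, 𝒯.IsSBottom S t → t₁ ≠ t₂ → 𝒯.IsSChild S t t₁ → 𝒯.IsSChild S t t₂ →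
    (∃ A X, 𝒯.IsFullJoinTree k A X ∧ t ∈ A) ∨
      ((𝒯.bag t₁).ncard ≠ k + 1 ∧ (𝒯.bag t₂).ncard ≠ k + 1 ∧
        (𝒯.bag t₁).ncard ≤ (𝒯.bag t).ncard ∧ (𝒯.bag t₂).ncard ≤ (𝒯.bag t).ncard ∧
        ∀ tp, 𝒯.IsParent tp t →
          (𝒯.bag tp).ncard ≠ k + 1 ∧ (𝒯.bag tp).ncard ≤ (𝒯.bag t).ncard)) ∧
  -- (3) S-bottom nodes with a non-full bag
  (∀ t tp : ι, 𝒯.IsSBottom S t → (𝒯.bag t).ncard ≠ k + 1 → 𝒯.IsParent tp t →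
    𝒯.bag t = 𝒯.bag tp ∧ ∀ t'', 𝒯.IsSChild S tp t'' → t'' = t) ∧
  -- (4) S-bottom nodes admitting forget(v)
  (∀ t v t', 𝒯.IsSBottom S t → 𝒯.AdmitsForget S t v → 𝒯.IsSChild S t t' →
    (𝒯.bag t').ncard ≠ k + 1 →
    (∀ t₁ t₂, 𝒯.IsSChild S t' t₁ → 𝒯.IsSChild S t' t₂ → t₁ = t₂) ∧
      ∀ t'', 𝒯.IsSChild S t' t'' → 𝒯.bag t' = 𝒯.bag t'') ∧
  -- (5) parents of S-bottom nodes with non-full bags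
  (∀ t tp, 𝒯.IsSBottom S t → 𝒯.IsParent tp t → (𝒯.bag tp).ncard ≠ k + 1 →
    tp = 𝒯.root ∨ ∀ tpp, 𝒯.IsParent tpp tp → ¬𝒯.IsSBottom S tpp) ∧
  -- (6) nodes of full join trees
  (∀ A X, 𝒯.IsFullJoinTree k A X → ∀ t ∈ A,
    𝒯.IsSBottom S t ∧ ∃ t₁ t₂, t₁ ≠ t₂ ∧ 𝒯.IsSChild S t t₁ ∧ 𝒯.IsSChild S t t₂) ∧
  -- (7) branching condition of full join trees
  (∀ A X tr, 𝒯.IsFullJoinTree k A X → 𝒯.IsTopOf A tr →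
    ∀ v ∈ X \ S, ∃ u₁ u₂ u₃ : V, ∃ t₁ t₂ t₃ : ι,
      u₁ ≠ u₂ ∧ u₁ ≠ u₃ ∧ u₂ ≠ u₃ ∧ t₁ ≠ t₂ ∧ t₁ ≠ t₃ ∧ t₂ ≠ t₃ ∧
      (G.Adj v u₁ ∧ u₁ ∉ X ∧ (∃ s ∈ S, G.ReachableIn Xᶜ u₁ s) ∧
        𝒯.FullJoinBranch S A tr u₁ t₁) ∧
      (G.Adj v u₂ ∧ u₂ ∉ X ∧ (∃ s ∈ S, G.ReachableIn Xᶜ u₂ s) ∧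
        𝒯.FullJoinBranch S A tr u₂ t₂) ∧
      (G.Adj v u₃ ∧ u₃ ∉ X ∧ (∃ s ∈ S, G.ReachableIn Xᶜ u₃ s) ∧
        𝒯.FullJoinBranch S A tr u₃ t₃))

end RootedTreeDecomp

/-- `tw(G) ≤ k`: `G` admits a (rooted) tree decomposition of width at most `k`. -/
def SimpleGraph.TreewidthAtMost {V : Type} (G : SimpleGraph V) (k : ℕ) : Prop :=
  ∃ (ι : Type) (𝒯 : RootedTreeDecomp V ι G), 𝒯.WidthAtMost k

namespace SlimTD
variable {V : Type}

theorem ncard_lt [Finite V] {A B : Set V} (h : A ⊆ B) (x : V) (hx : x ∈ B) (hx' : x ∉ A) :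
    A.ncard < B.ncard :=
  Set.ncard_lt_ncard ⟨h, fun hh => hx' (hh hx)⟩ (Set.toFinite _)

/-- `W` only has neighbours in `X ∪ W`. -/
def Cl (G : SimpleGraph V) (X W : Set V) : Prop :=
  ∀ u ∈ W, ∀ v, G.Adj u v → v ∈ X ∨ v ∈ W

inductive D (G : SimpleGraph V) (k : ℕ) : Set V → Set V → Prop
  | leaf (X : Set V) : X.ncard ≤ k + 1 → D G k X ∅
  | forget (X W : Set V) (v : V) : v ∉ X → v ∉ W → (∀ u, G.Adj v u → u ∈ X ∨ u ∈ W) →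
      D G k (insert v X) W → D G k X (insert v W)
  | intro (X W : Set V) (v : V) : v ∉ X → v ∉ W → (insert v X).ncard ≤ k + 1 →
      D G k X W → D G k (insert v X) W
  | join (X W₁ W₂ : Set V) : Disjoint W₁ W₂ → D G k X W₁ → D G k X W₂ → D G k X (W₁ ∪ W₂)

variable {G G' : SimpleGraph V} {k : ℕ} {X W : Set V}

theorem D.card [Finite V] (h : D G k X W) : X.ncard ≤ k + 1 := by
  induction h with
  | leaf X h => exact h
  | forget X W v h1 h2 h3 h4 ih =>
    exact (Set.ncard_le_ncard (Set.subset_insert v X)).trans ih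
  | intro X W v h1 h2 h3 h4 ih => exact h3
  | join X W1 W2 h1 h2 h3 ih1 ih2 => exact ih1

theorem D.sep (h : D G k X W) : (∀ v ∈ X, v ∉ W) ∧ Cl G X W := by
  unfold Cl
  induction h with
  | leaf X h => simp
  | forget X W v h1 h2 h3 h4 ih => grind
  | intro X W v h1 h2 h3 h4 ih => grind
  | join X W1 W2 h1 h2 h3 ih1 ih2 => grind

theorem D.restrict [Finite V] (h : D G k X W) : ∀ X' W', X' ⊆ X → W' ⊆ W → Cl G X' W' →
    D G k X' W' := by
  unfold Cl
  induction h with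
  | leaf X h =>
    intro X' W' hX hW _
    rw [Set.subset_empty_iff.1 hW]
    exact D.leaf _ ((Set.ncard_le_ncard hX).trans h)
  | forget X W v h1 h2 h3 h4 ih =>
    intro X' W' hX hW hc
    by_cases hv : v ∈ W'
    · have e : W' = insert v (W' \ {v}) := by grind
      rw [e]
      apply D.forget
      · grind
      · grind
      · grind [G.ne_of_adj]
      · apply ih <;> grind
    · apply ih <;> grind
  | intro X W v h1 h2 h3 h4 ih =>
    intro X' W' hX hW hc
    have hs := h4.sep
    unfold Cl at hs
    by_cases hv : v ∈ X'
    · have e : X' = insert v (X' \ {v}) := by grind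
      rw [e]
      apply D.intro
      · grind
      · grind
      · rw [← e]; exact (Set.ncard_le_ncard hX).trans h3
      · apply ih <;> grind [G.adj_comm]
    · apply ih <;> grind
  | join X W1 W2 h1 h2 h3 ih1 ih2 =>
    intro X' W' hX hW hc
    have hs := h2.sep
    have hs2 := h3.sep
    unfold Cl at hs hs2
    have e : W' = (W' ∩ W1) ∪ (W' ∩ W2) := by grind
    rw [e]
    have hd : ∀ x ∈ W1, x ∉ W2 := fun x a b => Set.disjoint_left.1 h1 a b
    apply D.join
    · exact Set.disjoint_left.2 (by grind)
    · apply ih1 <;> grind [G.adj_comm]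
    · apply ih2 <;> grind [G.adj_comm]

theorem D.introAll [Finite V] (h : D G k X W) (Z : Set V) (hXZ : X ⊆ Z) (hd : ∀ v ∈ Z, v ∉ W)
    (hc : Z.ncard ≤ k + 1) : D G k Z W := by
  induction hn : (Z \ X).ncard using Nat.strong_induction_on generalizing Z with
  | _ n ih =>
    by_cases e : Z = X
    · rw [e]; exact h
    · obtain ⟨z, hz, hzX⟩ : ∃ z ∈ Z, z ∉ X := by
        by_contra hh; push Not at hh; exact e (Set.Subset.antisymm hh hXZ)
      have e2 : Z = insert z (Z \ {z}) := by grind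
      rw [e2]
      apply D.intro
      · grind
      · grind
      · rw [← e2]; exact hc
      · refine ih _ ?_ (Z \ {z}) (by grind) (by grind) ?_ rfl
        · rw [← hn]; apply ncard_lt _ z <;> grind
        · exact (Set.ncard_le_ncard Set.sdiff_subset).trans hc

/-- change of the root bag -/
theorem D.change [Finite V] (h : D G k X W) (Z W' : Set V) (hW : W' ⊆ W)
    (hcl : Cl G X W') (hcl' : Cl G Z W') (hd : ∀ v ∈ Z, v ∉ W')
    (hc : Z.ncard ≤ k + 1) : D G k Z W' := by
  have h1 : D G k (X ∩ Z) W' := h.restrict _ _ Set.inter_subset_left hW (by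
    unfold Cl at *; grind)
  exact h1.introAll Z Set.inter_subset_right hd hc

theorem D.forgetAll [Finite V] (h : D G k X W) (Z : Set V) (hZ : Z ⊆ X)
    (hn : ∀ x ∈ X, x ∉ Z → ∀ u, G.Adj x u → u ∈ X ∨ u ∈ W) : D G k Z (W ∪ (X \ Z)) := by
  induction hm : (X \ Z).ncard using Nat.strong_induction_on generalizing Z with
  | _ n ih =>
    by_cases e : Z = X
    · subst e; simpa using h
    · obtain ⟨z, hz, hzX⟩ : ∃ z ∈ X, z ∉ Z := by
        by_contra hh; push Not at hh; exact e (Set.Subset.antisymm hZ hh)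
      have hs := h.sep
      have e2 : W ∪ (X \ Z) = insert z (W ∪ (X \ (insert z Z))) := by grind
      rw [e2]
      apply D.forget
      · exact hzX
      · grind
      · grind [G.ne_of_adj]
      · refine ih _ ?_ (insert z Z) (by grind) (by grind) rfl
        rw [← hm]; apply ncard_lt _ z <;> grind

theorem D.mono (h : D G k X W) (hg : ∀ w ∈ W, ∀ v, G'.Adj w v → G.Adj w v) : D G' k X W := by
  induction h with
  | leaf X h => exact D.leaf _ h
  | forget X W v h1 h2 h3 h4 ih =>
    exact D.forget _ _ _ h1 h2 (fun u hu => h3 u (hg v (by simp) u hu))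
      (ih (fun w hw => hg w (by simp [hw])))
  | intro X W v h1 h2 h3 h4 ih => exact D.intro _ _ _ h1 h2 h3 (ih hg)
  | join X W1 W2 h1 h2 h3 ih1 ih2 =>
    exact D.join _ _ _ h1 (ih1 fun w hw => hg w (by simp [hw]))
      (ih2 fun w hw => hg w (by simp [hw]))

/-- connected vertex sets -/
def Conn (G : SimpleGraph V) (C : Set V) : Prop :=
  C.Nonempty ∧ ∀ C' ⊆ C, C'.Nonempty → (∀ u ∈ C', ∀ v ∈ C, G.Adj u v → v ∈ C') → C' = C

/-- connected components of `G[W]` -/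
def IsComp (G : SimpleGraph V) (W C : Set V) : Prop :=
  C ⊆ W ∧ Conn G C ∧ ∀ u ∈ C, ∀ v ∈ W, G.Adj u v → v ∈ C

theorem reach_trans {W : Set V} {a b c : V} (h : G.ReachableIn W a b) (h' : G.ReachableIn W b c) :
    G.ReachableIn W a c := by
  obtain ⟨p, hp⟩ := h
  obtain ⟨q, hq⟩ := h'
  refine ⟨p.append q, fun x hx => ?_⟩
  rw [SimpleGraph.Walk.mem_support_append_iff] at hx
  exact hx.elim (hp x) (hq x)

theorem reach_refl {W : Set V} {a : V} (h : a ∈ W) : G.ReachableIn W a a :=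
  ⟨SimpleGraph.Walk.nil, by simpa using h⟩

theorem reach_adj {W : Set V} {a b : V} (h : a ∈ W) (h' : b ∈ W) (hab : G.Adj a b) :
    G.ReachableIn W a b :=
  ⟨SimpleGraph.Walk.cons hab SimpleGraph.Walk.nil, by simp [h, h']⟩

theorem reach_symm {W : Set V} {a b : V} (h : G.ReachableIn W a b) : G.ReachableIn W b a := by
  obtain ⟨p, hp⟩ := h
  exact ⟨p.reverse, fun x hx => hp x (by simpa using hx)⟩

theorem reach_mono {W W' : Set V} {a b : V} (hW : W ⊆ W') (h : G.ReachableIn W a b) :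
    G.ReachableIn W' a b := by
  obtain ⟨p, hp⟩ := h
  exact ⟨p, fun x hx => hW (hp x hx)⟩

theorem reach_mem {W : Set V} {a b : V} (h : G.ReachableIn W a b) : a ∈ W ∧ b ∈ W := by
  obtain ⟨p, hp⟩ := h
  exact ⟨hp _ p.start_mem_support, hp _ p.end_mem_support⟩

/-- invariance principle along walks -/
theorem reach_induct {W : Set V} {P : V → Prop} {a b : V} (h : G.ReachableIn W a b) (ha : P a)
    (hs : ∀ u v, u ∈ W → v ∈ W → G.Adj u v → P u → P v) : P b := by
  obtain ⟨p, hp⟩ := h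
  induction p with
  | nil => exact ha
  | cons h p ih =>
    refine ih (hs _ _ (hp _ (by simp)) (hp _ (by simp)) h ha) (fun x hx => hp x (by simp [hx]))

theorem Conn.reach {C : Set V} (h : Conn G C) {a b : V} (ha : a ∈ C) (hb : b ∈ C) :
    G.ReachableIn C a b := by
  have := h.2 {x | G.ReachableIn C a x} (fun x hx => (reach_mem hx).2) ⟨a, reach_refl ha⟩
    (fun u hu v hv huv => reach_trans hu (reach_adj (reach_mem hu).2 hv huv))
  rw [← this] at hb
  exact hb

theorem exists_comp (G : SimpleGraph V) {W : Set V} {w : V} (hw : w ∈ W) : ∃ C, IsComp G W C ∧ w ∈ C := by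
  refine ⟨{x | G.ReachableIn W w x}, ⟨fun x hx => (reach_mem hx).2, ⟨⟨w, reach_refl hw⟩, ?_⟩, ?_⟩,
    reach_refl hw⟩
  · intro C' hC' ⟨c, hc⟩ hcl
    refine Set.Subset.antisymm hC' (fun x hx => ?_)
    have hcx : G.ReachableIn W c x := reach_trans (reach_symm (hC' hc)) hx
    have := reach_induct (P := fun y => y ∈ C') hcx hc (fun u v hu hv huv hu' =>
      hcl u hu' v (reach_trans (hC' hu') (reach_adj hu hv huv)) huv)
    exact this
  · intro u hu v hv huv
    exact reach_trans hu (reach_adj (reach_mem hu).2 hv huv)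

theorem comp_eq {W C C' : Set V} (h : IsComp G W C) (h' : IsComp G W C') {x : V} (hx : x ∈ C)
    (hx' : x ∈ C') : C = C' := by
  have h1 := h.2.1.2 (C ∩ C') Set.inter_subset_left ⟨x, hx, hx'⟩ (fun u hu v hv huv =>
    ⟨hv, h'.2.2 u hu.2 v (h.1 hv) huv⟩)
  have h2 := h'.2.1.2 (C ∩ C') Set.inter_subset_right ⟨x, hx, hx'⟩ (fun u hu v hv huv =>
    ⟨h.2.2 u hu.1 v (h'.1 hv) huv, hv⟩)
  rw [← h1, h2]

theorem exists_comps [Finite V] (G : SimpleGraph V) (W : Set V) : ∃ l : List (Set V),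
    (∀ C ∈ l, IsComp G W C) ∧ l.Pairwise Disjoint ∧ (∀ w ∈ W, ∃ C ∈ l, w ∈ C) := by
  classical
  have hf : {C | IsComp G W C}.Finite := Set.toFinite _
  refine ⟨hf.toFinset.toList, by simp, ?_, ?_⟩
  · refine List.Pairwise.imp_of_mem ?_ hf.toFinset.nodup_toList
    intro a b ha hb hab
    simp at ha hb
    exact Set.disjoint_left.2 fun x hx hx' => hab (comp_eq ha hb hx hx')
  · intro w hw
    obtain ⟨C, hC, hwC⟩ := exists_comp G hw
    exact ⟨C, by simpa using hC, hwC⟩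

theorem IsComp.cl {W C : Set V} (h : IsComp G W C) (hc : Cl G X W) : Cl G X C := by
  intro u hu v huv
  rcases hc u (h.1 hu) v huv with h' | h'
  · exact Or.inl h'
  · exact Or.inr (h.2.2 u hu v h' huv)

theorem D.progress (h : D G k X W) (hW : Conn G W) (hX : ∀ x ∈ X, ∃ w ∈ W, G.Adj x w) :
    ∃ w ∈ W, D G k (insert w X) (W \ {w}) := by
  induction h with
  | leaf X h => exact absurd hW.1 (by simp)
  | forget X W v h1 h2 h3 h4 ih => exact ⟨v, by simp, by simpa [h2] using h4⟩
  | intro X W v h1 h2 h3 h4 ih =>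
    obtain ⟨w, hw, hvw⟩ := hX v (by simp)
    have := h4.sep.2 w hw v hvw.symm
    grind
  | join X W1 W2 h1 h2 h3 ih1 ih2 =>
    have hd : ∀ x ∈ W1, x ∉ W2 := fun x a b => Set.disjoint_left.1 h1 a b
    have hs1 := h2.sep
    by_cases e : W1 = ∅
    · subst e; simp only [Set.empty_union] at hW hX ⊢; exact ih2 hW hX
    · have := hW.2 W1 Set.subset_union_left (Set.nonempty_iff_ne_empty.2 e) (fun u hu v hv huv => by
        have := hs1.2 u hu v huv
        have := h2.sep.1 v; have := h3.sep.1 v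
        grind)
      rw [← this] at hW hX ⊢
      exact ih1 hW hX

/-- open neighbourhood -/
def Nb (G : SimpleGraph V) (C : Set V) : Set V := {x | x ∉ C ∧ ∃ c ∈ C, G.Adj x c}

theorem Nb_cl (C : Set V) : Cl G (Nb G C) C := by
  intro u hu v huv
  by_cases h : v ∈ C
  · exact Or.inr h
  · exact Or.inl ⟨h, u, hu, huv.symm⟩

theorem Nb_sub {C : Set V} (h : Cl G X C) : Nb G C ⊆ X := by
  rintro x ⟨hx, c, hc, hxc⟩
  exact (h c hc x hxc.symm).resolve_right hx

theorem Nb_not_full [Finite V] {C Y : Set V} (h : D G k Y C) (hC : Conn G C) (hY : k + 1 ≤ Y.ncard) :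
    ∃ x ∈ Y, x ∉ Nb G C := by
  by_contra hh
  push Not at hh
  obtain ⟨w, hw, hD⟩ := h.progress hC (fun x hx => (hh x hx).2)
  have := hD.card
  rw [Set.ncard_insert_of_notMem (fun h' => h.sep.1 w h' hw)] at this
  omega

end SlimTD

namespace SlimTD
variable {V : Type} {G G' : SimpleGraph V} {k : ℕ} {X W : Set V}

/-- union of a list of sets -/
def UL (l : List (Set V)) : Set V := {w | ∃ C ∈ l, w ∈ C}

theorem mem_UL {l : List (Set V)} {w : V} : w ∈ UL l ↔ ∃ C ∈ l, w ∈ C := Iff.rfl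

theorem UL_nil : UL ([] : List (Set V)) = ∅ := by ext; simp [mem_UL]

theorem UL_cons (C : Set V) (l : List (Set V)) : UL (C :: l) = C ∪ UL l := by
  ext; simp [mem_UL]

theorem D.joinList {l : List (Set V)} (hX : X.ncard ≤ k + 1) (hl : l.Pairwise Disjoint)
    (h : ∀ C ∈ l, D G k X C) : D G k X (UL l) := by
  induction l with
  | nil => rw [UL_nil]; exact D.leaf _ hX
  | cons C l ih =>
    rw [UL_cons]
    rw [List.pairwise_cons] at hl
    refine D.join _ _ _ ?_ (h C (by simp)) (ih hl.2 (fun C hC => h C (by simp [hC])))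
    rw [Set.disjoint_left]
    rintro x hx ⟨C', hC', hx'⟩
    exact Set.disjoint_left.1 (hl.1 C' hC') hx hx'

theorem UL_comps {l : List (Set V)} (h1 : ∀ C ∈ l, IsComp G W C) (h2 : ∀ w ∈ W, ∃ C ∈ l, w ∈ C) :
    UL l = W := by
  ext w
  constructor
  · rintro ⟨C, hC, hw⟩; exact (h1 C hC).1 hw
  · exact h2 w

theorem D.joinComps [Finite V] (hX : X.ncard ≤ k + 1)
    (h : ∀ C, IsComp G W C → D G k X C) : D G k X W := by
  obtain ⟨l, h1, h2, h3⟩ := exists_comps G W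
  rw [← UL_comps h1 h3]
  exact D.joinList hX h2 (fun C hC => h C (h1 C hC))

section TD
variable {ι : Type} (T : RootedTreeDecomp V ι G)
open Classical in
/-- depth of a node -/
noncomputable def depth (t : ι) : ℕ := Nat.find (T.reaches_root t)

theorem depth_parent (t : ι) : T.parent t = t ∨ depth T (T.parent t) < depth T t := by
  classical
  have h := Nat.find_spec (T.reaches_root t)
  change T.parent^[depth T t] t = T.root at h
  cases hd : depth T t with
  | zero =>
    rw [hd] at h
    left
    simp only [Function.iterate_zero, id] at h
    rw [h, T.parent_root]
  | succ d =>
    right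
    rw [hd, Function.iterate_succ_apply] at h
    exact Nat.lt_succ_of_le (Nat.find_min' _ h)

theorem depth_sub {a b : ι} (h : T.InSubtree a b) : a = b ∨ depth T a < depth T b := by
  obtain ⟨n, hn⟩ := h
  induction n generalizing b with
  | zero => left; simpa using hn.symm
  | succ n ih =>
    rw [Function.iterate_succ_apply] at hn
    have := ih hn
    rcases depth_parent T b with h | h
    · rw [h] at this; exact this
    · right; rcases this with h' | h'
      · rw [h']; exact h
      · omega

theorem sub_refl (a : ι) : T.InSubtree a a := ⟨0, rfl⟩

theorem sub_trans {a b c : ι} (h : T.InSubtree a b) (h' : T.InSubtree b c) : T.InSubtree a c := by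
  obtain ⟨n, hn⟩ := h
  obtain ⟨m, hm⟩ := h'
  exact ⟨n + m, by rw [Function.iterate_add_apply, hm, hn]⟩

theorem sub_total {a b c : ι} (h : T.InSubtree a c) (h' : T.InSubtree b c) :
    T.InSubtree a b ∨ T.InSubtree b a := by
  obtain ⟨n, hn⟩ := h
  obtain ⟨m, hm⟩ := h'
  rcases le_total n m with hnm | hnm
  · right; refine ⟨m - n, ?_⟩
    rw [← hn, ← Function.iterate_add_apply, Nat.sub_add_cancel hnm, hm]
  · left; refine ⟨n - m, ?_⟩
    rw [← hm, ← Function.iterate_add_apply, Nat.sub_add_cancel hnm, hn]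

theorem sub_of_depth {a b c : ι} (h : T.InSubtree a c) (h' : T.InSubtree b c)
    (hd : depth T a ≤ depth T b) : T.InSubtree a b := by
  rcases sub_total T h h' with h1 | h1
  · exact h1
  · rcases depth_sub T h1 with h2 | h2
    · rw [h2]; exact sub_refl T _
    · omega

/-- bags between two nodes containing a vertex contain it -/
theorem bag_between {a b c : ι} (h : T.InSubtree a b) (h' : T.InSubtree b c) {x : V}
    (ha : x ∈ T.bag a) (hc : x ∈ T.bag c) : x ∈ T.bag b := by
  obtain ⟨m, hm, hall⟩ := T.bags_connected x
  obtain ⟨n, hn, hx⟩ := hall c hc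
  obtain ⟨n', hn', hx'⟩ := hall a ha
  have hma : T.InSubtree m a := ⟨n', hn'⟩
  obtain ⟨j, hj⟩ := h'
  by_cases hjn : j ≤ n
  · rw [← hj]; exact hx j hjn
  · have h1 : T.InSubtree b m := by
      refine ⟨j - n, ?_⟩
      rw [← hn, ← Function.iterate_add_apply, Nat.sub_add_cancel (by omega), hj]
    have h2 := sub_trans T hma h
    have : b = m := by
      rcases depth_sub T h1 with h3 | h3
      · exact h3
      · rcases depth_sub T h2 with h4 | h4
        · exact h4.symm
        · omega
    rw [this]; exact hm

theorem D_of_td_aux [Finite V] (hw : T.WidthAtMost k) : ∀ n (W : Set V), W.ncard = n → Conn G W →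
    ∀ t, Nb G W ⊆ T.bag t → (∀ s, ∀ w ∈ W, w ∈ T.bag s → T.InSubtree t s) → D G k (Nb G W) W := by
  intro n
  induction n using Nat.strong_induction_on with
  | _ n ih =>
  intro W hn hW t hNt ht
  choose top htop htop2 using T.bags_connected
  obtain ⟨w, hwW, hmin⟩ := Set.exists_min_image W (fun w => depth T (top w)) (Set.toFinite _) hW.1
  have htop3 : ∀ x s, x ∈ T.bag s → T.InSubtree (top x) s := fun x s hx => by
    obtain ⟨n, hn, _⟩ := htop2 x s hx
    exact ⟨n, hn⟩
  have hQ := hW.2 {x | x ∈ W ∧ T.InSubtree (top w) (top x)} (fun x hx => hx.1)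
    ⟨w, hwW, sub_refl T _⟩ (by
      rintro u ⟨hu, hu'⟩ v hv huv
      refine ⟨hv, ?_⟩
      obtain ⟨s, hs, hs'⟩ := T.bags_of_edges huv
      exact sub_of_depth T (sub_trans T hu' (htop3 u s hs)) (htop3 v s hs') (hmin v hv))
  have hQ1 : ∀ s, ∀ x ∈ W, x ∈ T.bag s → T.InSubtree (top w) s := by
    intro s x hx hxs
    rw [← hQ] at hx
    exact sub_trans T hx.2 (htop3 x s hxs)
  have hNm : Nb G W ⊆ T.bag (top w) := by
    rintro x hx
    obtain ⟨hxW, c, hc, hxc⟩ := id hx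
    obtain ⟨s, hs, hs'⟩ := T.bags_of_edges hxc
    exact bag_between T (ht _ w hwW (htop w)) (hQ1 s c hc hs') (hNt hx) hs
  have hcard : (T.bag (top w)).ncard ≤ k + 1 := hw _
  have key : D G k (T.bag (top w)) (W \ T.bag (top w)) := by
    apply D.joinComps hcard
    intro C hC
    have hclC : Cl G (T.bag (top w)) C := by
      apply hC.cl
      intro u hu v huv
      rcases Nb_cl W u hu.1 v huv with h | h
      · exact Or.inl (hNm h)
      · by_cases h' : v ∈ T.bag (top w)
        · exact Or.inl h'
        · exact Or.inr ⟨h, h'⟩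
    have hNC := Nb_sub hclC
    have hlt : C.ncard < n := by
      rw [← hn]
      exact ncard_lt (fun x hx => (hC.1 hx).1) w hwW (fun h => (hC.1 h).2 (htop w))
    have := ih C.ncard hlt C rfl hC.2.1 (top w) hNC
      (fun s x hx hxs => hQ1 s x (hC.1 hx).1 hxs)
    exact this.introAll _ hNC (fun v hv hvC => (hC.1 hvC).2 hv) hcard
  have k2 := key.restrict (Nb G W ∪ (W ∩ T.bag (top w))) (W \ T.bag (top w)) (by
    rintro x (hx | hx)
    · exact hNm hx
    · exact hx.2) subset_rfl (by
      intro u hu v huv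
      have := Nb_cl W u hu.1 v huv
      grind)
  have k3 := k2.forgetAll (Nb G W) Set.subset_union_left (by
    intro x hx hx' u hxu
    have hxW : x ∈ W := by grind
    have := Nb_cl W x hxW u hxu
    grind)
  have e : W \ T.bag (top w) ∪ (Nb G W ∪ W ∩ T.bag (top w)) \ Nb G W = W := by
    ext x
    have : x ∈ Nb G W → x ∉ W := fun h => h.1
    grind
  rwa [e] at k3

theorem D_of_td [Finite V] (hw : T.WidthAtMost k) : D G k ∅ Set.univ := by
  apply D.joinComps (by simp)
  intro C hC
  have : Nb G C = ∅ := by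
    ext x
    simp only [Set.mem_empty_iff_false, iff_false]
    rintro ⟨h, c, hc, hxc⟩
    exact h (hC.2.2 c hc x trivial hxc.symm)
  have h := D_of_td_aux T hw _ C rfl hC.2.1 T.root (by simp [this]) (fun s _ _ _ => T.reaches_root s)
  rwa [this] at h

end TD
end SlimTD

namespace SlimTD
variable {V : Type} {G G' : SimpleGraph V} {k : ℕ} {X W S : Set V}

/-- `v` has a neighbour in `B` outside `Y` connected to `S` outside `Y` -/
def Touch (G : SimpleGraph V) (S Y : Set V) (v : V) (B : Set V) : Prop :=
  ∃ u ∈ B, G.Adj v u ∧ u ∉ Y ∧ ∃ s ∈ S, G.ReachableIn Yᶜ u s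

/-- every vertex of `Y` outside `S` touches three sets of the list -/
def Seven (G : SimpleGraph V) (S Y : Set V) (l : List (Set V)) : Prop :=
  ∀ v ∈ Y, v ∉ S → ∃ B₁ ∈ l, ∃ B₂ ∈ l, ∃ B₃ ∈ l, B₁ ≠ B₂ ∧ B₁ ≠ B₃ ∧ B₂ ≠ B₃ ∧
    Touch G S Y v B₁ ∧ Touch G S Y v B₂ ∧ Touch G S Y v B₃

/-- derivations of slim decompositions -/
inductive N (G : SimpleGraph V) (S : Set V) (k : ℕ) : Set V → Set V → Prop
  | leaf (X : Set V) : X.ncard ≤ k → N G S k X ∅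
  | join (X W₁ W₂ : Set V) : W₁.Nonempty → W₂.Nonempty → Disjoint W₁ W₂ → N G S k X W₁ →
      N G S k X W₂ → N G S k X (W₁ ∪ W₂)
  | drop (X W : Set V) (x : V) : x ∈ X → x ∉ W → X.ncard ≤ k → N G S k (X \ {x}) W → N G S k X W
  | addv (X W : Set V) (w : V) : w ∉ X → w ∉ W → (∀ u, G.Adj w u → u ∈ X ∨ u ∈ W) →
      N G S k (insert w X) W → N G S k X (insert w W)
  | full (X : Set V) (w : V) (lS lN : List (Set V)) (x : Set V → V) : X.ncard = k → w ∉ X →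
      (lS ++ lN).Pairwise Disjoint →
      (∀ W ∈ lS ++ lN, W.Nonempty ∧ x W ∈ insert w X ∧ ∀ v ∈ insert w X, v ∉ W) →
      (∀ W ∈ lS ++ lN, N G S k (insert w X \ {x W}) W) →
      (∀ W ∈ lS, ∃ s ∈ S, s ∈ W) → (∀ W ∈ lN, ∀ s ∈ S, s ∉ W) →
      (∀ u, G.Adj w u → u ∈ X ∨ u ∈ UL (lS ++ lN)) →
      (lS.length ≤ 2 ∨ Seven G S (insert w X) ((insert w X ∪ UL (lS ++ lN))ᶜ :: lS)) →
      N G S k X (insert w (UL (lS ++ lN)))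

theorem N.card [Finite V] (h : N G S k X W) : X.ncard ≤ k := by
  induction h with
  | leaf X h => exact h
  | join X W1 W2 h1 h2 h3 h4 h5 ih1 ih2 => exact ih1
  | drop X W x h1 h2 h3 h4 ih => exact h3
  | addv X W w h1 h2 h3 h4 ih => exact (Set.ncard_le_ncard (Set.subset_insert w X)).trans ih
  | full X w lS lN x h1 => exact h1.le

theorem N.sep (h : N G S k X W) : (∀ v ∈ X, v ∉ W) ∧ Cl G X W := by
  unfold Cl
  induction h with
  | leaf X h => simp
  | join X W1 W2 h1 h2 h3 h4 h5 ih1 ih2 => grind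
  | drop X W x h1 h2 h3 h4 ih => grind
  | addv X W w h1 h2 h3 h4 ih => grind
  | full X w lS lN x h1 h2 h3 h4 h5 h6 h7 h8 h9 ih =>
    constructor
    · intro v hv hv'
      rcases hv' with hv' | ⟨W, hW, hv'⟩
      · subst hv'; exact h2 hv
      · exact (h4 W hW).2.2 v (Or.inr hv) hv'
    · rintro u (hu | ⟨W, hW, hu⟩) v huv
      · subst hu
        rcases h8 v huv with h | h
        · exact Or.inl h
        · exact Or.inr (Or.inr h)
      · rcases (ih W hW).2 u hu v huv with h | h
        · rcases h.1 with h | h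
          · subst h; exact Or.inr (Or.inl rfl)
          · exact Or.inl h
        · exact Or.inr (Or.inr ⟨W, hW, h⟩)

theorem N.joinList {l : List (Set V)} (hX : X.ncard ≤ k) (hl : l.Pairwise Disjoint)
    (h : ∀ C ∈ l, N G S k X C) : N G S k X (UL l) := by
  induction l with
  | nil => rw [UL_nil]; exact N.leaf _ hX
  | cons C l ih =>
    rw [UL_cons]
    rw [List.pairwise_cons] at hl
    have h1 := h C (by simp)
    have h2 := ih hl.2 (fun C hC => h C (by simp [hC]))
    rcases Set.eq_empty_or_nonempty C with e | e
    · rw [e, Set.empty_union]; exact h2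
    rcases Set.eq_empty_or_nonempty (UL l) with e' | e'
    · rw [e', Set.union_empty]; exact h1
    refine N.join _ _ _ e e' ?_ h1 h2
    rw [Set.disjoint_left]
    rintro x hx ⟨C', hC', hx'⟩
    exact Set.disjoint_left.1 (hl.1 C' hC') hx hx'

theorem N.joinComps [Finite V] (hX : X.ncard ≤ k)
    (h : ∀ C, IsComp G W C → N G S k X C) : N G S k X W := by
  obtain ⟨l, h1, h2, h3⟩ := exists_comps G W
  rw [← UL_comps h1 h3]
  exact N.joinList hX h2 (fun C hC => h C (h1 C hC))

theorem N.dropAll [Finite V] (h : N G S k X W) (Z : Set V) (hXZ : X ⊆ Z) (hd : ∀ v ∈ Z, v ∉ W)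
    (hc : Z.ncard ≤ k) : N G S k Z W := by
  induction hn : (Z \ X).ncard using Nat.strong_induction_on generalizing Z with
  | _ n ih =>
    by_cases e : Z = X
    · rw [e]; exact h
    · obtain ⟨z, hz, hzX⟩ : ∃ z ∈ Z, z ∉ X := by
        by_contra hh; push Not at hh; exact e (Set.Subset.antisymm hh hXZ)
      refine N.drop _ _ z hz (hd z hz) hc ?_
      refine ih _ ?_ (Z \ {z}) (by grind) (by grind) ?_ rfl
      · rw [← hn]; apply ncard_lt _ z <;> grind
      · exact (Set.ncard_le_ncard Set.sdiff_subset).trans hc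

theorem N.addAll [Finite V] (h : N G S k X W) (Z : Set V) (hZ : Z ⊆ X)
    (hn : ∀ x ∈ X, x ∉ Z → ∀ u, G.Adj x u → u ∈ X ∨ u ∈ W) : N G S k Z (W ∪ (X \ Z)) := by
  induction hm : (X \ Z).ncard using Nat.strong_induction_on generalizing Z with
  | _ n ih =>
    by_cases e : Z = X
    · subst e; simpa using h
    · obtain ⟨z, hz, hzX⟩ : ∃ z ∈ X, z ∉ Z := by
        by_contra hh; push Not at hh; exact e (Set.Subset.antisymm hZ hh)
      have hs := h.sep
      have e2 : W ∪ (X \ Z) = insert z (W ∪ (X \ (insert z Z))) := by grind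
      rw [e2]
      apply N.addv
      · exact hzX
      · grind
      · grind [G.ne_of_adj]
      · refine ih _ ?_ (insert z Z) (by grind) (by grind) rfl
        rw [← hm]; apply ncard_lt _ z <;> grind

theorem ncard_del [Finite V] {Y : Set V} {x : V} (hY : Y.ncard = k + 1) (hx : x ∈ Y) :
    (Y \ {x}).ncard = k := by
  rw [Set.ncard_sdiff_singleton_of_mem hx, hY]; rfl

theorem NonS [Finite V] : ∀ n (W X : Set V), W.ncard = n → D G k X W → (∀ s ∈ S, s ∉ W) →
    X.ncard ≤ k → N G S k X W := by
  intro n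
  induction n using Nat.strong_induction_on with
  | _ n ih =>
  intro W X hn hD hS hX
  apply N.joinComps hX
  intro C hC
  have hs := hD.sep
  have hclC := hC.cl hs.2
  have hNC := Nb_sub hclC
  have hCW : C.ncard ≤ n := by rw [← hn]; exact Set.ncard_le_ncard hC.1
  have hD1 : D G k (Nb G C) C := hD.change _ _ hC.1 hclC (Nb_cl C) (fun v hv => hv.1)
    ((Set.ncard_le_ncard hNC).trans (by omega))
  suffices h : N G S k (Nb G C) C from
    h.dropAll X hNC (fun v hv hvC => hs.1 v hv (hC.1 hvC)) hX
  obtain ⟨w, hw, hDw⟩ := hD1.progress hC.2.1 (fun x hx => hx.2)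
  have hws := hDw.sep
  have hlt : (C \ {w}).ncard < n :=
    (ncard_lt Set.sdiff_subset w hw (by simp)).trans_le hCW
  have hSw : ∀ s ∈ S, s ∉ C \ {w} := fun s hs h => hS s hs (hC.1 h.1)
  have hwN : w ∉ Nb G C := fun h => h.1 hw
  have hwnb : ∀ u, G.Adj w u → u ∈ Nb G C ∨ u ∈ C \ {w} := by
    intro u hu
    rcases Nb_cl C w hw u hu with h | h
    · exact Or.inl h
    · exact Or.inr ⟨h, hu.ne'⟩
  have e : C = insert w (C \ {w}) := by grind
  by_cases hY : (insert w (Nb G C)).ncard ≤ k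
  · have := N.addv _ _ w hwN (by simp) hwnb (ih _ hlt _ _ rfl hDw hSw hY)
    rwa [← e] at this
  · have hc := hDw.card
    have hY' : (insert w (Nb G C)).ncard = k + 1 := by omega
    obtain ⟨l, hl1, hl2, hl3⟩ := exists_comps G (C \ {w})
    have hU := UL_comps hl1 hl3
    have hDl : ∀ C' ∈ l, D G k (insert w (Nb G C)) C' := fun C' hC' =>
      hDw.restrict _ _ subset_rfl (hl1 C' hC').1 ((hl1 C' hC').cl hws.2)
    have hx : ∀ C', ∃ x, C' ∈ l → x ∈ insert w (Nb G C) ∧ x ∉ Nb G C' := by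
      intro C'
      by_cases h : C' ∈ l
      · obtain ⟨x, hx1, hx2⟩ := Nb_not_full (hDl C' h) (hl1 C' h).2.1 hY'.ge
        exact ⟨x, fun _ => ⟨hx1, hx2⟩⟩
      · exact ⟨w, fun h' => absurd h' h⟩
    choose x hx using hx
    have := N.full (G := G) (S := S) (k := k) (Nb G C) w [] l x
      (by rw [Set.ncard_insert_of_notMem hwN] at hY'; omega) hwN (by simpa using hl2)
      (by
        intro W hW
        simp only [List.nil_append] at hW
        exact ⟨(hl1 W hW).2.1.1, (hx W hW).1, fun v hv h => hws.1 v hv ((hl1 W hW).1 h)⟩)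
      (by
        intro W hW
        simp only [List.nil_append] at hW
        have hsub := (hl1 W hW).1
        refine ih _ ((Set.ncard_le_ncard hsub).trans_lt hlt) _ _ rfl ?_
          (fun s hs h => hSw s hs (hsub h)) (ncard_del hY' (hx W hW).1).le
        refine (hDl W hW).restrict _ _ Set.sdiff_subset subset_rfl ?_
        have h1 := (hDl W hW).sep.2
        intro u hu v huv
        have h2 : v ∉ W → v ∈ Nb G W := fun h => ⟨h, u, hu, huv.symm⟩
        have h3 := (hx W hW).2
        have h4 := h1 u hu v huv
        by_cases h5 : v = x W
        · subst h5; grind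
        · grind)
      (by simp)
      (by
        intro W hW s hs h
        exact hSw s hs ((hl1 W hW).1 h))
      (by simpa [hU] using hwnb)
      (by simp)
    rw [List.nil_append, hU, ← e] at this
    exact this

end SlimTD

namespace SlimTD
variable {V : Type} {G G' : SimpleGraph V} {k : ℕ} {X W S U C Y : Set V}

theorem N.full' [Finite V] (w : V) (lS lN : List (Set V)) (x : Set V → V)
    (hY : Y.ncard = k + 1) (hw : w ∈ Y)
    (h1 : (lS ++ lN).Pairwise Disjoint)
    (h2 : ∀ W ∈ lS ++ lN, W.Nonempty ∧ x W ∈ Y ∧ ∀ v ∈ Y, v ∉ W)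
    (h3 : ∀ W ∈ lS ++ lN, N G S k (Y \ {x W}) W)
    (h4 : ∀ W ∈ lS, ∃ s ∈ S, s ∈ W) (h5 : ∀ W ∈ lN, ∀ s ∈ S, s ∉ W)
    (h6 : ∀ u, G.Adj w u → u ∈ Y ∨ u ∈ UL (lS ++ lN))
    (h7 : lS.length ≤ 2 ∨ Seven G S Y ((Y ∪ UL (lS ++ lN))ᶜ :: lS)) :
    N G S k (Y \ {w}) (insert w (UL (lS ++ lN))) := by
  have e : insert w (Y \ {w}) = Y := by grind
  have hk := ncard_del hY hw
  refine N.full (Y \ {w}) w lS lN x hk (by simp) h1 ?_ ?_ h4 h5 ?_ ?_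
  · rwa [e]
  · rwa [e]
  · intro u hu
    have := hu.ne'
    have := h6 u hu
    grind
  · rwa [e]

/-- every component outside a bag meets `S` -/
def Red (G : SimpleGraph V) (S : Set V) (k : ℕ) (U : Set V) : Prop :=
  ∀ X ⊆ U, D G k X (U \ X) → ∀ C, IsComp G (U \ X) C → ∃ s ∈ S, s ∈ C

structure Inv (G : SimpleGraph V) (k : ℕ) (U C : Set V) : Prop where
  conn : Conn G C
  sub : C ⊆ U
  card : (Nb G C).ncard ≤ k
  d1 : D G k (Nb G C) C
  d2 : D G k (Nb G C) ((U \ Nb G C) \ C)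
  np : ∀ x ∈ Nb G C, ∃ r ∈ (U \ Nb G C) \ C, G.Adj x r

/-- splitting bags -/
def Spl (G : SimpleGraph V) (k : ℕ) (C Y : Set V) : Prop :=
  Nb G C ⊆ Y ∧ Y ⊆ Nb G C ∪ C ∧ D G k Y (C \ Y) ∧
    ¬ (Conn G (C \ Y) ∧ ∀ y ∈ Y, ∃ c ∈ C \ Y, G.Adj y c)

theorem exists_Spl [Finite V] (h : Inv G k U C) :
    ∃ Y, Spl G k C Y ∧ ∀ Y', Spl G k C Y' → Y.ncard ≤ Y'.ncard := by
  have hne : {Y | Spl G k C Y}.Nonempty := by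
    by_contra hh
    rw [Set.not_nonempty_iff_eq_empty] at hh
    have hno : ∀ Y, ¬ Spl G k C Y := fun Y hY => by
      have : Y ∈ {Y | Spl G k C Y} := hY
      rw [hh] at this; exact this
    have e0 : C \ Nb G C = C := by
      ext v; have : v ∈ Nb G C → v ∉ C := fun h => h.1
      grind
    obtain ⟨Y, ⟨hY1, hY2, hY3⟩, hmax⟩ := Set.exists_max_image
      {Y | Nb G C ⊆ Y ∧ Y ⊆ Nb G C ∪ C ∧ D G k Y (C \ Y)} Set.ncard (Set.toFinite _)
      ⟨Nb G C, subset_rfl, Set.subset_union_left, by rw [e0]; exact h.d1⟩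
    have := hno Y
    have hc : Conn G (C \ Y) ∧ ∀ y ∈ Y, ∃ c ∈ C \ Y, G.Adj y c := by
      by_contra hc
      exact this ⟨hY1, hY2, hY3, hc⟩
    obtain ⟨w, hw, hD⟩ := hY3.progress hc.1 hc.2
    have e1 : (C \ Y) \ {w} = C \ insert w Y := by grind
    rw [e1] at hD
    have h1 := hmax (insert w Y) ⟨by grind, by grind, hD⟩
    have h2 : Y.ncard < (insert w Y).ncard := ncard_lt (by grind) w (by grind) (by grind)
    omega
  obtain ⟨Y, hY, hmin⟩ := Set.exists_min_image _ Set.ncard (Set.toFinite _) hne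
  exact ⟨Y, hY, hmin⟩

theorem Spl.ne (h : Inv G k U C) (hY : Spl G k C Y) : ∃ y ∈ Y, y ∉ Nb G C ∧ y ∈ C := by
  by_contra hh
  push Not at hh
  have e : Y = Nb G C := by
    apply Set.Subset.antisymm _ hY.1
    intro y hy
    by_contra hy'
    have := hh y hy hy'
    have := hY.2.1 hy
    grind
  subst e
  have e0 : C \ Nb G C = C := by
    ext v; have : v ∈ Nb G C → v ∉ C := fun h => h.1
    grind
  apply hY.2.2.2
  rw [e0]
  exact ⟨h.conn, fun y hy => hy.2⟩

theorem Spl.DR [Finite V] (h : Inv G k U C) (hY : Spl G k C Y) :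
    D G k Y ((U \ Nb G C) \ C) := by
  obtain ⟨h1, h2, h3, h4⟩ := hY
  have hs := h.d2.sep
  refine h.d2.change _ _ subset_rfl hs.2 ?_ ?_ h3.card
  · intro u hu v huv
    have := hs.2 u hu v huv
    grind
  · grind

theorem Spl.inv [Finite V] (hU : Cl G ∅ U) (h : Inv G k U C) (hY : Spl G k C Y)
    (hmin : ∀ Y', Spl G k C Y' → Y.ncard ≤ Y'.ncard) {C' : Set V} (hC' : IsComp G (C \ Y) C') :
    Inv G k U C' := by
  have hDR := hY.DR h
  obtain ⟨h1, h2, h3, h4⟩ := hY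
  have hs := h3.sep
  have hcl := hC'.cl hs.2
  have hNY := Nb_sub hcl
  have hC'Y : ∀ v ∈ Y, v ∉ C' := fun v hv hv' => (hC'.1 hv').2 hv
  have hC'C : ∀ v ∈ C', v ∈ C := fun v hv => (hC'.1 hv).1
  have hNbCU : ∀ v ∈ Nb G C, v ∈ U := by
    rintro v ⟨_, c, hc, hvc⟩
    have := hU c (h.sub hc) v hvc.symm
    simpa using this
  have hNbC : ∀ v ∈ Nb G C, v ∉ C := fun v hv => hv.1
  have hNC' : ∀ v ∈ Nb G C', v ∉ C' := fun v hv => hv.1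
  have hYU : ∀ v ∈ Y, v ∈ U := fun v hv => by
    have := h2 hv
    have := h.sub
    grind
  have hD' : D G k Y C' := h3.restrict _ _ subset_rfl hC'.1 hcl
  refine ⟨hC'.2.1, fun v hv => h.sub (hC'C v hv), ?_, ?_, ?_, ?_⟩
  · by_cases hk : Y.ncard ≤ k
    · exact (Set.ncard_le_ncard hNY).trans hk
    · have := h3.card
      obtain ⟨x, hx, hx'⟩ := Nb_not_full hD' hC'.2.1 (by omega)
      have := ncard_lt hNY x hx hx'
      omega
  · exact hD'.restrict _ _ hNY subset_rfl (Nb_cl C')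
  · have a1 : D G k Y ((C \ Y) \ C') := h3.restrict _ _ subset_rfl Set.sdiff_subset (by
      intro u hu v huv
      have a := hs.2 u hu.1 v huv
      have b := hcl v
      have c := hC'Y
      by_cases hv : v ∈ C'
      · have := hcl v hv u huv.symm
        grind
      · grind)
    have a2 := D.join _ _ _ (by rw [Set.disjoint_left]; grind) hDR a1
    have a3 := a2.forgetAll (Nb G C') hNY (by
      intro y hy hy' u hyu
      have hu : u ∈ U := by simpa using hU y (hYU y hy) u hyu
      have hu' : u ∉ C' := fun h => hy' ⟨hC'Y y hy, u, h, hyu⟩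
      by_cases hu2 : u ∈ Y
      · exact Or.inl hu2
      · right
        have := @h1 u
        grind)
    have e : (U \ Nb G C) \ C ∪ (C \ Y) \ C' ∪ Y \ Nb G C' = (U \ Nb G C') \ C' := by
      ext u
      have b1 := @h1 u
      have b2 := @hNY u
      have b3 := hC'C u
      have b4 := hC'Y u
      have b5 := @h2 u
      have b6 := hYU u
      have b7 := @h.sub u
      grind
    rwa [e] at a3
  · intro x hx
    by_cases hxX : x ∈ Nb G C
    · obtain ⟨r, hr, hxr⟩ := h.np x hxX
      refine ⟨r, ?_, hxr⟩
      have b2 := @hNY r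
      have b3 := hC'C r
      have b5 := @h2 r
      grind
    by_contra hno
    push Not at hno
    have hxY := hNY hx
    have hxC : x ∈ C := by have := h2 hxY; grind
    have hxn : ∀ u, G.Adj x u → u ∈ Nb G C' ∨ u ∈ C' := by
      intro u hu
      have hu' : u ∈ U := by simpa using hU x (hYU x hxY) u hu
      by_contra hh
      exact hno u (by grind) hu
    have hsp : Spl G k C (Y \ {x}) := by
      refine ⟨by grind, by grind, ?_, ?_⟩
      · have := h3.forgetAll (Y \ {x}) Set.sdiff_subset (by
          intro y hy hy' u hyu
          have : y = x := by grind
          subst this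
          have := hxn u hyu
          have := @hNY u
          have := @hC'.1 u
          grind)
        have e : C \ Y ∪ Y \ (Y \ {x}) = C \ (Y \ {x}) := by grind
        rwa [e] at this
      · rintro ⟨c1, c2⟩
        have e : C \ (Y \ {x}) = insert x (C \ Y) := by grind
        rw [e] at c1 c2
        have := c1.2 (insert x C') (by
          have := hC'.1
          grind) ⟨x, by simp⟩ (by
          intro u hu v hv huv
          rcases hv with hv | hv
          · exact Or.inl hv
          · right
            rcases hu with hu | hu
            · subst hu
              have := hxn v huv
              have := @hNY v
              grind
            · exact hC'.2.2 u hu v hv huv)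
        have e2 : C' = C \ Y := by
          ext u
          have b1 : u ∈ insert x C' ↔ u ∈ insert x (C \ Y) := by rw [this]
          have b2 := hC'Y x hxY
          grind
        apply h4
        rw [← e2]
        refine ⟨hC'.2.1, fun y hy => ?_⟩
        by_cases hyx : y = x
        · subst hyx; exact hx.2
        · obtain ⟨c, hc, hyc⟩ := c2 y (by grind)
          rcases hc with hc | hc
          · subst hc
            rcases hxn y hyc.symm with b | b
            · exact b.2
            · exact absurd b (hC'Y y hy)
          · exact ⟨c, by rw [e2]; exact hc, hyc⟩
    have := hmin _ hsp
    have := ncard_lt (A := Y \ {x}) (B := Y) (by grind) x hxY (by simp)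
    omega

end SlimTD

namespace SlimTD
variable {V : Type} {G G' : SimpleGraph V} {k : ℕ} {X W S U C Y : Set V}

theorem main_step [Finite V] (hU : Cl G ∅ U) (hRed : Red G S k U) (h : Inv G k U C)
    (hY : Spl G k C Y) (hN : ∀ C', IsComp G (C \ Y) C' → N G S k (Nb G C') C') :
    N G S k (Nb G C) C := by
  have hDR := hY.DR h
  obtain ⟨y0, hy0, hy0X, hy0C⟩ := hY.ne h
  obtain ⟨h1, h2, h3, -⟩ := hY
  have hs := h3.sep
  have hcard := h3.card
  have hNbC : ∀ v ∈ Nb G C, v ∉ C := fun v hv => hv.1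
  have hNbCU : ∀ v ∈ Nb G C, v ∈ U := by
    rintro v ⟨_, c, hc, hvc⟩
    have := hU c (h.sub hc) v hvc.symm
    simpa using this
  have hYU : ∀ v ∈ Y, v ∈ U := fun v hv => by
    have := h2 hv
    have := h.sub
    grind
  have hYC : ∀ y ∈ Y, y ∉ Nb G C → y ∈ C := fun y hy hy' => by
    have := h2 hy; grind
  have hCn : ∀ y ∈ C, ∀ u, G.Adj y u → u ∈ Y ∨ u ∈ C \ Y := by
    intro y hy u hyu
    have := Nb_cl C y hy u hyu
    have := @h1 u
    grind
  have hNbY : ∀ C', IsComp G (C \ Y) C' → Nb G C' ⊆ Y := fun C' hC' => Nb_sub (hC'.cl hs.2)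
  by_cases hk : Y.ncard ≤ k
  · have a1 : N G S k Y (C \ Y) := N.joinComps hk (fun C' hC' =>
      (hN C' hC').dropAll Y (hNbY C' hC') (fun v hv hv' => (hC'.1 hv').2 hv) hk)
    have a2 := a1.addAll (Nb G C) h1 (fun y hy hy' u hyu => hCn y (hYC y hy hy') u hyu)
    have e : C \ Y ∪ Y \ Nb G C = C := by
      ext v
      have := hYC v
      have := hNbC v
      have := @h1 v
      grind
    rwa [e] at a2
  have hk1 : Y.ncard = k + 1 := by omega
  -- finishing step
  have fin : ∀ y ∈ Y, y ∉ Nb G C → N G S k (Y \ {y}) (insert y (C \ Y)) → N G S k (Nb G C) C := by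
    intro y hy hy' hh
    have a2 := hh.addAll (Nb G C) (by grind) (fun z hz hz' u hzu => by
      have := hCn z (hYC z hz.1 hz') u hzu
      grind)
    have e : insert y (C \ Y) ∪ (Y \ {y}) \ Nb G C = C := by
      ext v
      have := hYC v
      have := hYC y hy hy'
      have := hNbC v
      have := @h1 v
      grind
    rwa [e] at a2
  obtain ⟨l, hl1, hl2, hl3⟩ := exists_comps G (C \ Y)
  have hUL := UL_comps hl1 hl3
  have hDU : D G k Y (U \ Y) := by
    have := D.join _ _ _ (by rw [Set.disjoint_left]; grind) hDR h3
    have e : (U \ Nb G C) \ C ∪ C \ Y = U \ Y := by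
      ext v
      have := @h1 v
      have := @h2 v
      have := @h.sub v
      grind
    rwa [e] at this
  have hmeet : ∀ C' ∈ l, ∃ s ∈ S, s ∈ C' := by
    intro C' hC'
    have hc := hl1 C' hC'
    apply hRed Y (fun v hv => hYU v hv) hDU
    refine ⟨fun v hv => ⟨h.sub (hc.1 hv).1, (hc.1 hv).2⟩, hc.2.1, ?_⟩
    intro u hu v hv huv
    exact (hc.cl hs.2 u hu v huv).resolve_left hv.2
  have htouch : ∀ v ∈ Y, ∀ u, G.Adj v u → u ∉ Y → ∀ B : Set V, u ∈ B → Touch G S Y v B := by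
    intro v hv u hvu hu B hB
    refine ⟨u, hB, hvu, hu, ?_⟩
    have huU : u ∈ U := by simpa using hU v (hYU v hv) u hvu
    obtain ⟨C', hC', huC'⟩ := exists_comp G (W := U \ Y) ⟨huU, hu⟩
    obtain ⟨s, hsS, hsC⟩ := hRed Y (fun v hv => hYU v hv) hDU C' hC'
    exact ⟨s, hsS, reach_mono (fun v hv => (hC'.1 hv).2) (hC'.2.1.reach huC' hsC)⟩
  have hx : ∀ C', ∃ x, C' ∈ l → x ∈ Y ∧ x ∉ Nb G C' := by
    intro C'
    by_cases hC' : C' ∈ l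
    · obtain ⟨x, hx1, hx2⟩ := Nb_not_full (h3.restrict _ _ subset_rfl (hl1 C' hC').1
        ((hl1 C' hC').cl hs.2)) (hl1 C' hC').2.1 hk1.ge
      exact ⟨x, fun _ => ⟨hx1, hx2⟩⟩
    · exact ⟨y0, fun h' => absurd h' hC'⟩
  choose x hx using hx
  have hYd : ∀ C' ∈ l, ∀ v ∈ Y, v ∉ C' := fun C' hC' v hv hv' => ((hl1 C' hC').1 hv').2 hv
  have hbr : ∀ C' ∈ l, ∀ y ∈ Y, y ∉ Nb G C' → N G S k (Y \ {y}) C' := by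
    intro C' hC' y hy hy'
    refine (hN C' (hl1 C' hC')).dropAll _ ?_ (fun v hv => hYd C' hC' v hv.1) (ncard_del hk1 hy).le
    intro v hv
    exact ⟨hNbY C' (hl1 C' hC') hv, fun e => by rw [e] at hv; exact hy' hv⟩
  by_cases hcase : l.length ≤ 2 ∨ Seven G S Y ((Y ∪ UL (l ++ []))ᶜ :: l)
  · apply fin y0 hy0 hy0X
    have := N.full' (G := G) (S := S) (k := k) (Y := Y) y0 l [] x hk1 hy0 (by simpa using hl2)
      (by
        intro W hW
        simp only [List.append_nil] at hW
        exact ⟨(hl1 W hW).2.1.1, (hx W hW).1, hYd W hW⟩)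
      (by
        intro W hW
        simp only [List.append_nil] at hW
        exact hbr W hW _ (hx W hW).1 (hx W hW).2)
      hmeet (by simp) (by simpa [hUL] using hCn y0 hy0C) hcase
    rwa [List.append_nil, hUL] at this
  · push Not at hcase
    obtain ⟨hlen, h7⟩ := hcase
    unfold Seven at h7
    push Not at h7
    obtain ⟨v, hvY, hvS, h7⟩ := h7
    rw [List.append_nil, hUL] at h7
    have hdisj : ∀ A ∈ l, ∀ B ∈ l, ∀ z, z ∈ A → z ∈ B → A = B := fun A hA B hB z hzA hzB =>
      comp_eq (hl1 A hA) (hl1 B hB) hzA hzB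
    have hnt : ∀ C' ∈ l, ¬ Touch G S Y v C' → v ∉ Nb G C' := by
      rintro C' hC' hnt ⟨_, c, hc, hvc⟩
      exact hnt (htouch v hvY c hvc (fun hh => hYd C' hC' c hh hc) C' hc)
    classical
    by_cases ha : ∃ C1 ∈ l, ∀ C'' ∈ l, C'' ≠ C1 → ¬ Touch G S Y v C''
    · obtain ⟨C1, hC1, hoth⟩ := ha
      obtain ⟨C2, hC2, hC21⟩ : ∃ C2 ∈ l, C2 ≠ C1 := by
        by_contra hh
        push Not at hh
        have e := List.eq_replicate_iff.2 ⟨rfl, hh⟩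
        rw [e, List.pairwise_replicate] at hl2
        rcases hl2 with hl2 | hl2
        · omega
        · have := (hl1 C1 hC1).2.1.1
          rw [disjoint_self] at hl2
          rw [hl2] at this
          exact absurd this (by simp)
      set rest := l.filter (fun A => A ≠ C1) with hrest
      have hr : ∀ A, A ∈ rest ↔ A ∈ l ∧ A ≠ C1 := by simp [hrest]
      have hne : UL rest ≠ C1 := by
        intro e
        obtain ⟨c, hc⟩ := (hl1 C2 hC2).2.1.1
        have : c ∈ C1 := by rw [← e]; exact ⟨C2, (hr C2).2 ⟨hC2, hC21⟩, hc⟩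
        exact hC21 (hdisj C2 hC2 C1 hC1 c hc this)
      have hNr : N G S k (Y \ {v}) (UL rest) := N.joinList (ncard_del hk1 hvY).le
        (hl2.sublist List.filter_sublist) (fun A hA => by
          rw [hr] at hA
          exact hbr A hA.1 v hvY (hnt A hA.1 (hoth A hA.1 hA.2)))
      have hULr : UL ([C1, UL rest] ++ []) = C \ Y := by
        rw [← hUL]
        ext z
        simp only [mem_UL, List.append_nil, List.mem_cons, List.not_mem_nil, or_false, exists_eq_or_imp,
          exists_eq_left, hr]
        constructor
        · rintro (hz | ⟨A, hA, hz⟩)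
          · exact ⟨C1, hC1, hz⟩
          · exact ⟨A, hA.1, hz⟩
        · rintro ⟨A, hA, hz⟩
          by_cases e : A = C1
          · left; rwa [← e]
          · right; exact ⟨A, ⟨hA, e⟩, hz⟩
      apply fin y0 hy0 hy0X
      have := N.full' (G := G) (S := S) (k := k) (Y := Y) y0 [C1, UL rest] []
        (fun A => if A = C1 then x C1 else v) hk1 hy0
        (by
          simp only [List.append_nil, List.pairwise_cons, List.mem_cons, List.not_mem_nil, or_false,
            forall_eq, false_imp_iff, implies_true, List.Pairwise.nil, and_true]
          rw [Set.disjoint_left]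
          rintro z hz ⟨A, hA, hz'⟩
          rw [hr] at hA
          exact hA.2 (hdisj A hA.1 C1 hC1 z hz' hz))
        (by
          intro W hW
          simp only [List.append_nil, List.mem_cons, List.not_mem_nil, or_false] at hW
          rcases hW with rfl | rfl
          · simp only [if_true]
            exact ⟨(hl1 _ hC1).2.1.1, (hx _ hC1).1, hYd _ hC1⟩
          · simp only [if_neg hne]
            refine ⟨?_, hvY, ?_⟩
            · obtain ⟨c, hc⟩ := (hl1 C2 hC2).2.1.1
              exact ⟨c, C2, (hr C2).2 ⟨hC2, hC21⟩, hc⟩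
            · rintro z hz ⟨A, hA, hz'⟩
              exact hYd A ((hr A).1 hA).1 z hz hz')
        (by
          intro W hW
          simp only [List.append_nil, List.mem_cons, List.not_mem_nil, or_false] at hW
          rcases hW with rfl | rfl
          · simp only [if_true]
            exact hbr _ hC1 _ (hx _ hC1).1 (hx _ hC1).2
          · simp only [if_neg hne]
            exact hNr)
        (by
          intro W hW
          simp only [List.mem_cons, List.not_mem_nil, or_false] at hW
          rcases hW with rfl | rfl
          · exact hmeet _ hC1
          · obtain ⟨s, hs1, hs2⟩ := hmeet C2 hC2
            exact ⟨s, hs1, C2, (hr C2).2 ⟨hC2, hC21⟩, hs2⟩)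
        (by simp) (by rw [hULr]; exact hCn y0 hy0C) (Or.inl (by simp))
      rwa [hULr] at this
    · push Not at ha
      obtain ⟨C0, hC0⟩ : ∃ C0, C0 ∈ l := by
        cases l with
        | nil => simp at hlen
        | cons a l => exact ⟨a, by simp⟩
      obtain ⟨C1, hC1, -, hT1⟩ := ha C0 hC0
      obtain ⟨C2, hC2, h21, hT2⟩ := ha C1 hC1
      have hVt : ∀ A ∈ l, (Y ∪ C \ Y)ᶜ ≠ A := by
        rintro A hA e
        obtain ⟨c, hc⟩ := (hl1 A hA).2.1.1
        have h' := (hl1 A hA).1 hc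
        rw [← e] at hc
        exact hc (Or.inr h')
      have hnV : ¬ Touch G S Y v (Y ∪ C \ Y)ᶜ := fun hT =>
        h7 _ (by simp) C1 (by simp [hC1]) C2 (by simp [hC2]) (hVt C1 hC1) (hVt C2 hC2) h21.symm
          hT hT1 hT2
      have hoth : ∀ A ∈ l, A ≠ C1 → A ≠ C2 → ¬ Touch G S Y v A := fun A hA hA1 hA2 hT =>
        h7 A (by simp [hA]) C1 (by simp [hC1]) C2 (by simp [hC2]) hA1 hA2 h21.symm
          hT hT1 hT2
      have hvX : v ∉ Nb G C := by
        intro hvX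
        obtain ⟨r, hr, hvr⟩ := h.np v hvX
        have hr1 := @h2 r
        exact hnV (htouch v hvY r hvr (by grind) _ (by simp; grind))
      have hvC := hYC v hvY hvX
      set rest := l.filter (fun A => A ≠ C1 ∧ A ≠ C2) with hrest
      have hr : ∀ A, A ∈ rest ↔ A ∈ l ∧ A ≠ C1 ∧ A ≠ C2 := by simp [hrest]
      have hNr : N G S k (Y \ {v}) (UL rest) := N.joinList (ncard_del hk1 hvY).le
        (hl2.sublist List.filter_sublist) (fun A hA => by
          rw [hr] at hA
          exact hbr A hA.1 v hvY (hnt A hA.1 (hoth A hA.1 hA.2.1 hA.2.2)))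
      have hN12 := N.full' (G := G) (S := S) (k := k) (Y := Y) v [C1, C2] [] x hk1 hvY
        (by
          simp only [List.append_nil, List.pairwise_cons, List.mem_cons, List.not_mem_nil, or_false,
            forall_eq, false_imp_iff, implies_true, List.Pairwise.nil, and_true]
          rw [Set.disjoint_left]
          intro z hz hz'
          exact h21 (hdisj C2 hC2 C1 hC1 z hz' hz))
        (by
          intro W hW
          simp only [List.append_nil, List.mem_cons, List.not_mem_nil, or_false] at hW
          have hW' : W ∈ l := by rcases hW with rfl | rfl <;> assumption
          exact ⟨(hl1 W hW').2.1.1, (hx W hW').1, hYd W hW'⟩)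
        (by
          intro W hW
          simp only [List.append_nil, List.mem_cons, List.not_mem_nil, or_false] at hW
          have hW' : W ∈ l := by rcases hW with rfl | rfl <;> assumption
          exact hbr W hW' _ (hx W hW').1 (hx W hW').2)
        (by
          intro W hW
          simp only [List.mem_cons, List.not_mem_nil, or_false] at hW
          have hW' : W ∈ l := by rcases hW with rfl | rfl <;> assumption
          exact hmeet W hW')
        (by simp)
        (by
          intro u hu
          rcases hCn v hvC u hu with hh | hh
          · exact Or.inl hh
          · right
            obtain ⟨A, hA, huA⟩ := hl3 u hh
            have hTA := htouch v hvY u hu hh.2 A huA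
            refine ⟨A, ?_, huA⟩
            have := hoth A hA
            simp; tauto)
        (Or.inl (by simp))
      apply fin v hvY hvX
      have hj := N.joinList (G := G) (S := S) (l := [insert v (UL ([C1, C2] ++ [])), UL rest])
        (ncard_del hk1 hvY).le (by
          simp only [List.pairwise_cons, List.mem_cons, List.not_mem_nil, or_false,
            forall_eq, false_imp_iff, implies_true, List.Pairwise.nil, and_true]
          rw [Set.disjoint_left]
          rintro z hz ⟨A, hA, hz'⟩
          rw [hr] at hA
          rcases hz with hz | ⟨B, hB, hz⟩
          · subst hz; exact hYd A hA.1 z hvY hz'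
          · simp only [List.append_nil, List.mem_cons, List.not_mem_nil, or_false] at hB
            rcases hB with rfl | rfl
            · exact hA.2.1 (hdisj A hA.1 _ hC1 z hz' hz)
            · exact hA.2.2 (hdisj A hA.1 _ hC2 z hz' hz))
        (by
          intro A hA
          simp only [List.mem_cons, List.not_mem_nil, or_false] at hA
          rcases hA with rfl | rfl
          · exact hN12
          · exact hNr)
      have e : UL [insert v (UL ([C1, C2] ++ [])), UL rest] = insert v (C \ Y) := by
        rw [← hUL]
        ext z
        simp only [mem_UL, List.append_nil, List.mem_cons, List.not_mem_nil, or_false, exists_eq_or_imp,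
          exists_eq_left, hr, Set.mem_insert_iff]
        constructor
        · rintro ((hz | hz | hz) | ⟨A, hA, hz⟩)
          · exact Or.inl hz
          · exact Or.inr ⟨C1, hC1, hz⟩
          · exact Or.inr ⟨C2, hC2, hz⟩
          · exact Or.inr ⟨A, hA.1, hz⟩
        · rintro (hz | ⟨A, hA, hz⟩)
          · exact Or.inl (Or.inl hz)
          · by_cases e1 : A = C1
            · subst e1; exact Or.inl (Or.inr (Or.inl hz))
            · by_cases e2 : A = C2
              · subst e2; exact Or.inl (Or.inr (Or.inr hz))
              · exact Or.inr ⟨A, ⟨hA, e1, e2⟩, hz⟩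
      rwa [e] at hj

theorem main_red [Finite V] (hU : Cl G ∅ U) (hRed : Red G S k U) : ∀ n C, C.ncard = n →
    Inv G k U C → N G S k (Nb G C) C := by
  intro n
  induction n using Nat.strong_induction_on with
  | _ n ih =>
  intro C hn h
  obtain ⟨Y, hY, hmin⟩ := exists_Spl h
  refine main_step hU hRed h hY (fun C' hC' => ?_)
  refine ih C'.ncard ?_ C' rfl (hY.inv hU h hmin hC')
  obtain ⟨y, hy, -, hyC⟩ := hY.ne h
  rw [← hn]
  exact ncard_lt (fun v hv => (hC'.1 hv).1) y hyC (fun hh => (hC'.1 hh).2 hy)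

theorem main_top [Finite V] (hU : Cl G ∅ U) (hRed : Red G S k U) (hD : D G k ∅ U) :
    N G S k ∅ U := by
  apply N.joinComps (by simp)
  intro C hC
  have hcl : Cl G ∅ C := hC.cl hU
  have e : Nb G C = ∅ := Set.subset_empty_iff.1 (Nb_sub hcl)
  have := main_red hU hRed _ C rfl ⟨hC.2.1, hC.1, by simp [e], ?_, ?_, by simp [e]⟩
  · rwa [e] at this
  · rw [e]; exact hD.restrict _ _ subset_rfl hC.1 hcl
  · rw [e]
    refine hD.restrict _ _ subset_rfl (by grind) ?_
    intro u hu v huv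
    have h1 := hU u (by grind) v huv
    have h2 : v ∉ C := fun h => by
      have := hC.2.2 v h u (by grind) huv.symm
      exact hu.2 this
    grind

end SlimTD

namespace SlimTD
variable {V : Type} {G G' : SimpleGraph V} {k : ℕ} {X W S U C Y : Set V}

structure Att (G G' : SimpleGraph V) (S : Set V) (k : ℕ) (U C : Set V) : Prop where
  conn : Conn G C
  dS : ∀ s ∈ S, s ∉ C
  adj : ∀ u v, G'.Adj u v ↔ u ≠ v ∧ u ∈ U ∧ v ∈ U ∧ u ∉ C ∧ v ∉ C ∧
    (G.Adj u v ∨ (u ∈ Nb G C ∧ v ∈ Nb G C))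
  cl : Cl G ∅ U
  sub : C ⊆ U
  d : ∃ X0, D G k X0 C

theorem Att.QU (h : Att G G' S k U C) : ∀ q ∈ Nb G C, q ∈ U := by
  rintro v ⟨_, c, hc, hvc⟩
  have := h.cl c (h.sub hc) v hvc.symm
  simpa using this

theorem Att.D [Finite V] (h : Att G G' S k U C) (hZ : Nb G C ⊆ X) (hd : ∀ v ∈ X, v ∉ C)
    (hc : X.ncard ≤ k + 1) : D G k X C := by
  obtain ⟨X0, h0⟩ := h.d
  refine h0.change _ _ subset_rfl h0.sep.2 ?_ hd hc
  intro u hu v huv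
  have := Nb_cl C u hu v huv
  have := @hZ v
  grind

theorem UL_single (l l' : List (Set V)) (C : Set V) : UL (l ++ (l' ++ [C])) = UL (l ++ l') ∪ C := by
  ext v; simp only [mem_UL, Set.mem_union, List.mem_append, List.mem_singleton]
  constructor
  · rintro ⟨A, hA | hA | rfl, hv⟩
    · exact Or.inl ⟨A, Or.inl hA, hv⟩
    · exact Or.inl ⟨A, Or.inr hA, hv⟩
    · exact Or.inr hv
  · rintro (⟨A, hA | hA, hv⟩ | hv)
    · exact ⟨A, Or.inl hA, hv⟩
    · exact ⟨A, Or.inr (Or.inl hA), hv⟩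
    · exact ⟨C, Or.inr (Or.inr rfl), hv⟩

theorem Att.att [Finite V] (h : Att G G' S k U C) (hN : N G S k X W) (hQ : Nb G C ⊆ X)
    (hX : ∀ v ∈ X, v ∉ C) (hW : ∀ v ∈ W, v ∉ C) : N G S k X (W ∪ C) := by
  have hc := hN.card
  have h1 : N G S k X C := NonS _ _ _ rfl (h.D hQ hX (by omega)) h.dS hc
  have := N.joinList (G := G) (S := S) (l := [W, C]) hc (by
    simp only [List.pairwise_cons, List.mem_cons, List.not_mem_nil, or_false,
            forall_eq, false_imp_iff, implies_true, List.Pairwise.nil, and_true]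
    exact Set.disjoint_left.2 hW) (by simp [hN, h1])
  simpa [UL_cons, UL_nil] using this

theorem Att.one (h : Att G G' S k U C) (hcl : Cl G' X W) {q : V} (hq : q ∈ Nb G C) (hqW : q ∈ W) :
    ∀ q' ∈ Nb G C, q' ∈ X ∨ q' ∈ W := by
  intro q' hq'
  by_cases e : q = q'
  · subst e; exact Or.inr hqW
  · exact hcl q hqW q' ((h.adj q q').2 ⟨e, h.QU q hq, h.QU q' hq', hq.1, hq'.1, Or.inr ⟨hq, hq'⟩⟩)

theorem Att.reach (h : Att G G' S k U C) (hY : ∀ y ∈ Y, y ∉ C) {u s : V}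
    (hr : G'.ReachableIn Yᶜ u s) : G.ReachableIn Yᶜ u s := by
  refine reach_induct (P := fun x => G.ReachableIn Yᶜ u x) hr (reach_refl (reach_mem hr).1) ?_
  intro a b ha hb hab hP
  refine reach_trans hP ?_
  rcases ((h.adj a b).1 hab).2.2.2.2.2 with hG | ⟨⟨_, c, hc, hac⟩, ⟨_, c', hc', hbc⟩⟩
  · exact reach_adj ha hb hG
  · have hcY : ∀ c ∈ C, c ∈ Yᶜ := fun c hc hy => hY c hy hc
    exact reach_trans (reach_adj ha (hcY c hc) hac) (reach_trans (reach_mono hcY (h.conn.reach hc hc'))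
      (reach_adj (hcY _ hc') hb hbc.symm))

theorem Att.touch (h : Att G G' S k U C) (hY : ∀ y ∈ Y, y ∉ C) {v : V} {B B' : Set V}
    (hT : Touch G' S Y v B) (h1 : ∀ u ∈ B, u ∉ C → u ∈ B')
    (h2 : ∀ u ∈ B, u ∈ Nb G C → u ∉ Y → C ⊆ B') : Touch G S Y v B' := by
  obtain ⟨u, huB, hvu, huY, s, hs, hr⟩ := hT
  have hr' := h.reach hY hr
  obtain ⟨_, _, _, hvC, huC, hor⟩ := (h.adj v u).1 hvu
  rcases hor with hG | ⟨⟨_, c, hc, hvc⟩, hu⟩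
  · exact ⟨u, h1 u huB huC, hG, huY, s, hs, hr'⟩
  · have hcY : ∀ c ∈ C, c ∈ Yᶜ := fun c hc hy => hY c hy hc
    obtain ⟨_, c', hc', huc'⟩ := id hu
    exact ⟨c, h2 u huB hu huY hc, hvc, hcY c hc, s, hs,
      reach_trans (reach_mono hcY (h.conn.reach hc hc')) (reach_trans
      (reach_adj (hcY _ hc') huY huc'.symm) hr')⟩

theorem Seven.map {l l' : List (Set V)} (g : Set V → Set V) (h : Seven G' S Y l)
    (hT : ∀ B ∈ l, ∀ v ∈ Y, Touch G' S Y v B → Touch G S Y v (g B)) (hm : ∀ B ∈ l, g B ∈ l')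
    (hinj : ∀ A ∈ l, ∀ B ∈ l, g A = g B → A = B) : Seven G S Y l' := by
  intro v hv hvS
  obtain ⟨A, hA, B, hB, D, hD, h1, h2, h3, t1, t2, t3⟩ := h v hv hvS
  exact ⟨g A, hm A hA, g B, hm B hB, g D, hm D hD, fun e => h1 (hinj _ hA _ hB e),
    fun e => h2 (hinj _ hA _ hD e), fun e => h3 (hinj _ hB _ hD e), hT _ hA v hv t1, hT _ hB v hv t2,
    hT _ hD v hv t3⟩

/-- injectivity used in the transfer of the branching condition -/
theorem Att.inj {l : List (Set V)} {g : Set V → Set V} {Z : Set V}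
    (hg : ∀ B, g B \ C = B \ C) (hl : ∀ B ∈ l, B.Nonempty ∧ (∀ v ∈ B, v ∉ C) ∧ ∀ v ∈ B, v ∈ Z) :
    ∀ A ∈ Zᶜ :: l, ∀ B ∈ Zᶜ :: l, g A = g B → A = B := by
  intro A hA B hB e
  have e' : A \ C = B \ C := by rw [← hg, ← hg B, e]
  have hd : ∀ B ∈ l, B \ C = B := fun B hB => by
    ext v; have := (hl B hB).2.1 v; grind
  have key : ∀ B ∈ l, B \ C ≠ Zᶜ \ C := by
    intro B hB e
    obtain ⟨b, hb⟩ := (hl B hB).1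
    rw [hd B hB] at e
    have h1 := (hl B hB).2.2 b hb
    rw [e] at hb
    exact hb.1 h1
  rw [List.mem_cons] at hA hB
  rcases hA with rfl | hA <;> rcases hB with rfl | hB
  · rfl
  · exact absurd e'.symm (key B hB)
  · exact absurd e' (key A hA)
  · rw [← hd A hA, ← hd B hB, e']

theorem Att.nb (h : Att G G' S k U C) {w : V} (hw : w ∈ U) (hwC : w ∉ C) {u : V} (hu : G.Adj w u) :
    (u ∈ C ∧ w ∈ Nb G C) ∨ G'.Adj w u := by
  by_cases huC : u ∈ C
  · exact Or.inl ⟨huC, hwC, u, huC, hu⟩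
  · right
    have : u ∈ U := by simpa using h.cl w hw u hu
    exact (h.adj w u).2 ⟨hu.ne, hw, this, hwC, huC, Or.inl hu⟩

theorem reattach [Finite V] (h : Att G G' S k U C) (hN : N G' S k X W) :
    X ⊆ U \ C → W ⊆ U \ C →
    ((∀ q ∈ Nb G C, q ∉ W) → N G S k X W) ∧
    ((∀ q ∈ Nb G C, q ∈ X ∨ q ∈ W) → N G S k X (W ∪ C)) := by
  -- reduction of the second claim
  have red : ∀ {X W : Set V}, X ⊆ U \ C → W ⊆ U \ C → (∀ v ∈ X, v ∉ W) →
      ((∀ q ∈ Nb G C, q ∉ W) → N G S k X W) →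
      ((∃ q ∈ Nb G C, q ∈ W) → (∀ q ∈ Nb G C, q ∈ X ∨ q ∈ W) → N G S k X (W ∪ C)) →
      (∀ q ∈ Nb G C, q ∈ X ∨ q ∈ W) → N G S k X (W ∪ C) := by
    intro X W hX hW hd h1 h2 hQ
    by_cases hq : ∃ q ∈ Nb G C, q ∈ W
    · exact h2 hq hQ
    · push Not at hq
      exact h.att (h1 hq) (fun q hqC => (hQ q hqC).resolve_right (hq q hqC)) (fun v hv => (hX hv).2)
        (fun v hv => (hW hv).2)
  induction hN with
  | leaf X hX =>
    intro hXU hWU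
    have c1 := fun _ : (∀ q ∈ Nb G C, q ∉ (∅ : Set V)) => N.leaf (G := G) (S := S) X hX
    refine ⟨c1, red hXU hWU (by simp) c1 ?_⟩
    simp
  | join X W1 W2 h1 h2 h3 h4 h5 ih1 ih2 =>
    intro hXU hWU
    have i1 := ih1 hXU (Set.subset_union_left.trans hWU)
    have i2 := ih2 hXU (Set.subset_union_right.trans hWU)
    have s1 := h4.sep
    have s2 := h5.sep
    have hd : ∀ v ∈ W1, v ∉ W2 := fun v a b => Set.disjoint_left.1 h3 a b
    have c1 : (∀ q ∈ Nb G C, q ∉ W1 ∪ W2) → N G S k X (W1 ∪ W2) := fun hq =>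
      N.join _ _ _ h1 h2 h3 (i1.1 (by grind)) (i2.1 (by grind))
    refine ⟨c1, red hXU hWU (by grind) c1 ?_⟩
    rintro ⟨q, hqC, hq | hq⟩ hQ
    · have o := h.one s1.2 hqC hq
      have := N.join (G := G) (S := S) (k := k) X (W1 ∪ C) W2 (h1.mono Set.subset_union_left) h2
        (Set.disjoint_left.2 (by grind)) (i1.2 o) (i2.1 (by grind))
      have e : W1 ∪ C ∪ W2 = W1 ∪ W2 ∪ C := by grind
      rwa [e] at this
    · have o := h.one s2.2 hqC hq
      have := N.join (G := G) (S := S) (k := k) X W1 (W2 ∪ C) h1 (h2.mono Set.subset_union_left)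
        (Set.disjoint_left.2 (by grind)) (i1.1 (by grind)) (i2.2 o)
      have e : W1 ∪ (W2 ∪ C) = W1 ∪ W2 ∪ C := by grind
      rwa [e] at this
  | drop X W x h1 h2 h3 h4 ih =>
    intro hXU hWU
    have s := h4.sep
    have i := ih (Set.sdiff_subset.trans hXU) hWU
    have c1 : (∀ q ∈ Nb G C, q ∉ W) → N G S k X W := fun hq => N.drop _ _ x h1 h2 h3 (i.1 hq)
    refine ⟨c1, red hXU hWU (by grind) c1 ?_⟩
    rintro ⟨q, hqC, hq⟩ hQ
    refine N.drop _ _ x h1 (by grind) h3 (i.2 (h.one s.2 hqC hq))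
  | addv X W w h1 h2 h3 h4 ih =>
    intro hXU hWU
    have s := h4.sep
    have hwU := hWU (Set.mem_insert _ _)
    have i := ih (Set.insert_subset hwU hXU) ((Set.subset_insert _ _).trans hWU)
    have c1 : (∀ q ∈ Nb G C, q ∉ insert w W) → N G S k X (insert w W) := fun hq => by
      refine N.addv _ _ w h1 h2 ?_ (i.1 (by grind))
      intro u hu
      rcases h.nb hwU.1 hwU.2 hu with ⟨_, hh⟩ | hh
      · exact absurd (Set.mem_insert _ _) (hq w hh)
      · exact h3 u hh
    refine ⟨c1, red hXU hWU (by grind) c1 ?_⟩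
    rintro - hQ
    rw [Set.insert_union]
    refine N.addv _ _ w h1 (by grind) ?_ (i.2 (by grind))
    intro u hu
    rcases h.nb hwU.1 hwU.2 hu with ⟨hh, _⟩ | hh
    · exact Or.inr (Or.inr hh)
    · have := h3 u hh
      grind
  | full X w lS lN x h1 h2 h3 h4 h5 h6 h7 h8 h9 ih =>
    intro hXU hWU
    have hwU := hWU (Set.mem_insert _ _)
    have hYU : insert w X ⊆ U \ C := Set.insert_subset hwU hXU
    have hYC : ∀ y ∈ insert w X, y ∉ C := fun y hy => (hYU hy).2
    have hULU : UL (lS ++ lN) ⊆ U \ C := (Set.subset_insert _ _).trans hWU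
    have hAU : ∀ A ∈ lS ++ lN, A ⊆ U \ C := fun A hA v hv => hULU ⟨A, hA, hv⟩
    have ih' := fun A hA => ih A hA (Set.sdiff_subset.trans hYU) (hAU A hA)
    have hS : ∀ A ∈ lS, A ∈ lS ++ lN := fun A hA => by simp [hA]
    have hlS : ∀ B ∈ lS, B.Nonempty ∧ (∀ v ∈ B, v ∉ C) ∧
        ∀ v ∈ B, v ∈ insert w X ∪ UL (lS ++ lN) := fun B hB =>
      ⟨(h4 B (hS B hB)).1, fun v hv => (hAU B (hS B hB) hv).2, fun v hv => Or.inr ⟨B, hS B hB, hv⟩⟩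
    have hYk : (insert w X).ncard = k + 1 := by rw [Set.ncard_insert_of_notMem h2, h1]
    have c1 : (∀ q ∈ Nb G C, q ∉ insert w (UL (lS ++ lN))) → N G S k X (insert w (UL (lS ++ lN))) := by
      intro hq
      have hqA : ∀ A ∈ lS ++ lN, ∀ q ∈ Nb G C, q ∉ A := fun A hA q hqC hqA =>
        hq q hqC (Or.inr ⟨A, hA, hqA⟩)
      refine N.full X w lS lN x h1 h2 h3 h4 (fun A hA => (ih' A hA).1 (hqA A hA)) h6 h7 ?_ ?_
      · intro u hu
        rcases h.nb hwU.1 hwU.2 hu with ⟨_, hh⟩ | hh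
        · exact absurd (Set.mem_insert _ _) (hq w hh)
        · exact h8 u hh
      · refine h9.imp_right (fun h9 => Seven.map id h9 ?_ (fun B hB => hB) (fun A _ B _ e => e))
        intro B hB v hv hT
        refine h.touch hYC hT (fun u hu _ => hu) ?_
        intro u huB huQ huY
        rw [List.mem_cons] at hB
        rcases hB with rfl | hB
        · rintro c hc (hc' | hc')
          · exact hYC c hc' hc
          · exact (hULU hc').2 hc
        · exact absurd huB (hqA B (hS B hB) u huQ)
    have hdXW : ∀ v ∈ X, v ∉ insert w (UL (lS ++ lN)) := by
      rintro v hv (rfl | ⟨A, hA, hvA⟩)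
      · exact h2 hv
      · exact (h4 A hA).2.2 v (Or.inr hv) hvA
    refine ⟨c1, red hXU hWU hdXW c1 ?_⟩
    rintro - hQ
    rw [Set.insert_union]
    have hnb : ∀ u, G.Adj w u → u ∈ X ∨ u ∈ UL (lS ++ lN) ∪ C := by
      intro u hu
      rcases h.nb hwU.1 hwU.2 hu with ⟨hh, _⟩ | hh
      · exact Or.inr (Or.inr hh)
      · have := h8 u hh
        grind
    classical
    by_cases hQY : Nb G C ⊆ insert w X
    · obtain ⟨z, hzY, hz⟩ := Nb_not_full (h.D hQY hYC hYk.le) h.conn hYk.ge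
      have hne : ∀ A ∈ lS ++ lN, A ≠ C := by
        rintro A hA rfl
        obtain ⟨a, ha⟩ := (h4 A hA).1
        exact (hAU A hA ha).2 ha
      have e : UL (lS ++ (lN ++ [C])) = UL (lS ++ lN) ∪ C := by
        exact UL_single _ _ _
      have hmem : ∀ A, A ∈ lS ++ (lN ++ [C]) → A ∈ lS ++ lN ∨ A = C := by
        intro A hA; simp only [List.mem_append, List.mem_singleton] at hA ⊢; tauto
      rw [← e] at hnb ⊢
      refine N.full X w lS (lN ++ [C]) (fun A => if A = C then z else x A) h1 h2 ?_ ?_ ?_ h6 ?_ hnb ?_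
      · rw [← List.append_assoc, List.pairwise_append]
        refine ⟨h3, by simp, ?_⟩
        intro A hA B hB
        rw [List.mem_singleton] at hB
        subst hB
        exact Set.disjoint_left.2 (fun v hv => (hAU A hA hv).2)
      · intro A hA
        rcases hmem A hA with hA | rfl
        · simp only [if_neg (hne A hA)]; exact h4 A hA
        · simp only [if_true]; exact ⟨h.conn.1, hzY, hYC⟩
      · intro A hA
        rcases hmem A hA with hA | rfl
        · simp only [if_neg (hne A hA)]
          exact (ih' A hA).1 (fun q hqC hqA => (h4 A hA).2.2 q (hQY hqC) hqA)
        · simp only [if_true]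
          refine NonS _ _ _ rfl (h.D ?_ (fun v hv => hYC v hv.1) ?_) h.dS (ncard_del hYk hzY).le
          · intro q hq
            exact ⟨hQY hq, fun e => hz (by rw [← e]; exact hq)⟩
          · have := (ncard_del hYk hzY); omega
      · intro A hA
        rw [List.mem_append, List.mem_singleton] at hA
        rcases hA with hA | rfl
        · exact h7 A hA
        · exact h.dS
      · refine h9.imp_right (fun h9 => Seven.map (fun B => B \ C) h9 ?_ ?_ (Att.inj (by simp) hlS))
        · intro B hB v hv hT
          exact h.touch hYC hT (fun u hu hu' => ⟨hu, hu'⟩) (fun u _ hu hu' => absurd (hQY hu) hu')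
        · intro B hB
          rw [List.mem_cons] at hB ⊢
          rcases hB with rfl | hB
          · left; rw [e]; ext v; simp; tauto
          · right
            have : B \ C = B := by ext v; have := (hlS B hB).2.1 v; grind
            rwa [this]
    · obtain ⟨q, hq, hqY⟩ := Set.not_subset.1 hQY
      let f : Set V → Set V := fun A => if (∃ q ∈ Nb G C, q ∈ A) then A ∪ C else A \ C
      have hf1 : ∀ A, (∃ q ∈ Nb G C, q ∈ A) → f A = A ∪ C := fun A hA => if_pos hA
      have hf2 : ∀ A, ¬ (∃ q ∈ Nb G C, q ∈ A) → f A = A \ C := fun A hA => if_neg hA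
      have hfC : ∀ A, f A \ C = A \ C := by
        intro A
        by_cases hA : ∃ q ∈ Nb G C, q ∈ A
        · rw [hf1 A hA]; ext v; simp
        · rw [hf2 A hA]; ext v; simp
      have hAC : ∀ A ∈ lS ++ lN, A \ C = A := fun A hA => by
        ext v; have := @hAU A hA v; grind
      have hfv : ∀ A v, v ∈ f A → (v ∈ A ∨ (v ∈ C ∧ ∃ q ∈ Nb G C, q ∈ A)) := by
        intro A v hv
        by_cases hA : ∃ q ∈ Nb G C, q ∈ A
        · rw [hf1 A hA] at hv; exact hv.imp_right (fun h => ⟨h, hA⟩)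
        · rw [hf2 A hA] at hv; exact Or.inl hv.1
      have hfs : ∀ A, ∀ v ∈ A, v ∉ C → v ∈ f A := by
        intro A v hv hvC
        have : v ∈ f A \ C := by rw [hfC]; exact ⟨hv, hvC⟩
        exact this.1
      have hqA : ∀ A ∈ lS ++ lN, (∃ q ∈ Nb G C, q ∈ A) → q ∈ A := by
        rintro A hA ⟨q', hq', hqA'⟩
        have := h.one (h5 A hA).sep.2 hq' hqA' q hq
        exact this.resolve_left (fun hh => hqY hh.1)
      obtain ⟨A0, hA0, hqA0⟩ : ∃ A ∈ lS ++ lN, q ∈ A := by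
        have := hQ q hq
        rcases this with h' | h' | h'
        · exact absurd (Or.inr h') hqY
        · exact absurd (Or.inl h') hqY
        · exact h'
      have e : UL (lS.map f ++ lN.map f) = UL (lS ++ lN) ∪ C := by
        rw [← List.map_append]
        ext v
        simp only [mem_UL, List.mem_map, exists_exists_and_eq_and, Set.mem_union]
        constructor
        · rintro ⟨A, hA, hv⟩
          rcases hfv A v hv with h' | h'
          · exact Or.inl ⟨A, hA, h'⟩
          · exact Or.inr h'.1
        · rintro (⟨A, hA, hv⟩ | hv)
          · exact ⟨A, hA, hfs A v hv (hAU A hA hv).2⟩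
          · refine ⟨A0, hA0, ?_⟩
            rw [hf1 A0 ⟨q, hq, hqA0⟩]; exact Or.inr hv
      rw [← e] at hnb ⊢
      have hxf : ∀ A ∈ lS ++ lN, x (f A \ C) = x A := fun A hA => by rw [hfC, hAC A hA]
      refine N.full X w (lS.map f) (lN.map f) (fun A => x (A \ C)) h1 h2 ?_ ?_ ?_ ?_ ?_ hnb ?_
      · rw [← List.map_append, List.pairwise_map]
        refine h3.imp_of_mem ?_
        intro A B hA hB hAB
        rw [Set.disjoint_left] at hAB ⊢
        intro v hvA hvB
        have a1 := hfv A v hvA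
        have a2 := hfv B v hvB
        have b1 := hqA A hA
        have b2 := hqA B hB
        have b3 := @hAU A hA v
        have b4 := @hAU B hB v
        grind
      · rw [← List.map_append]
        simp only [List.forall_mem_map]
        intro A hA
        rw [hxf A hA]
        have := h4 A hA
        refine ⟨?_, this.2.1, ?_⟩
        · obtain ⟨a, ha⟩ := this.1
          exact ⟨a, hfs A a ha (hAU A hA ha).2⟩
        · intro v hv hv'
          rcases hfv A v hv' with h' | h'
          · exact this.2.2 v hv h'
          · exact hYC v hv h'.1
      · rw [← List.map_append]
        simp only [List.forall_mem_map]
        intro A hA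
        rw [hxf A hA]
        by_cases hqq : ∃ q ∈ Nb G C, q ∈ A
        · rw [hf1 A hqq]
          obtain ⟨q', hq', hqA'⟩ := hqq
          exact (ih' A hA).2 (h.one (h5 A hA).sep.2 hq' hqA')
        · rw [hf2 A hqq, hAC A hA]
          push Not at hqq
          exact (ih' A hA).1 hqq
      · simp only [List.forall_mem_map]
        intro A hA
        obtain ⟨s, hs, hsA⟩ := h6 A hA
        exact ⟨s, hs, hfs A s hsA (h.dS s hs)⟩
      · simp only [List.forall_mem_map]
        intro A hA s hs hsA
        rcases hfv A s hsA with h' | h'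
        · exact h7 A hA s hs h'
        · exact h.dS s hs h'.1
      · rw [List.length_map]
        refine h9.imp_right (fun h9 => Seven.map f h9 ?_ ?_ (Att.inj hfC hlS))
        · intro B hB v hv hT
          refine h.touch hYC hT (hfs B) (fun u huB hu hu' => ?_)
          rw [hf1 B ⟨u, hu, huB⟩]
          exact Set.subset_union_right
        · intro B hB
          rw [List.mem_cons] at hB ⊢
          rcases hB with rfl | hB
          · left
            rw [e, hf2]
            · ext v; simp; tauto
            · rintro ⟨q', hq', hh⟩
              have := hQ q' hq'
              apply hh
              grind
          · right
            exact List.mem_map_of_mem hB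

theorem thmA [Finite V] : ∀ n (U : Set V) (G : SimpleGraph V), U.ncard = n → Cl G ∅ U → D G k ∅ U →
    N G S k ∅ U := by
  intro n
  induction n using Nat.strong_induction_on with
  | _ n ih =>
  intro U G hn hU hD
  by_cases hRed : Red G S k U
  · exact main_top hU hRed hD
  unfold Red at hRed
  push Not at hRed
  obtain ⟨X0, hX0, hD0, C, hC, hS⟩ := hRed
  have hs := hD0.sep
  have hclC := hC.cl hs.2
  have hQ := Nb_sub hclC
  have hCU : C ⊆ U := fun v hv => (hC.1 hv).1
  have hCX : ∀ v ∈ X0, v ∉ C := fun v hv hv' => (hC.1 hv').2 hv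
  let G' : SimpleGraph V :=
    { Adj := fun u v => u ≠ v ∧ u ∈ U ∧ v ∈ U ∧ u ∉ C ∧ v ∉ C ∧
        (G.Adj u v ∨ (u ∈ Nb G C ∧ v ∈ Nb G C))
      symm := ⟨fun u v h => ⟨h.1.symm, h.2.2.1, h.2.1, h.2.2.2.2.1, h.2.2.2.1,
        h.2.2.2.2.2.imp (fun h => h.symm) (fun h => ⟨h.2, h.1⟩)⟩⟩
      loopless := ⟨fun u h => h.1 rfl⟩ }
  have hatt : Att G G' S k U C := ⟨hC.2.1, hS, fun u v => Iff.rfl, hU, hCU,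
    X0, hD0.restrict _ _ subset_rfl hC.1 hclC⟩
  have hlt : (U \ C).ncard < n := by
    obtain ⟨c, hc⟩ := hC.2.1.1
    rw [← hn]
    exact ncard_lt Set.sdiff_subset c (hCU hc) (by simp [hc])
  have hU' : Cl G' ∅ (U \ C) := fun u _ v huv => Or.inr ⟨huv.2.2.1, huv.2.2.2.2.1⟩
  have hD' : D G' k ∅ (U \ C) := by
    have a1 : D G k X0 ((U \ X0) \ C) := hD0.restrict _ _ subset_rfl Set.sdiff_subset (by
      intro u hu v huv
      have a := hs.2 u hu.1 v huv
      have b : v ∉ C := fun hv => hu.2 (hC.2.2 v hv u hu.1 huv.symm)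
      grind)
    have a2 : D G' k X0 ((U \ X0) \ C) := a1.mono (by
      intro w hw v hwv
      rcases hwv.2.2.2.2.2 with h | h
      · exact h
      · exact absurd (hQ h.1) hw.1.2)
    have a3 := a2.forgetAll ∅ (by simp) (by
      intro x hx _ u hxu
      have h1 := hxu.2.2.1
      have h2 := hxu.2.2.2.2.1
      grind)
    have e : (U \ X0) \ C ∪ X0 \ ∅ = U \ C := by
      ext v
      have := @hX0 v
      have := hCX v
      grind
    rwa [e] at a3
  have hN' := ih _ hlt (U \ C) G' rfl hU' hD'
  have := (reattach hatt hN' (by simp) subset_rfl).2 (fun q hq => Or.inr ⟨hatt.QU q hq, hq.1⟩)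
  have e : U \ C ∪ C = U := by
    ext v; have := @hCU v; grind
  rwa [e] at this

end SlimTD

namespace SlimTD

structure Sys (V σ : Type) (G : SimpleGraph V) where
  s0 : σ
  ch : σ → Set σ
  good : σ → Prop
  bag : σ → Set V
  low : σ → Set V
  mu : σ → ℕ
  good0 : good s0
  low0 : low s0 = Set.univ
  goodc : ∀ s, good s → ∀ c ∈ ch s, good c
  muc : ∀ s, good s → ∀ c ∈ ch s, mu c < mu s
  disj : ∀ s, good s → ∀ v ∈ bag s, v ∉ low s
  lowc : ∀ s, good s → ∀ c ∈ ch s, low c ⊆ low s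
  bagc : ∀ s, good s → ∀ c ∈ ch s, ∀ v ∈ bag c, v ∈ bag s ∨ v ∈ low s
  cov : ∀ s, good s → ∀ v ∈ low s, ∃ c ∈ ch s, v ∈ bag c ∨ v ∈ low c
  uniq : ∀ s, good s → ∀ v ∈ low s, ∀ c ∈ ch s, ∀ d ∈ ch s, (v ∈ bag c ∨ v ∈ low c) →
    (v ∈ bag d ∨ v ∈ low d) → c = d
  adj : ∀ s, good s → ∀ c ∈ ch s, ∀ u ∈ low s, (u ∈ bag c ∨ u ∈ low c) → ∀ v, G.Adj u v →
    (v ∈ bag c ∨ v ∈ low c)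

namespace Sys
variable {V σ : Type} {G : SimpleGraph V} (P : Sys V σ G)

def Chn : List σ → Prop
  | [] => True
  | c :: l => c ∈ P.ch (l.headD P.s0) ∧ Chn l

def Nd : Type := {l : List σ // P.Chn l}

variable {P}

def Nd.st (t : P.Nd) : σ := t.1.headD P.s0

def Nd.cons (t : P.Nd) (c : σ) (h : c ∈ P.ch t.st) : P.Nd := ⟨c :: t.1, h, t.2⟩

variable (P) in
def rt : P.Nd := ⟨[], trivial⟩

def Nd.par (t : P.Nd) : P.Nd := ⟨t.1.tail, by
  rcases t with ⟨_ | ⟨c, l⟩, h⟩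
  · exact trivial
  · exact h.2⟩

def Nd.le (m t : P.Nd) : Prop := m.1 <:+ t.1

@[simp] theorem st_cons (t : P.Nd) (c h) : (t.cons c h).st = c := rfl
@[simp] theorem par_cons (t : P.Nd) (c h) : (t.cons c h).par = t := rfl
@[simp] theorem par_rt : (P.rt).par = P.rt := rfl
@[simp] theorem st_rt : (P.rt).st = P.s0 := rfl
theorem cons_ne_rt (t : P.Nd) (c h) : t.cons c h ≠ P.rt := by
  intro e; have := congrArg Subtype.val e; simp [Nd.cons, rt] at this

theorem Nd.ind {Q : P.Nd → Prop} (h0 : Q P.rt) (h1 : ∀ t c h, Q t → Q (t.cons c h)) (t : P.Nd) :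
    Q t := by
  obtain ⟨l, hl⟩ := t
  induction l with
  | nil => exact h0
  | cons c l ih => exact h1 ⟨l, hl.2⟩ c hl.1 (ih hl.2)

theorem Nd.casesR (t : P.Nd) : t = P.rt ∨ ∃ p c h, t = Nd.cons p c h := by
  refine Nd.ind (Q := fun t => t = P.rt ∨ ∃ p c h, t = Nd.cons p c h) (Or.inl rfl) ?_ t
  intro t c h _
  exact Or.inr ⟨t, c, h, rfl⟩

theorem par_iter (t : P.Nd) (n : ℕ) : (Nd.par^[n] t).1 = t.1.drop n := by
  induction n generalizing t with
  | zero => rfl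
  | succ n ih => rw [Function.iterate_succ_apply, ih]; simp [Nd.par]

theorem le_iff (m t : P.Nd) : (∃ n, Nd.par^[n] t = m) ↔ m.le t := by
  constructor
  · rintro ⟨n, rfl⟩
    unfold Nd.le; rw [par_iter]; exact List.drop_suffix _ _
  · intro h
    refine ⟨t.1.length - m.1.length, Subtype.ext ?_⟩
    rw [par_iter]; exact (List.suffix_iff_eq_drop.1 h).symm

theorem le_refl (m : P.Nd) : m.le m := List.suffix_rfl
theorem le_trans {a b c : P.Nd} (h : a.le b) (h' : b.le c) : a.le c := List.IsSuffix.trans h h'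
theorem le_len {a b : P.Nd} (h : a.le b) : a.1.length ≤ b.1.length := List.IsSuffix.length_le h
theorem le_antisymm {a b : P.Nd} (h : a.le b) (h' : b.le a) : a = b :=
  Subtype.ext (h.eq_of_length (Nat.le_antisymm (le_len h) (le_len h')))
theorem le_cons {m t : P.Nd} {c h} : m.le (t.cons c h) ↔ m = t.cons c h ∨ m.le t := by
  unfold Nd.le
  change m.1 <:+ c :: t.1 ↔ _
  rw [List.suffix_cons_iff]
  constructor
  · rintro (h | h)
    · exact Or.inl (Subtype.ext h)
    · exact Or.inr h
  · rintro (h | h)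
    · exact Or.inl (congrArg Subtype.val h)
    · exact Or.inr h
theorem le_self_cons (t : P.Nd) (c h) : t.le (t.cons c h) := le_cons.2 (Or.inr (le_refl _))
theorem not_cons_le (t : P.Nd) (c h) : ¬ (t.cons c h).le t := by
  intro h1; have := le_len h1; simp [Nd.cons] at this
theorem rt_le (t : P.Nd) : (P.rt).le t := List.nil_suffix
theorem le_total {a b c : P.Nd} (h : a.le c) (h' : b.le c) : a.le b ∨ b.le a :=
  List.suffix_or_suffix_of_suffix h h'

/-- strict ancestors have a child on the path -/
theorem le_child {a b : P.Nd} (h : a.le b) (hne : a ≠ b) : ∃ c h, (a.cons c h).le b := by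
  revert h hne
  refine Nd.ind (Q := fun b => a.le b → a ≠ b → ∃ c h, (a.cons c h).le b) ?_ ?_ b
  · intro h hne
    exact absurd (le_antisymm h (rt_le _)) hne
  · intro t c h ih hle hne
    rcases le_cons.1 hle with e | hle
    · exact absurd e hne
    by_cases e : a = t
    · subst e; exact ⟨c, h, le_refl _⟩
    · obtain ⟨d, hd, h'⟩ := ih hle e
      exact ⟨d, hd, le_trans h' (le_self_cons _ _ _)⟩

theorem between (m t : P.Nd) (Q : P.Nd → Prop) :
    (∃ n, Nd.par^[n] t = m ∧ ∀ i ≤ n, Q (Nd.par^[i] t)) ↔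
      m.le t ∧ ∀ q : P.Nd, m.le q → q.le t → Q q := by
  constructor
  · rintro ⟨n, hn, h⟩
    refine ⟨(le_iff _ _).1 ⟨n, hn⟩, ?_⟩
    intro q hmq hqt
    obtain ⟨j, hj⟩ := (le_iff _ _).2 hqt
    rcases Nat.le_total j n with hjn | hjn
    · rw [← hj]; exact h j hjn
    · have : q.le m := by
        rw [← le_iff]
        refine ⟨j - n, ?_⟩
        rw [← hn, ← Function.iterate_add_apply, Nat.sub_add_cancel hjn, hj]
      rw [le_antisymm this hmq, ← hn]
      exact h n le_rfl
  · rintro ⟨hm, h⟩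
    obtain ⟨n, hn⟩ := (le_iff _ _).2 hm
    refine ⟨n, hn, ?_⟩
    intro i hi
    refine h _ ?_ ((le_iff _ _).1 ⟨i, rfl⟩)
    rw [← le_iff]
    refine ⟨n - i, ?_⟩
    rw [← Function.iterate_add_apply, Nat.sub_add_cancel hi, hn]

theorem gd (t : P.Nd) : P.good t.st := Nd.ind (Q := fun t => P.good t.st) P.good0
  (fun t c h ih => P.goodc _ ih c h) t

/-- `V` of a state -/
def vs (P : Sys V σ G) (s : σ) : Set V := {v | v ∈ P.bag s ∨ v ∈ P.low s}

theorem mem_vs {s : σ} {v : V} : v ∈ P.vs s ↔ v ∈ P.bag s ∨ v ∈ P.low s := Iff.rfl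

theorem vs_ch {s c : σ} (hs : P.good s) (hc : c ∈ P.ch s) : P.vs c ⊆ P.vs s := by
  rintro v (h | h)
  · exact P.bagc s hs c hc v h
  · exact Or.inr (P.lowc s hs c hc h)

theorem mono {m t : P.Nd} (h : m.le t) : P.vs t.st ⊆ P.vs m.st ∧ P.low t.st ⊆ P.low m.st := by
  revert h
  refine Nd.ind (Q := fun t => m.le t → P.vs t.st ⊆ P.vs m.st ∧ P.low t.st ⊆ P.low m.st) ?_ ?_ t
  · intro h
    rw [le_antisymm h (rt_le _)]; exact ⟨subset_rfl, subset_rfl⟩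
  · intro t c hc ih h
    rcases le_cons.1 h with rfl | h
    · exact ⟨subset_rfl, subset_rfl⟩
    · exact ⟨(vs_ch (gd t) hc).trans (ih h).1, (P.lowc _ (gd t) c hc).trans (ih h).2⟩

/-- nodes below containing both -/
theorem below_edge (u v : V) (huv : u = v ∨ G.Adj u v) : ∀ n (t : P.Nd), P.mu t.st = n →
    u ∈ P.vs t.st → v ∈ P.vs t.st → ∃ t' : P.Nd, t.le t' ∧ u ∈ P.bag t'.st ∧ v ∈ P.bag t'.st := by
  intro n
  induction n using Nat.strong_induction_on with
  | _ n ih =>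
  intro t hn hu hv
  have key : ∀ a b, (a = b ∨ G.Adj a b) → a ∈ P.low t.st → ∃ c ∈ P.ch t.st, a ∈ P.vs c ∧ b ∈ P.vs c := by
    intro a b hab ha
    obtain ⟨c, hc, hac⟩ := P.cov _ (gd t) a ha
    refine ⟨c, hc, hac, ?_⟩
    rcases hab with rfl | hab
    · exact hac
    · exact P.adj _ (gd t) c hc a ha hac b hab
  by_cases h : u ∈ P.bag t.st ∧ v ∈ P.bag t.st
  · exact ⟨t, le_refl _, h⟩
  have : ∃ c ∈ P.ch t.st, u ∈ P.vs c ∧ v ∈ P.vs c := by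
    rw [not_and_or] at h
    rcases h with h | h
    · exact key u v huv (hu.resolve_left h)
    · obtain ⟨c, hc, h1, h2⟩ := key v u (huv.imp Eq.symm SimpleGraph.Adj.symm) (hv.resolve_left h)
      exact ⟨c, hc, h2, h1⟩
  obtain ⟨c, hc, h1, h2⟩ := this
  obtain ⟨t', ht', h'⟩ := ih (P.mu c) (hn ▸ P.muc _ (gd t) c hc) (t.cons c hc) rfl h1 h2
  exact ⟨t', le_trans (le_self_cons _ _ _) ht', h'⟩

theorem bag_down {m t : P.Nd} (h : m.le t) {v : V} (hm : v ∈ P.bag m.st) (ht : v ∈ P.vs t.st) :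
    v ∈ P.bag t.st :=
  ht.resolve_right (fun h' => P.disj _ (gd m) v hm ((mono h).2 h'))

theorem exists_top (v : V) : ∀ n (t : P.Nd), P.mu t.st = n → v ∈ P.low t.st →
    ∃ (p : P.Nd) (c : σ) (h : c ∈ P.ch p.st), v ∈ P.low p.st ∧ v ∈ P.bag c := by
  intro n
  induction n using Nat.strong_induction_on with
  | _ n ih =>
  intro t hn hv
  obtain ⟨c, hc, hvc⟩ := P.cov _ (gd t) v hv
  rcases hvc with hvc | hvc
  · exact ⟨t, c, hc, hv, hvc⟩
  · exact ih _ (hn ▸ P.muc _ (gd t) c hc) (t.cons c hc) rfl hvc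

theorem top_spec (v : V) : ∃ m : P.Nd, v ∈ P.bag m.st ∧ ∀ t : P.Nd, v ∈ P.vs t.st →
    (t.le m ∧ v ∈ P.low t.st) ∨ (m.le t ∧ ∀ q : P.Nd, m.le q → q.le t → v ∈ P.bag q.st) := by
  obtain ⟨p, c, h, hp, hc⟩ := exists_top v _ P.rt rfl (by simp [P.low0])
  refine ⟨p.cons c h, hc, ?_⟩
  have fin : ∀ t : P.Nd, v ∈ P.vs t.st → (p.cons c h).le t →
      ((p.cons c h).le t ∧ ∀ q : P.Nd, (p.cons c h).le q → q.le t → v ∈ P.bag q.st) :=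
    fun t ht hm => ⟨hm, fun q hq hqt => bag_down hq hc ((mono hqt).1 ht)⟩
  intro t
  refine Nd.ind (Q := fun t => v ∈ P.vs t.st → (t.le (p.cons c h) ∧ v ∈ P.low t.st) ∨
    ((p.cons c h).le t ∧ ∀ q : P.Nd, (p.cons c h).le q → q.le t → v ∈ P.bag q.st)) ?_ ?_ t
  · intro _; left; exact ⟨rt_le _, by simp [P.low0]⟩
  intro t d hd ih hv
  rcases ih (vs_ch (gd t) hd hv) with ⟨h1, h2⟩ | ⟨h1, h2⟩
  · have hne : t ≠ p.cons c h := by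
      rintro rfl; exact P.disj _ (gd (p.cons c h)) v hc h2
    obtain ⟨e, he, hle⟩ := le_child h1 hne
    have hed : e = d := P.uniq _ (gd t) v h2 e he d hd ((mono hle).1 (Or.inl hc)) hv
    subst hed
    rcases hv with hv | hv
    · rcases le_cons.1 hle with h3 | h3
      · right; exact fin _ (Or.inl hv) (by rw [← h3]; exact le_refl _)
      · exact absurd hp (P.disj _ (gd p) v (bag_down h3 hv (Or.inr hp)))
    · left; exact ⟨hle, hv⟩
  · right
    exact fin _ hv (le_trans h1 (le_self_cons _ _ _))

def td (P : Sys V σ G) : RootedTreeDecomp V P.Nd G where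
  root := P.rt
  parent := Nd.par
  parent_root := rfl
  reaches_root := fun t => (le_iff _ _).2 (rt_le t)
  bag := fun t => P.bag t.st
  bags_cover := fun v => by
    obtain ⟨t, _, h, _⟩ := below_edge v v (Or.inl rfl) _ P.rt rfl (Or.inr (by simp [P.low0]))
      (Or.inr (by simp [P.low0]))
    exact ⟨t, h⟩
  bags_of_edges := fun u v huv => by
    obtain ⟨t, _, h⟩ := below_edge u v (Or.inr huv) _ P.rt rfl (Or.inr (by simp [P.low0]))
      (Or.inr (by simp [P.low0]))
    exact ⟨t, h⟩
  bags_connected := fun v => by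
    obtain ⟨m, hm, h⟩ := top_spec (P := P) v
    refine ⟨m, hm, ?_⟩
    intro t ht
    rw [between m t (fun q => v ∈ P.bag q.st)]
    rcases h t (Or.inl ht) with ⟨_, h2⟩ | h2
    · exact absurd h2 (P.disj _ (gd t) v ht)
    · exact h2

theorem td_sub (t t' : P.Nd) : P.td.InSubtree t t' ↔ t.le t' := le_iff t t'

theorem td_par (t u : P.Nd) : P.td.IsParent t u ↔ ∃ c h, u = t.cons c h := by
  constructor
  · rintro ⟨h1, h2⟩
    rcases Nd.casesR u with rfl | ⟨p, c, h, rfl⟩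
    · exact absurd rfl h1
    · have : p = t := h2
      subst this
      exact ⟨c, h, rfl⟩
  · rintro ⟨c, h, rfl⟩
    exact ⟨cons_ne_rt _ _ _, rfl⟩

theorem td_bag (t : P.Nd) : P.td.bag t = P.bag t.st := rfl

theorem td_Vt (t : P.Nd) : P.td.Vt t = P.vs t.st := by
  ext v
  constructor
  · rintro ⟨t', h, hv⟩
    exact (mono ((td_sub _ _).1 h)).1 (Or.inl hv)
  · intro hv
    obtain ⟨t', h, h1, _⟩ := below_edge v v (Or.inl rfl) _ t rfl hv hv
    exact ⟨t', (td_sub _ _).2 h, h1⟩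

theorem td_Lt (t : P.Nd) : P.td.Lt t = P.low t.st := by
  unfold RootedTreeDecomp.Lt
  rw [td_Vt, td_bag]
  ext v
  constructor
  · rintro ⟨h | h, h'⟩
    · exact absurd h h'
    · exact h
  · intro h
    exact ⟨Or.inr h, fun h' => P.disj _ (gd t) v h' h⟩

/-- state-level S-child -/
def SCh (P : Sys V σ G) (S : Set V) (s c : σ) : Prop :=
  c ∈ P.ch s ∧ ∃ v ∈ S, v ∈ P.low s ∧ v ∈ P.vs c

/-- state-level S-bottom -/
def Bot (P : Sys V σ G) (S : Set V) (s : σ) : Prop :=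
  (∃ v ∈ S, v ∈ P.low s) ∧ ∀ c ∈ P.ch s, ¬ (P.low c ∩ S = P.low s ∩ S ∧ P.bag c ∩ S = P.bag s ∩ S)

theorem td_sch (S : Set V) (t u : P.Nd) : P.td.IsSChild S t u ↔
    ∃ c h, u = t.cons c h ∧ P.SCh S t.st c := by
  unfold RootedTreeDecomp.IsSChild RootedTreeDecomp.LS RootedTreeDecomp.XS RootedTreeDecomp.RS
    RootedTreeDecomp.Rt
  rw [td_par]
  constructor
  · rintro ⟨⟨c, h, rfl⟩, v, hv⟩
    refine ⟨c, h, rfl, h, v, ?_⟩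
    rw [td_Lt, td_Vt, td_bag, td_bag, st_cons] at hv
    have := @vs_ch _ _ _ P _ _ (gd t) h v
    simp only [mem_vs] at *
    simp only [Set.mem_diff, Set.mem_union, Set.mem_inter_iff, Set.mem_compl_iff, mem_vs] at hv
    tauto
  · rintro ⟨c, h, rfl, _, v, hvS, hv, hvc⟩
    refine ⟨⟨c, h, rfl⟩, v, ?_⟩
    rw [td_Lt, td_Vt, td_bag, td_bag, st_cons]
    have := P.disj _ (gd t) v
    simp only [mem_vs] at *
    simp only [Set.mem_diff, Set.mem_union, Set.mem_inter_iff, Set.mem_compl_iff, mem_vs]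
    tauto

theorem trace_vs {S : Set V} {a b : σ} (h1 : P.low a ∩ S = P.low b ∩ S)
    (h2 : P.bag a ∩ S = P.bag b ∩ S) : (P.vs a)ᶜ ∩ S = (P.vs b)ᶜ ∩ S := by
  ext v
  have h1 := Set.ext_iff.1 h1 v
  have h2 := Set.ext_iff.1 h2 v
  simp only [Set.mem_inter_iff, Set.mem_compl_iff, mem_vs] at *
  tauto

theorem td_bot (S : Set V) (t : P.Nd) : P.td.IsSBottom S t ↔ P.Bot S t.st := by
  unfold RootedTreeDecomp.IsSBottom RootedTreeDecomp.STrace RootedTreeDecomp.LS RootedTreeDecomp.XS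
    RootedTreeDecomp.RS RootedTreeDecomp.Rt
  simp only [td_Lt, td_Vt, td_bag, td_sub, Prod.mk.injEq]
  constructor
  · rintro ⟨⟨v, hv, hvS⟩, h⟩
    refine ⟨⟨v, hvS, hv⟩, ?_⟩
    rintro c hc ⟨h1, h2⟩
    exact not_cons_le t c hc (h (t.cons c hc) ⟨h1, h2, trace_vs h1 h2⟩)
  · rintro ⟨⟨v, hvS, hv⟩, h⟩
    refine ⟨⟨v, hv, hvS⟩, ?_⟩
    rintro t' ⟨h1, h2, h3⟩
    have hv' : v ∈ P.low t'.st := by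
      have : v ∈ P.low t'.st ∩ S := by rw [h1]; exact ⟨hv, hvS⟩
      exact this.1
    obtain ⟨m, hm, hall⟩ := top_spec (P := P) v
    have cmp : ∀ a : P.Nd, v ∈ P.low a.st → a.le m := by
      intro a ha
      rcases hall a (Or.inr ha) with h' | h'
      · exact h'.1
      · exact absurd ha (P.disj _ (gd a) v (h'.2 a h'.1 (le_refl _)))
    rcases le_total (cmp t' hv') (cmp t hv) with hle | hle
    · exact hle
    by_cases e : t = t'
    · subst e; exact le_refl _
    obtain ⟨c, hc, hle'⟩ := le_child hle e
    exfalso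
    have a1 := mono hle'
    have a2 := mono (le_self_cons t c hc)
    rw [st_cons] at a1 a2
    have hd := P.disj _ (gd (t.cons c hc))
    have hd2 := P.disj _ (gd t)
    rw [st_cons] at hd
    have low : P.low c ∩ S = P.low t.st ∩ S := by
      refine Set.Subset.antisymm (Set.inter_subset_inter_left _ a2.2) ?_
      rw [← h1]; exact Set.inter_subset_inter_left _ a1.2
    refine h c hc ⟨low, ?_⟩
    ext x
    have e1 : x ∈ P.vs t'.st → x ∈ P.vs c := fun h => a1.1 h
    have e2 : x ∈ P.vs c → x ∈ P.vs t.st := fun h => a2.1 h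
    have e3 := Set.ext_iff.1 h3 x
    have e4 := Set.ext_iff.1 low x
    have e5 := hd x
    have e6 := hd2 x
    simp only [Set.mem_inter_iff, Set.mem_compl_iff, mem_vs] at e1 e2 e3 e4 e5 e6 ⊢
    clear * - e1 e2 e3 e4 e5 e6
    grind

theorem td_conn (A : Set P.Nd) : P.td.ConnectedNodeSet A ↔
    ∃ m ∈ A, ∀ t ∈ A, m.le t ∧ ∀ q : P.Nd, m.le q → q.le t → q ∈ A := by
  unfold RootedTreeDecomp.ConnectedNodeSet
  constructor
  · rintro ⟨m, hm, h⟩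
    exact ⟨m, hm, fun t ht => (between m t (fun q => q ∈ A)).1 (h t ht)⟩
  · rintro ⟨m, hm, h⟩
    exact ⟨m, hm, fun t ht => (between m t (fun q => q ∈ A)).2 (h t ht)⟩

end Sys
end SlimTD

namespace SlimTD
namespace Sys
variable {V σ : Type} {G : SimpleGraph V} {P : Sys V σ G} {k : ℕ}

theorem fjt_exists {t : P.Nd} (hk : (P.bag t.st).ncard = k + 1) {a b : P.Nd}
    (hab : (a = t ∧ ∃ c h, b = a.cons c h) ∨ (b = t ∧ ∃ c h, b = a.cons c h))
    (e : P.bag a.st = P.bag b.st) :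
    ∃ A X, P.td.IsFullJoinTree k A X ∧ t ∈ A := by
  classical
  have hle : a.le b := by
    rcases hab with ⟨_, c, h, rfl⟩ | ⟨_, c, h, rfl⟩ <;> exact le_self_cons _ _ _
  have hne : a ≠ b := by
    rintro rfl
    rcases hab with ⟨_, c, h, e⟩ | ⟨_, c, h, e⟩ <;>
    · have := le_refl a
      rw [e] at this
      rw [← e] at this
      have h2 := congrArg (fun z : P.Nd => z.1.length) e
      simp [Nd.cons] at h2
  have hbet : ∀ q : P.Nd, a.le q → q.le b → q = a ∨ q = b := by
    intro q h1 h2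
    rcases hab with ⟨_, c, h, rfl⟩ | ⟨_, c, h, rfl⟩ <;>
    · rcases le_cons.1 h2 with h3 | h3
      · exact Or.inr h3
      · exact Or.inl (le_antisymm h3 h1)
  set X := P.bag t.st with hX
  have haX : P.bag a.st = X := by
    rcases hab with ⟨rfl, _⟩ | ⟨rfl, _⟩
    · rfl
    · exact e
  have hbX : P.bag b.st = X := by rw [← e, haX]
  let Q : P.Nd → Prop := fun m => m.le t ∧ ∀ q : P.Nd, m.le q → q.le t → P.bag q.st = X
  have hQt : ∃ n, ∃ m, Q m ∧ m.1.length = n := by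
    refine ⟨_, t, ⟨le_refl _, ?_⟩, rfl⟩
    intro q h1 h2
    rw [le_antisymm h2 h1]
  obtain ⟨m, hm, hmn⟩ := Nat.find_spec hQt
  have hmin : ∀ m', Q m' → m.1.length ≤ m'.1.length := by
    intro m' hm'
    rw [hmn]; exact Nat.find_min' hQt ⟨m', hm', rfl⟩
  let A : Set P.Nd := {q | m.le q ∧ ∀ r : P.Nd, m.le r → r.le q → P.bag r.st = X}
  have htA : t ∈ A := hm
  have hmA : m ∈ A := ⟨le_refl _, fun r h1 h2 => by
    rw [le_antisymm h2 h1]; exact hm.2 m (le_refl _) hm.1⟩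
  have hconn : P.td.ConnectedNodeSet A := by
    rw [td_conn]
    refine ⟨m, hmA, fun q hq => ⟨hq.1, fun r h1 h2 => ⟨h1, fun s h3 h4 => hq.2 s h3 (le_trans h4 h2)⟩⟩⟩
  refine ⟨A, X, ⟨?_, hconn, hk, fun q hq => hq.2 q hq.1 (le_refl _), ?_⟩, htA⟩
  · refine ⟨a, ?_, b, ?_, hne⟩
    · rcases hab with ⟨rfl, _⟩ | ⟨rfl, c, h, hb⟩
      · exact htA
      · by_cases hma : m.le a
        · exact ⟨hma, fun r h1 h2 => hm.2 r h1 (le_trans h2 hle)⟩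
        · exfalso
          have h1 : m = b := by
            have := hm.1
            rw [hb] at this
            rcases le_cons.1 this with h | h
            · rw [hb]; exact h
            · exact absurd h hma
          have h2 := hmin a ⟨hle, fun q h3 h4 => by rcases hbet q h3 h4 with rfl | rfl <;> assumption⟩
          rw [h1] at h2
          rw [hb] at h2
          simp [Nd.cons] at h2
    · rcases hab with ⟨rfl, _⟩ | ⟨rfl, _⟩
      · refine ⟨le_trans hm.1 hle, ?_⟩
        intro r h1 h2
        rcases le_total h2 hle with h3 | h3
        · exact hm.2 r h1 h3
        · rcases hbet r h3 h2 with rfl | rfl <;> assumption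
      · exact htA
  · intro A' hAA hc hX'
    obtain ⟨m', hm', hall⟩ := (td_conn A').1 hc
    have h1 : m'.le m := (hall m (hAA hmA)).1
    have h2 : Q m' := ⟨(hall t (hAA htA)).1, fun q h3 h4 => hX' q ((hall t (hAA htA)).2 q h3 h4)⟩
    have h3 : m' = m := Subtype.ext (h1.eq_of_length (Nat.le_antisymm (le_len h1) (hmin m' h2)))
    subst h3
    refine Set.Subset.antisymm ?_ hAA
    intro q hq
    exact ⟨(hall q hq).1, fun r h3 h4 => hX' r ((hall q hq).2 r h3 h4)⟩

theorem fjt_child {A : Set P.Nd} {X : Set V} (hA : P.td.IsFullJoinTree k A X) {t : P.Nd} (ht : t ∈ A)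
    {c : σ} (h : c ∈ P.ch t.st) (hc : P.bag c = X) : t.cons c h ∈ A := by
  obtain ⟨_, hcon, hk, hb, hmax⟩ := hA
  obtain ⟨m, hm, hall⟩ := (td_conn A).1 hcon
  rw [← hmax (insert (t.cons c h) A) (Set.subset_insert _ _) ?_ ?_]
  · exact Set.mem_insert _ _
  · rw [td_conn]
    refine ⟨m, Or.inr hm, ?_⟩
    rintro q (rfl | hq)
    · refine ⟨le_trans (hall t ht).1 (le_self_cons _ _ _), ?_⟩
      intro r h1 h2
      rcases le_cons.1 h2 with h3 | h3
      · exact Or.inl h3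
      · exact Or.inr ((hall t ht).2 r h1 h3)
    · exact ⟨(hall q hq).1, fun r h1 h2 => Or.inr ((hall q hq).2 r h1 h2)⟩
  · rintro q (rfl | hq)
    · exact hc
    · exact hb q hq

theorem fjt_parent {A : Set P.Nd} {X : Set V} (hA : P.td.IsFullJoinTree k A X) {t : P.Nd}
    {c : σ} {h : c ∈ P.ch t.st} (ht : P.td.IsTopOf A (t.cons c h)) : P.bag t.st ≠ X := by
  intro hX
  obtain ⟨_, hcon, hk, hb, hmax⟩ := hA
  obtain ⟨m, hm, hall⟩ := (td_conn A).1 hcon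
  have e : m = t.cons c h := le_antisymm (hall _ ht.1).1 ((td_sub _ _).1 (ht.2 m hm))
  subst e
  have : t ∈ A := by
    rw [← hmax (insert t A) (Set.subset_insert _ _) ?_ ?_]
    · exact Set.mem_insert _ _
    · rw [td_conn]
      refine ⟨t, Or.inl rfl, ?_⟩
      rintro q (rfl | hq)
      · exact ⟨le_refl _, fun r h1 h2 => Or.inl (le_antisymm h2 h1)⟩
      · refine ⟨le_trans (le_self_cons _ _ _) (hall q hq).1, ?_⟩
        intro r h1 h2
        rcases le_total h2 (hall q hq).1 with h3 | h3
        · rcases le_cons.1 h3 with rfl | h4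
          · exact Or.inr hm
          · exact Or.inl (le_antisymm h4 h1)
        · exact Or.inr ((hall q hq).2 r h3 h2)
    · rintro q (rfl | hq)
      · exact hX
      · exact hb q hq
  exact not_cons_le _ _ _ ((td_sub _ _).1 (ht.2 t this))

theorem fjt_nbr {A : Set P.Nd} {X : Set V} (hA : P.td.IsFullJoinTree k A X) {t : P.Nd} (ht : t ∈ A) :
    (∃ c h, t.cons c h ∈ A) ∨ (∃ p c h, t = p.cons c h ∧ p ∈ A) := by
  obtain ⟨hnt, hcon, hk, hb, hmax⟩ := hA
  obtain ⟨m, hm, hall⟩ := (td_conn A).1 hcon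
  by_cases e : t = m
  · subst e
    obtain ⟨u, hu, hne⟩ := hnt.exists_ne t
    obtain ⟨c, h, hle⟩ := le_child (hall u hu).1 (Ne.symm hne)
    exact Or.inl ⟨c, h, (hall u hu).2 _ (le_self_cons _ _ _) hle⟩
  · right
    rcases Nd.casesR t with rfl | ⟨p, c, h, rfl⟩
    · exact absurd (le_antisymm (rt_le _) (hall _ ht).1) e
    · refine ⟨p, c, h, rfl, ?_⟩
      refine (hall _ ht).2 p ?_ (le_self_cons _ _ _)
      rcases le_cons.1 (hall _ ht).1 with h1 | h1
      · exact absurd h1.symm e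
      · exact h1
end Sys
end SlimTD

namespace SlimTD
variable {V : Type} {G : SimpleGraph V} {k : ℕ} {S : Set V}

inductive St (V : Type) : Type
  | n (X W : Set V) (i : ℕ) : St V
  | f (Y : Set V) (lS lN : List (Set V)) (x : Set V → V) (b : Bool) : St V

def St.bag : St V → Set V
  | n X _ _ => X
  | f Y _ _ _ _ => Y

def St.low : St V → Set V
  | n _ W _ => W
  | f _ lS lN _ _ => UL (lS ++ lN)

def br (Y : Set V) (x : Set V → V) (W : Set V) : St V := .n (Y \ {x W}) W 0

structure FGood (G : SimpleGraph V) (S : Set V) (k : ℕ) (Y : Set V) (lS lN : List (Set V))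
    (x : Set V → V) (b : Bool) : Prop where
  card : Y.ncard = k + 1
  pw : (lS ++ lN).Pairwise Disjoint
  w : ∀ W ∈ lS ++ lN, W.Nonempty ∧ x W ∈ Y ∧ ∀ v ∈ Y, v ∉ W
  n : ∀ W ∈ lS ++ lN, N G S k (Y \ {x W}) W
  s : ∀ W ∈ lS, ∃ s ∈ S, s ∈ W
  ns : ∀ W ∈ lN, ∀ s ∈ S, s ∉ W
  b0 : b = false → 2 ≤ lS.length
  b1 : b = true → lS.length ≤ 2 ∨ Seven G S Y ((Y ∪ UL (lS ++ lN))ᶜ :: lS)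

def chf (Y : Set V) (lS lN : List (Set V)) (x : Set V → V) : Set (St V) :=
  {c | (∃ W ∈ lN, c = br Y x W) ∨ (lS.length ≤ 2 ∧ ∃ W ∈ lS, c = br Y x W) ∨
    (∃ a l, lS = a :: l ∧ 2 ≤ l.length ∧ (c = br Y x a ∨ c = .f Y l [] x false))}

inductive Rule (G : SimpleGraph V) (S : Set V) (k : ℕ) : Set V → Set V → Set (St V) → Prop
  | leaf (X : Set V) : Rule G S k X ∅ ∅
  | join (X W₁ W₂ : Set V) : W₁.Nonempty → W₂.Nonempty → Disjoint W₁ W₂ → N G S k X W₁ →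
      N G S k X W₂ → Rule G S k X (W₁ ∪ W₂) {.n X W₁ 0, .n X W₂ 0}
  | drop (X W : Set V) (x : V) : x ∈ X → x ∉ W → N G S k (X \ {x}) W → Rule G S k X W {.n (X \ {x}) W 0}
  | addv (X W : Set V) (w : V) : w ∉ X → w ∉ W → (∀ u, G.Adj w u → u ∈ X ∨ u ∈ W) →
      N G S k (insert w X) W → Rule G S k X (insert w W) {.n (insert w X) W 0}
  | full (X : Set V) (w : V) (lS lN : List (Set V)) (x : Set V → V) : w ∉ X →
      FGood G S k (insert w X) lS lN x true →
      (∀ u, G.Adj w u → u ∈ X ∨ u ∈ UL (lS ++ lN)) →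
      Rule G S k X (insert w (UL (lS ++ lN))) {.f (insert w X) lS lN x true}

theorem N.rule [Finite V] {X W : Set V} (h : N G S k X W) : ∃ C, Rule G S k X W C := by
  cases h with
  | leaf X h => exact ⟨_, .leaf _⟩
  | join X W1 W2 h1 h2 h3 h4 h5 => exact ⟨_, .join _ _ _ h1 h2 h3 h4 h5⟩
  | drop X W x h1 h2 h3 h4 => exact ⟨_, .drop _ _ x h1 h2 h4⟩
  | addv X W w h1 h2 h3 h4 => exact ⟨_, .addv _ _ w h1 h2 h3 h4⟩
  | full X w lS lN x h1 h2 h3 h4 h5 h6 h7 h8 h9 =>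
    refine ⟨_, .full X w lS lN x h2 ⟨?_, h3, h4, h5, h6, h7, by simp, fun _ => h9⟩ h8⟩
    rw [Set.ncard_insert_of_notMem h2, h1]

open Classical in
noncomputable def ch (G : SimpleGraph V) (S : Set V) (k : ℕ) : St V → Set (St V)
  | .n X W i => if i < 2 then {.n X W (i + 1)} else
      if h : ∃ C, Rule G S k X W C then h.choose else ∅
  | .f Y lS lN x _ => chf Y lS lN x

def gd (G : SimpleGraph V) (S : Set V) (k : ℕ) : St V → Prop
  | .n X W i => i ≤ 2 ∧ N G S k X W
  | .f Y lS lN x b => FGood G S k Y lS lN x b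

inductive Step (G : SimpleGraph V) (S : Set V) (k : ℕ) : St V → Set (St V) → Prop
  | copy (X W i) : i < 2 → N G S k X W → Step G S k (.n X W i) {.n X W (i + 1)}
  | rule (X W C) : N G S k X W → Rule G S k X W C → Step G S k (.n X W 2) C
  | f (Y lS lN x b) : FGood G S k Y lS lN x b → Step G S k (.f Y lS lN x b) (chf Y lS lN x)

theorem step [Finite V] {s : St V} (h : gd G S k s) : Step G S k s (ch G S k s) := by
  cases s with
  | n X W i =>
    by_cases hi : i < 2
    · simp only [ch, if_pos hi]; exact .copy _ _ _ hi h.2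
    · have e : i = 2 := by have := h.1; omega
      subst e
      simp only [ch, if_neg hi]
      rw [dif_pos h.2.rule]
      exact .rule _ _ _ h.2 h.2.rule.choose_spec
  | f Y lS lN x b => exact .f _ _ _ _ _ h

noncomputable def cp : St V → ℕ
  | .n _ _ i => 2 - i
  | .f _ _ _ _ _ => 0

noncomputable def mu (s : St V) : ℕ := s.low.ncard * (3 * (Set.univ : Set V).ncard + 3) + 3 * s.bag.ncard + cp s

theorem mu_lt1 [Finite V] {s c : St V} (h : c.low.ncard < s.low.ncard) : mu c < mu s := by
  unfold mu
  have h1 : c.bag.ncard ≤ (Set.univ : Set V).ncard := Set.ncard_le_ncard (Set.subset_univ _)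
  have h2 : cp c ≤ 2 := by cases c <;> simp [cp]
  have h3 : (c.low.ncard + 1) * (3 * (Set.univ : Set V).ncard + 3) ≤
    s.low.ncard * (3 * (Set.univ : Set V).ncard + 3) := Nat.mul_le_mul_right _ h
  rw [Nat.add_mul] at h3
  omega

theorem mu_lt2 [Finite V] {s c : St V} (h : c.low ⊆ s.low)
    (h' : 3 * c.bag.ncard + cp c < 3 * s.bag.ncard + cp s) : mu c < mu s := by
  unfold mu
  have h3 := Nat.mul_le_mul_right (3 * (Set.univ : Set V).ncard + 3) (Set.ncard_le_ncard h)
  omega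

structure Loc (G : SimpleGraph V) (S : Set V) (k : ℕ) (s : St V) (C : Set (St V)) : Prop where
  goodc : ∀ c ∈ C, gd G S k c
  muc : ∀ c ∈ C, mu c < mu s
  disj : ∀ v ∈ s.bag, v ∉ s.low
  lowc : ∀ c ∈ C, c.low ⊆ s.low
  bagc : ∀ c ∈ C, ∀ v ∈ c.bag, v ∈ s.bag ∨ v ∈ s.low
  cov : ∀ v ∈ s.low, ∃ c ∈ C, v ∈ c.bag ∨ v ∈ c.low
  uniq : ∀ v ∈ s.low, ∀ c ∈ C, ∀ d ∈ C, (v ∈ c.bag ∨ v ∈ c.low) → (v ∈ d.bag ∨ v ∈ d.low) → c = d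
  adj : ∀ c ∈ C, ∀ u ∈ s.low, (u ∈ c.bag ∨ u ∈ c.low) → ∀ v, G.Adj u v → (v ∈ c.bag ∨ v ∈ c.low)

theorem pw_forall {l : List (Set V)} (h : l.Pairwise Disjoint) {A B : Set V} (hA : A ∈ l) (hB : B ∈ l)
    (hne : A ≠ B) : Disjoint A B := by
  induction l with
  | nil => simp at hA
  | cons C l ih =>
    rw [List.pairwise_cons] at h
    rw [List.mem_cons] at hA hB
    rcases hA with rfl | hA
    · rcases hB with rfl | hB
      · exact absurd rfl hne
      · exact h.1 B hB
    · rcases hB with rfl | hB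
      · exact (h.1 A hA).symm
      · exact ih h.2 hA hB

theorem pw_eq {l : List (Set V)} (h : l.Pairwise Disjoint) {A B : Set V} (hA : A ∈ l) (hB : B ∈ l)
    {v : V} (hvA : v ∈ A) (hvB : v ∈ B) : A = B := by
  by_contra hne
  exact Set.disjoint_left.1 (pw_forall h hA hB hne) hvA hvB

theorem FGood.tail {Y : Set V} {a : Set V} {l lN : List (Set V)} {x : Set V → V} {b : Bool}
    (h : FGood G S k Y (a :: l) lN x b) (hl : 2 ≤ l.length) : FGood G S k Y l [] x false := by
  have hm : ∀ W ∈ l ++ [], W ∈ a :: l ++ lN := by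
    intro W hW; simp at hW; simp [hW]
  refine ⟨h.card, ?_, fun W hW => h.w W (hm W hW), fun W hW => h.n W (hm W hW),
    fun W hW => h.s W (List.mem_cons_of_mem _ hW), by simp, fun _ => hl, by simp⟩
  have := h.pw
  rw [List.cons_append, List.pairwise_cons, List.pairwise_append] at this
  simpa using this.2.1

theorem FGood.dj {Y : Set V} {a : Set V} {l lN : List (Set V)} {x : Set V → V} {b : Bool}
    (h : FGood G S k Y (a :: l) lN x b) : (∀ v ∈ a, v ∉ UL l) ∧ (∀ v ∈ a, v ∉ UL lN) := by
  have := h.pw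
  rw [List.cons_append, List.pairwise_cons] at this
  constructor
  · rintro v hv ⟨C, hC, hvC⟩
    exact Set.disjoint_left.1 (this.1 C (by simp [hC])) hv hvC
  · rintro v hv ⟨C, hC, hvC⟩
    exact Set.disjoint_left.1 (this.1 C (by simp [hC])) hv hvC

theorem FGood.dj2 {Y : Set V} {l lN : List (Set V)} {x : Set V → V} {b : Bool}
    (h : FGood G S k Y l lN x b) : ∀ v ∈ UL l, v ∉ UL lN := by
  have := h.pw
  rw [List.pairwise_append] at this
  rintro v ⟨A, hA, hvA⟩ ⟨C, hC, hvC⟩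
  exact Set.disjoint_left.1 (this.2.2 A hA C hC) hvA hvC

/-- coarse classification of children of `f` -/
theorem chf_cases {Y : Set V} {lS lN : List (Set V)} {x : Set V → V} {c : St V}
    (h : c ∈ chf Y lS lN x) : (∃ W ∈ lS ++ lN, c = br Y x W) ∨
      (∃ a l, lS = a :: l ∧ 2 ≤ l.length ∧ c = .f Y l [] x false) := by
  rcases h with ⟨W, hW, rfl⟩ | ⟨_, W, hW, rfl⟩ | ⟨a, l, rfl, hl, rfl | rfl⟩
  · exact Or.inl ⟨W, by simp [hW], rfl⟩
  · exact Or.inl ⟨W, by simp [hW], rfl⟩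
  · exact Or.inl ⟨a, by simp, rfl⟩
  · exact Or.inr ⟨a, l, rfl, hl, rfl⟩

theorem ncard_br [Finite V] {Y : Set V} {z : V} (h : z ∈ Y) : (Y \ {z}).ncard + 1 = Y.ncard :=
  Set.ncard_sdiff_singleton_add_one h

theorem loc_f [Finite V] {Y : Set V} {lS lN : List (Set V)} {x : Set V → V} {b : Bool}
    (h : FGood G S k Y lS lN x b) : Loc G S k (.f Y lS lN x b) (chf Y lS lN x) := by
  have hdisj : ∀ v ∈ Y, v ∉ UL (lS ++ lN) := by
    rintro v hv ⟨W, hW, hvW⟩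
    exact (h.w W hW).2.2 v hv hvW
  refine ⟨?_, ?_, hdisj, ?_, ?_, ?_, ?_, ?_⟩
  · intro c hc
    rcases chf_cases hc with ⟨W, hW, rfl⟩ | ⟨a, l, rfl, hl, rfl⟩
    · exact ⟨by simp, h.n W hW⟩
    · exact h.tail hl
  · intro c hc
    rcases chf_cases hc with ⟨W, hW, rfl⟩ | ⟨a, l, rfl, hl, rfl⟩
    · apply mu_lt2
      · intro v hv; exact ⟨W, hW, hv⟩
      · have := ncard_br (h.w W hW).2.1
        simp only [br, St.bag, cp]; omega
    · apply mu_lt1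
      obtain ⟨z, hz⟩ := (h.w a (by simp)).1
      refine ncard_lt ?_ z ⟨a, by simp, hz⟩ ?_
      · rintro v ⟨W, hW, hv⟩
        exact ⟨W, by simp at hW; simp [hW], hv⟩
      · simp only [St.low, List.append_nil]; exact h.dj.1 z hz
  · intro c hc
    rcases chf_cases hc with ⟨W, hW, rfl⟩ | ⟨a, l, rfl, hl, rfl⟩
    · intro v hv; exact ⟨W, hW, hv⟩
    · rintro v ⟨W, hW, hv⟩
      exact ⟨W, by simp at hW; simp [hW], hv⟩
  · intro c hc v hv
    left
    rcases chf_cases hc with ⟨W, hW, rfl⟩ | ⟨a, l, rfl, hl, rfl⟩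
    · exact hv.1
    · exact hv
  · rintro v ⟨W, hW, hv⟩
    rw [List.mem_append] at hW
    rcases hW with hW | hW
    · by_cases hl : lS.length ≤ 2
      · exact ⟨br Y x W, Or.inr (Or.inl ⟨hl, W, hW, rfl⟩), Or.inr hv⟩
      · rcases lS with _ | ⟨a, l⟩
        · simp at hl
        have hl' : 2 ≤ l.length := by simp at hl; omega
        rcases List.mem_cons.1 hW with rfl | hW
        · exact ⟨br Y x W, Or.inr (Or.inr ⟨_, _, rfl, hl', Or.inl rfl⟩), Or.inr hv⟩
        · exact ⟨_, Or.inr (Or.inr ⟨_, _, rfl, hl', Or.inr rfl⟩), Or.inr ⟨W, by simpa using hW, hv⟩⟩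
    · exact ⟨br Y x W, Or.inl ⟨W, hW, rfl⟩, Or.inr hv⟩
  · intro v hv
    have hvY : v ∉ Y := fun hh => hdisj v hh hv
    have red : ∀ c ∈ chf Y lS lN x, (v ∈ c.bag ∨ v ∈ c.low) → v ∈ c.low := by
      intro c hc hv
      refine hv.resolve_left (fun hh => hvY ?_)
      rcases chf_cases hc with ⟨W, hW, rfl⟩ | ⟨a, l, rfl, hl, rfl⟩
      · exact hh.1
      · exact hh
    have brbr : ∀ W ∈ lS ++ lN, ∀ W' ∈ lS ++ lN, v ∈ W → v ∈ W' → br Y x W = br Y x W' :=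
      fun W hW W' hW' h1 h2 => by rw [pw_eq h.pw hW hW' h1 h2]
    have brf : ∀ W ∈ lS ++ lN, br Y x W ∈ chf Y lS lN x → v ∈ W → ∀ a l, lS = a :: l → 2 ≤ l.length →
        v ∈ UL l → False := by
      rintro W hW hc hvW a l rfl hl hvl
      have hcase : W = a ∨ W ∈ lN := by
        rcases hc with ⟨W', hW', e⟩ | ⟨hl', _⟩ | ⟨a', l', e', _, e | e⟩
        · right; injection e with _ e _; rwa [e]
        · simp at hl'; omega
        · left; injection e with _ e _; injection e' with e' _; rw [e, e']
        · simp [br] at e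
      rcases hcase with rfl | hW'
      · exact h.dj.1 v hvW hvl
      · obtain ⟨B, hB, hvB⟩ := hvl
        exact h.dj2 v ⟨B, by simp [hB], hvB⟩ ⟨W, hW', hvW⟩
    intro c hc d hd hvc hvd
    have hvc := red c hc hvc
    have hvd := red d hd hvd
    rcases chf_cases hc with ⟨W, hW, rfl⟩ | ⟨a, l, e, hl, rfl⟩
    · rcases chf_cases hd with ⟨W', hW', rfl⟩ | ⟨a, l, e, hl, rfl⟩
      · exact brbr W hW W' hW' hvc hvd
      · exact (brf W hW hc hvc a l e hl (by simpa [St.low] using hvd)).elim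
    · rcases chf_cases hd with ⟨W', hW', rfl⟩ | ⟨a', l', e', hl', rfl⟩
      · exact (brf W' hW' hd hvd a l e hl (by simpa [St.low] using hvc)).elim
      · rw [e] at e'; injection e' with _ e'; rw [e']
  · intro c hc u hu huc v huv
    have huY : u ∉ Y := fun hh => hdisj u hh hu
    rcases chf_cases hc with ⟨W, hW, rfl⟩ | ⟨a, l, rfl, hl, rfl⟩
    · rcases huc with huc | huc
      · exact absurd huc.1 huY
      · exact (h.n W hW).sep.2 u huc v huv
    · rcases huc with huc | ⟨W, hW, huc⟩
      · exact absurd huc huY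
      · have hW' : W ∈ a :: l ++ lN := by simp at hW; simp [hW]
        rcases (h.n W hW').sep.2 u huc v huv with h1 | h1
        · exact Or.inl h1.1
        · exact Or.inr ⟨W, hW, h1⟩

theorem loc_rule [Finite V] {X W : Set V} {C : Set (St V)} (hN : N G S k X W)
    (h : Rule G S k X W C) : Loc G S k (.n X W 2) C := by
  have hs := hN.sep
  cases h with
  | leaf => 
    refine ⟨?_, ?_, ?_, ?_, ?_, ?_, ?_, ?_⟩ <;> simp [St.low]
  | join W1 W2 h1 h2 h3 h4 h5 =>
    have a1 := h4.sep
    have a2 := h5.sep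
    unfold Cl at a1 a2
    rw [Set.disjoint_left] at h3
    refine ⟨?_, ?_, hs.1, ?_, ?_, ?_, ?_, ?_⟩
    · rintro c (rfl | rfl)
      · exact ⟨by simp, h4⟩
      · exact ⟨by simp, h5⟩
    · rintro c (rfl | rfl)
      · apply mu_lt1
        obtain ⟨z, hz⟩ := h2
        exact ncard_lt Set.subset_union_left z (Or.inr hz) (fun h => h3 h hz)
      · apply mu_lt1
        obtain ⟨z, hz⟩ := h1
        exact ncard_lt Set.subset_union_right z (Or.inl hz) (fun h => h3 hz h)
    · rintro c (rfl | rfl)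
      · exact Set.subset_union_left
      · exact Set.subset_union_right
    · rintro c (rfl | rfl) <;> exact fun v hv => Or.inl hv
    · rintro v (hv | hv)
      · exact ⟨_, Or.inl rfl, Or.inr hv⟩
      · exact ⟨_, Or.inr rfl, Or.inr hv⟩
    · have := hs.1
      rintro v hv c (rfl | rfl) d (rfl | rfl) <;> simp only [St.bag, St.low] at * <;> grind
    · have := hs.1
      rintro c (rfl | rfl) u hu <;> simp only [St.bag, St.low] at * <;> grind
  | drop _ x h1 h2 h3 =>
    have a1 := h3.sep
    unfold Cl at a1
    refine ⟨?_, ?_, hs.1, ?_, ?_, ?_, ?_, ?_⟩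
    · rintro c rfl
      exact ⟨by simp, h3⟩
    · rintro c rfl
      refine mu_lt2 (fun v hv => hv) ?_
      have := ncard_br h1
      simp only [St.bag, cp]; omega
    · rintro c rfl; exact subset_rfl
    · rintro c rfl v hv; exact Or.inl hv.1
    · intro v hv; exact ⟨_, rfl, Or.inr hv⟩
    · rintro v hv c rfl d rfl _ _; rfl
    · have := hs.1
      rintro c rfl u hu <;> simp only [St.bag, St.low] at * <;> grind
  | addv W w h1 h2 h3 h4 =>
    have a1 := h4.sep
    unfold Cl at a1
    refine ⟨?_, ?_, hs.1, ?_, ?_, ?_, ?_, ?_⟩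
    · rintro c rfl
      exact ⟨by simp, h4⟩
    · rintro c rfl
      exact mu_lt1 (ncard_lt (Set.subset_insert _ _) w (Set.mem_insert _ _) h2)
    · rintro c rfl; exact Set.subset_insert _ _
    · rintro c rfl v (hv | hv)
      · exact Or.inr (Or.inl hv)
      · exact Or.inl hv
    · rintro v (hv | hv)
      · exact ⟨_, rfl, Or.inl (Or.inl hv)⟩
      · exact ⟨_, rfl, Or.inr hv⟩
    · rintro v hv c rfl d rfl _ _; rfl
    · have := hs.1
      rintro c rfl u hu <;> simp only [St.bag, St.low] at * <;> grind
  | full w lS lN x h1 h2 h3 =>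
    have hw : w ∉ UL (lS ++ lN) := by
      rintro ⟨W, hW, hv⟩
      exact (h2.w W hW).2.2 w (Set.mem_insert _ _) hv
    refine ⟨?_, ?_, hs.1, ?_, ?_, ?_, ?_, ?_⟩
    · rintro c rfl
      exact h2
    · rintro c rfl
      exact mu_lt1 (ncard_lt (Set.subset_insert _ _) w (Set.mem_insert _ _) hw)
    · rintro c rfl; exact Set.subset_insert _ _
    · rintro c rfl v (hv | hv)
      · exact Or.inr (Or.inl hv)
      · exact Or.inl hv
    · rintro v (hv | hv)
      · exact ⟨_, rfl, Or.inl (Or.inl hv)⟩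
      · exact ⟨_, rfl, Or.inr hv⟩
    · rintro v hv c rfl d rfl _ _; rfl
    · rintro c rfl u hu - v huv
      rcases hs.2 u hu v huv with h | h | h
      · exact Or.inl (Or.inr h)
      · exact Or.inl (Or.inl h)
      · exact Or.inr h

theorem loc [Finite V] {s : St V} {C : Set (St V)} (h : Step G S k s C) : Loc G S k s C := by
  cases h with
  | copy X W i hi hN =>
    have hs := hN.sep
    refine ⟨?_, ?_, hs.1, ?_, ?_, ?_, ?_, ?_⟩
    · rintro c rfl; exact ⟨hi, hN⟩
    · rintro c rfl
      refine mu_lt2 (fun v hv => hv) ?_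
      simp only [St.bag, cp]; omega
    · rintro c rfl; exact subset_rfl
    · rintro c rfl v hv; exact Or.inl hv
    · intro v hv; exact ⟨_, rfl, Or.inr hv⟩
    · rintro v hv c rfl d rfl _ _; rfl
    · rintro c rfl u hu _ v huv; exact hs.2 u hu v huv
  | rule X W C hN hR => exact loc_rule hN hR
  | f Y lS lN x b hF => exact loc_f hF

noncomputable def sys [Finite V] (h : N G S k ∅ Set.univ) : Sys V (St V) G where
  s0 := .n ∅ Set.univ 0
  ch := ch G S k
  good := gd G S k
  bag := St.bag
  low := St.low
  mu := mu
  good0 := ⟨by simp, h⟩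
  low0 := rfl
  goodc := fun s hs => (loc (step hs)).goodc
  muc := fun s hs => (loc (step hs)).muc
  disj := fun s hs => (loc (step hs)).disj
  lowc := fun s hs => (loc (step hs)).lowc
  bagc := fun s hs => (loc (step hs)).bagc
  cov := fun s hs => (loc (step hs)).cov
  uniq := fun s hs => (loc (step hs)).uniq
  adj := fun s hs => (loc (step hs)).adj
end SlimTD

namespace SlimTD
variable {V : Type} {G : SimpleGraph V} {k : ℕ} {S : Set V}

def SC (G : SimpleGraph V) (S : Set V) (k : ℕ) (s c : St V) : Prop :=
  c ∈ ch G S k s ∧ ∃ v ∈ S, v ∈ s.low ∧ (v ∈ c.bag ∨ v ∈ c.low)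

def Bo (G : SimpleGraph V) (S : Set V) (k : ℕ) (s : St V) : Prop :=
  (∃ v ∈ S, v ∈ s.low) ∧ ∀ c ∈ ch G S k s, ¬ (c.low ∩ S = s.low ∩ S ∧ c.bag ∩ S = s.bag ∩ S)

theorem st_adj [Finite V] {s c : St V} (hs : gd G S k s) (hc : c ∈ ch G S k s) :
    (c.bag ⊆ s.bag ∨ s.bag ⊆ c.bag) ∧ c.bag.ncard ≤ s.bag.ncard + 1 ∧ s.bag.ncard ≤ c.bag.ncard + 1 := by
  have h := step hs
  generalize ch G S k s = C at h hc
  have hdel : ∀ (Y : Set V) (z : V), z ∈ Y → (Y \ {z} ⊆ Y ∨ Y ⊆ Y \ {z}) ∧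
      (Y \ {z}).ncard ≤ Y.ncard + 1 ∧ Y.ncard ≤ (Y \ {z}).ncard + 1 := by
    intro Y z hz
    have := ncard_br hz
    exact ⟨Or.inl Set.diff_subset, by omega, by omega⟩
  have hins : ∀ (Y : Set V) (z : V), z ∉ Y → (insert z Y ⊆ Y ∨ Y ⊆ insert z Y) ∧
      (insert z Y).ncard ≤ Y.ncard + 1 ∧ Y.ncard ≤ (insert z Y).ncard + 1 := by
    intro Y z hz
    have := Set.ncard_insert_of_notMem hz
    exact ⟨Or.inr (Set.subset_insert _ _), by omega, by omega⟩
  cases h with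
  | copy X W i hi hN => rcases hc with rfl; exact ⟨Or.inl subset_rfl, Nat.le_succ _, Nat.le_succ _⟩
  | rule X W C hN hR =>
    cases hR with
    | leaf => exact absurd hc (by simp)
    | join W1 W2 => rcases hc with rfl | rfl <;> exact ⟨Or.inl subset_rfl, Nat.le_succ _, Nat.le_succ _⟩
    | drop _ x h1 h2 h3 => rcases hc with rfl; exact hdel _ _ h1
    | addv W w h1 => rcases hc with rfl; exact hins _ _ h1
    | full w lS lN x h1 => rcases hc with rfl; exact hins _ _ h1
  | f Y lS lN x b hF =>
    rcases chf_cases hc with ⟨W, hW, rfl⟩ | ⟨a, l, rfl, hl, rfl⟩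
    · exact hdel _ _ (hF.w W hW).2.1
    · exact ⟨Or.inl subset_rfl, Nat.le_succ _, Nat.le_succ _⟩

theorem gd_card [Finite V] {s : St V} (hs : gd G S k s) : s.bag.ncard ≤ k + 1 := by
  cases s with
  | n X W i => exact hs.2.card.trans (Nat.le_succ _)
  | f Y lS lN x b => exact hs.card.le

/-- who can be the parent -/
theorem parent_n [Finite V] {p : St V} {X W : Set V} {i : ℕ} (hp : gd G S k p)
    (h : St.n X W (i + 1) ∈ ch G S k p) : p = .n X W i := by
  have hst := step hp
  generalize ch G S k p = C at hst h
  cases hst with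
  | copy X' W' j hj hN =>
    have h : St.n X W (i + 1) = St.n X' W' (j + 1) := h
    injection h with h1 h2 h3
    rw [h1, h2, Nat.succ.inj h3]
  | rule X' W' C hN hR =>
    cases hR with
    | leaf => exact absurd h (by simp)
    | join W1 W2 => simp at h
    | drop _ x h1 h2 h3 => simp at h
    | addv W w h1 => simp at h
    | full w lS lN x h1 => simp at h
  | f Y lS lN x b hF =>
    rcases chf_cases h with ⟨W, hW, h⟩ | ⟨a, l, rfl, hl, h⟩ <;> simp [br] at h

theorem parent_ft [Finite V] {p : St V} {Y lS lN x} (hp : gd G S k p)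
    (h : St.f Y lS lN x true ∈ ch G S k p) : ∃ X W, p = .n X W 2 ∧ X.ncard ≤ k := by
  have hst := step hp
  generalize ch G S k p = C at hst h
  cases hst with
  | copy X' W' j hj hN => simp at h
  | rule X' W' C hN hR => exact ⟨_, _, rfl, hN.card⟩
  | f Y lS lN x b hF =>
    rcases chf_cases h with ⟨W, hW, h⟩ | ⟨a, l, rfl, hl, h⟩ <;> simp [br] at h

theorem parent_ff [Finite V] {p : St V} {Y lS lN x} (hp : gd G S k p)
    (h : St.f Y lS lN x false ∈ ch G S k p) : p.bag = Y := by
  have hst := step hp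
  generalize ch G S k p = C at hst h
  cases hst with
  | copy X' W' j hj hN => simp at h
  | rule X' W' C hN hR =>
    cases hR with
    | leaf => exact absurd h (by simp)
    | join W1 W2 => simp at h
    | drop _ x h1 h2 h3 => simp at h
    | addv W w h1 => simp at h
    | full w lS lN x h1 => simp at h
  | f Y lS lN x b hF =>
    rcases chf_cases h with ⟨W, hW, h⟩ | ⟨a, l, rfl, hl, h⟩
    · simp [br] at h
    · injection h with h; exact h.symm

theorem ch_copy (X W : Set V) (i : ℕ) (hi : i < 2) : ch G S k (.n X W i) = {.n X W (i + 1)} := by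
  simp [ch, hi]

theorem not_bo (X W : Set V) (i : ℕ) (hi : i < 2) : ¬ Bo G S k (.n X W i) := by
  intro h
  refine h.2 (.n X W (i + 1)) ?_ ⟨rfl, rfl⟩
  rw [ch_copy _ _ _ hi]; rfl

/-- classification of bottom states -/
inductive BC (G : SimpleGraph V) (S : Set V) (k : ℕ) : St V → Prop
  | join (X W W₁ W₂) : X.ncard ≤ k → St.n X W₁ 0 ≠ St.n X W₂ 0 →
      ch G S k (.n X W 2) = {.n X W₁ 0, .n X W₂ 0} →
      SC G S k (.n X W 2) (.n X W₁ 0) → SC G S k (.n X W 2) (.n X W₂ 0) → BC G S k (.n X W 2)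
  | intro (X W x) : X.ncard ≤ k → x ∈ X → x ∈ S → ch G S k (.n X W 2) = {.n (X \ {x}) W 0} →
      SC G S k (.n X W 2) (.n (X \ {x}) W 0) → BC G S k (.n X W 2)
  | forget (X W w c) : X.ncard ≤ k → w ∉ X → w ∈ S → ch G S k (.n X W 2) = {c} →
      c.bag = insert w X → SC G S k (.n X W 2) c →
      ((∃ X' W', c = .n X' W' 0) ∨ ∃ Y lS lN x, c = .f Y lS lN x true) → BC G S k (.n X W 2)
  | introf (Y a lN x) : FGood G S k Y [a] lN x true → x a ∈ S → BC G S k (.f Y [a] lN x true)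
  | joinf (Y lS lN x b) : FGood G S k Y lS lN x b → 2 ≤ lS.length → BC G S k (.f Y lS lN x b)

theorem bc [Finite V] {s : St V} (hs : gd G S k s) (hb : Bo G S k s) : BC G S k s := by
  have hst := step hs
  have hb2 := hb.2
  obtain ⟨z, hzS, hz⟩ := hb.1
  generalize hC : ch G S k s = C at hst hb2
  cases hst with
  | copy X W i hi hN => exact absurd hb (not_bo _ _ _ hi)
  | rule X W C hN hR =>
    have hcard := hN.card
    cases hR with
    | leaf => simp [St.low] at hz
    | join W1 W2 h1 h2 h3 h4 h5 =>
      have d := Set.disjoint_left.1 h3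
      have m1 : ∃ v ∈ S, v ∈ W1 := by
        by_contra hh
        push Not at hh
        refine hb2 _ (Or.inr rfl) ⟨?_, rfl⟩
        ext v; have := hh v
        simp only [St.low, Set.mem_inter_iff, Set.mem_union]; tauto
      have m2 : ∃ v ∈ S, v ∈ W2 := by
        by_contra hh
        push Not at hh
        refine hb2 _ (Or.inl rfl) ⟨?_, rfl⟩
        ext v; have := hh v
        simp only [St.low, Set.mem_inter_iff, Set.mem_union]; tauto
      obtain ⟨v1, hv1, hv1'⟩ := m1
      obtain ⟨v2, hv2, hv2'⟩ := m2
      refine .join X _ W1 W2 hcard ?_ hC ⟨?_, v1, hv1, Or.inl hv1', Or.inr hv1'⟩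
        ⟨?_, v2, hv2, Or.inr hv2', Or.inr hv2'⟩
      · intro e
        injection e with _ e
        subst e
        exact d hv1' hv1'
      · rw [hC]; exact Or.inl rfl
      · rw [hC]; exact Or.inr rfl
    | drop _ x h1 h2 h3 =>
      refine .intro X W x hcard h1 ?_ hC ⟨by rw [hC]; rfl, z, hzS, hz, Or.inr hz⟩
      by_contra hx
      refine hb2 _ rfl ⟨rfl, ?_⟩
      ext v
      simp only [St.bag, Set.mem_inter_iff, Set.mem_diff, Set.mem_singleton_iff]
      constructor
      · tauto
      · rintro ⟨a, b⟩; exact ⟨⟨a, fun e => hx (e ▸ b)⟩, b⟩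
    | addv W w h1 h2 h3 h4 =>
      have hw : w ∈ S := by
        by_contra hx
        refine hb2 _ rfl ⟨?_, ?_⟩ <;>
        · ext v
          simp only [St.bag, St.low, Set.mem_inter_iff, Set.mem_insert_iff]
          constructor
          · rintro ⟨a, b⟩; exact ⟨by first | exact Or.inr a | exact a.resolve_left (fun e => hx (e ▸ b)), b⟩
          · rintro ⟨a, b⟩; exact ⟨by first | exact Or.inr a | exact a.resolve_left (fun e => hx (e ▸ b)), b⟩
      exact .forget X _ w _ hcard h1 hw hC rfl ⟨by rw [hC]; rfl, w, hw, Or.inl rfl, Or.inl (Or.inl rfl)⟩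
        (Or.inl ⟨_, _, rfl⟩)
    | full w lS lN x h1 h2 h3 =>
      have hw : w ∈ S := by
        by_contra hx
        refine hb2 _ rfl ⟨?_, ?_⟩ <;>
        · ext v
          simp only [St.bag, St.low, Set.mem_inter_iff, Set.mem_insert_iff]
          constructor
          · rintro ⟨a, b⟩; exact ⟨by first | exact Or.inr a | exact a.resolve_left (fun e => hx (e ▸ b)), b⟩
          · rintro ⟨a, b⟩; exact ⟨by first | exact Or.inr a | exact a.resolve_left (fun e => hx (e ▸ b)), b⟩
      exact .forget X _ w _ hcard h1 hw hC rfl ⟨by rw [hC]; rfl, w, hw, Or.inl rfl, Or.inl (Or.inl rfl)⟩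
        (Or.inr ⟨_, _, _, _, rfl⟩)
  | f Y lS lN x b hF =>
    have hlN : ∀ v ∈ S, v ∉ UL lN := by
      rintro v hv ⟨W, hW, hvW⟩; exact hF.ns W hW v hv hvW
    by_cases hl : 2 ≤ lS.length
    · exact .joinf _ _ _ _ _ hF hl
    rcases lS with _ | ⟨a, _ | ⟨a', l⟩⟩
    · exact absurd hz (hlN z hzS)
    · have hbt : b = true := by
        cases b
        · exact absurd (hF.b0 rfl) hl
        · rfl
      subst hbt
      refine .introf _ _ _ _ hF ?_
      by_contra hx
      refine hb2 (br Y x a) (Or.inr (Or.inl ⟨by simp, a, by simp, rfl⟩)) ⟨?_, ?_⟩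
      · ext v
        have := hlN v
        simp only [St.low, br, List.cons_append, List.nil_append, UL_cons, Set.mem_inter_iff, Set.mem_union]
        tauto
      · ext v
        simp only [St.bag, br, Set.mem_inter_iff, Set.mem_diff, Set.mem_singleton_iff]
        constructor
        · tauto
        · rintro ⟨a, b⟩; exact ⟨⟨a, fun e => hx (e ▸ b)⟩, b⟩
    · simp at hl

theorem ch_f {Y : Set V} {lS lN : List (Set V)} {x : Set V → V} {b : Bool} :
    ch G S k (.f Y lS lN x b) = chf Y lS lN x := rfl

/-- S-children of an f-state -/
theorem sc_f {Y : Set V} {lS lN : List (Set V)} {x : Set V → V} {b : Bool} {c : St V}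
    (hF : FGood G S k Y lS lN x b) : SC G S k (.f Y lS lN x b) c ↔
      ((lS.length ≤ 2 ∧ ∃ W ∈ lS, c = br Y x W) ∨
    (∃ a l, lS = a :: l ∧ 2 ≤ l.length ∧ (c = br Y x a ∨ c = .f Y l [] x false))) := by
  constructor
  · rintro ⟨⟨W, hW, rfl⟩ | h, v, hv, ⟨A, hA, hvA⟩, hv'⟩
    · exfalso
      rcases hv' with hv' | hv'
      · exact (hF.w A hA).2.2 v hv'.1 hvA
      · exact hF.ns W hW v hv hv'
    · exact h
  · intro h
    refine ⟨Or.inr h, ?_⟩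
    have hbr : ∀ W ∈ lS, ∃ v ∈ S, v ∈ UL (lS ++ lN) ∧ v ∈ W := by
      intro W hW
      obtain ⟨v, hv, hvW⟩ := hF.s W hW
      exact ⟨v, hv, ⟨W, by simp [hW], hvW⟩, hvW⟩
    rcases h with ⟨_, W, hW, rfl⟩ | ⟨a, l, rfl, hl, rfl | rfl⟩
    · obtain ⟨v, h1, h2, h3⟩ := hbr W hW
      exact ⟨v, h1, h2, Or.inr h3⟩
    · obtain ⟨v, h1, h2, h3⟩ := hbr a (by simp)
      exact ⟨v, h1, h2, Or.inr h3⟩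
    · rcases l with _ | ⟨a', l⟩
      · simp at hl
      obtain ⟨v, h1, h2, h3⟩ := hbr a' (by simp)
      exact ⟨v, h1, h2, Or.inr ⟨a', by simp, h3⟩⟩

theorem two_sc [Finite V] {Y : Set V} {lS lN : List (Set V)} {x : Set V → V} {b : Bool}
    (hF : FGood G S k Y lS lN x b) (hl : 2 ≤ lS.length) : ∃ c₁ c₂, c₁ ≠ c₂ ∧
      SC G S k (.f Y lS lN x b) c₁ ∧ SC G S k (.f Y lS lN x b) c₂ ∧
      (∀ c, SC G S k (.f Y lS lN x b) c → c = c₁ ∨ c = c₂) ∧ c₁.bag ⊆ Y ∧ c₂.bag ⊆ Y := by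
  simp only [sc_f hF]
  rcases lS with _ | ⟨a, _ | ⟨a', _ | ⟨a'', l⟩⟩⟩
  · simp at hl
  · simp at hl
  · refine ⟨br Y x a, br Y x a', ?_, Or.inl ⟨by simp, a, by simp, rfl⟩,
      Or.inl ⟨by simp, a', by simp, rfl⟩, ?_, Set.diff_subset, Set.diff_subset⟩
    · intro e
      injection e with _ e
      subst e
      obtain ⟨z, hz⟩ := (hF.w a (by simp)).1
      exact hF.dj.1 z hz ⟨a, by simp, hz⟩
    · rintro c (⟨_, W, hW, rfl⟩ | ⟨b, l, e, hl, _⟩)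
      · simp only [List.mem_cons, List.not_mem_nil, or_false] at hW
        rcases hW with rfl | rfl
        · exact Or.inl rfl
        · exact Or.inr rfl
      · injection e with _ e; subst e; simp at hl
  · refine ⟨br Y x a, .f Y (a' :: a'' :: l) [] x false, by simp [br],
      Or.inr ⟨_, _, rfl, by simp, Or.inl rfl⟩, Or.inr ⟨_, _, rfl, by simp, Or.inr rfl⟩, ?_,
      Set.diff_subset, subset_rfl⟩
    rintro c (⟨hh, _⟩ | ⟨b, l, e, hl, h⟩)
    · simp at hh
    · injection e with e e'; subst e; subst e'; exact h

theorem bo_f [Finite V] {Y : Set V} {lS lN : List (Set V)} {x : Set V → V} {b : Bool}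
    (hF : FGood G S k Y lS lN x b) (hl : 2 ≤ lS.length) : Bo G S k (.f Y lS lN x b) := by
  rcases lS with _ | ⟨a, _ | ⟨a', l⟩⟩
  · simp at hl
  · simp at hl
  obtain ⟨z, hzS, hz⟩ := hF.s a (by simp)
  obtain ⟨z', hzS', hz'⟩ := hF.s a' (by simp)
  have hzl : z ∈ UL (a :: a' :: l ++ lN) := ⟨a, by simp, hz⟩
  have hzl' : z' ∈ UL (a :: a' :: l ++ lN) := ⟨a', by simp, hz'⟩
  refine ⟨⟨z, hzS, hzl⟩, ?_⟩
  rintro c hc ⟨h1, -⟩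
  have k1 : z ∈ c.low := by
    have : z ∈ c.low ∩ S := by rw [h1]; exact ⟨hzl, hzS⟩
    exact this.1
  have k2 : z' ∈ c.low := by
    have : z' ∈ c.low ∩ S := by rw [h1]; exact ⟨hzl', hzS'⟩
    exact this.1
  rcases chf_cases hc with ⟨W, hW, rfl⟩ | ⟨b, l', e, hl', rfl⟩
  · have e1 := pw_eq hF.pw hW (by simp) k1 hz
    subst e1
    exact hF.dj.1 z' k2 ⟨a', by simp, hz'⟩
  · injection e with e e'
    subst e e'
    simp only [St.low, List.append_nil] at k1
    exact hF.dj.1 z hz k1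

/-- comb states -/
def Comb (s : St V) : Prop := ∃ Y lS lN x b, s = .f Y lS lN x b ∧ (3 ≤ lS.length ∨ b = false)

theorem comb_two {Y : Set V} {lS lN : List (Set V)} {x : Set V → V} {b : Bool}
    (hF : FGood G S k Y lS lN x b) (h : 3 ≤ lS.length ∨ b = false) : 2 ≤ lS.length := by
  rcases h with h | h
  · omega
  · exact hF.b0 h

theorem same_comb [Finite V] {s c : St V} (hs : gd G S k s) (hc : c ∈ ch G S k s) (e : c.bag = s.bag)
    (hk : s.bag.ncard = k + 1) : Comb s ∧ Comb c := by
  cases s with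
  | n X W i => have h := hs.2.card; simp only [St.bag] at hk; omega
  | f Y lS lN x b =>
    rcases chf_cases hc with ⟨W, hW, rfl⟩ | ⟨a, l, rfl, hl, rfl⟩
    · have h1 : x W ∈ Y := (hs.w W hW).2.1
      have h2 : x W ∈ (br Y x W).bag := by rw [e]; exact h1
      exact absurd rfl h2.2
    · exact ⟨⟨_, _, _, _, _, rfl, Or.inl (by simp; omega)⟩, ⟨_, _, _, _, _, rfl, Or.inr rfl⟩⟩

theorem slim2 [Finite V] {s c₁ c₂ : St V} (hs : gd G S k s) (hb : Bo G S k s) (hne : c₁ ≠ c₂)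
    (h1 : SC G S k s c₁) (h2 : SC G S k s c₂) : Comb s ∨
      (c₁.bag.ncard ≠ k + 1 ∧ c₂.bag.ncard ≠ k + 1 ∧ c₁.bag.ncard ≤ s.bag.ncard ∧
        c₂.bag.ncard ≤ s.bag.ncard ∧
        ∀ p, gd G S k p → s ∈ ch G S k p → p.bag.ncard ≠ k + 1 ∧ p.bag.ncard ≤ s.bag.ncard) := by
  cases bc hs hb with
  | join X W W1 W2 hX _ hC _ _ =>
    right
    have hcc : ∀ c, SC G S k (.n X W 2) c → c.bag = X := by
      intro c hc
      have := hc.1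
      rw [hC] at this
      rcases this with rfl | rfl <;> rfl
    rw [hcc _ h1, hcc _ h2]
    refine ⟨by omega, by omega, le_rfl, le_rfl, ?_⟩
    intro p hp hsp
    rw [parent_n hp hsp]
    exact ⟨by simp only [St.bag]; omega, le_rfl⟩
  | intro X W x hX _ _ hC _ =>
    have e1 := h1.1; have e2 := h2.1
    rw [hC] at e1 e2
    exact absurd (e1.trans e2.symm) hne
  | forget X W x c hX _ _ hC _ =>
    have e1 := h1.1; have e2 := h2.1
    rw [hC] at e1 e2
    exact absurd (e1.trans e2.symm) hne
  | introf Y a lN x hF _ =>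
    have hcc : ∀ c, SC G S k (.f Y [a] lN x true) c → c = br Y x a := by
      intro c hc
      rcases (sc_f hF).1 hc with ⟨_, W, hW, rfl⟩ | ⟨b, l, e, hl, _⟩
      · simp only [List.mem_singleton] at hW; rw [hW]
      · injection e with _ e; subst e; simp at hl
    exact absurd ((hcc _ h1).trans (hcc _ h2).symm) hne
  | joinf Y lS lN x b hF hl =>
    by_cases hco : 3 ≤ lS.length ∨ b = false
    · exact Or.inl ⟨_, _, _, _, _, rfl, hco⟩
    right
    push Not at hco
    have hbt : b = true := by simpa using hco.2
    subst hbt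
    have hcc : ∀ c, SC G S k (.f Y lS lN x true) c → c.bag.ncard = k := by
      intro c hc
      rcases (sc_f hF).1 hc with ⟨_, W, hW, rfl⟩ | ⟨b, l, rfl, hl, _⟩
      · exact ncard_del hF.card (hF.w W (by simp [hW])).2.1
      · simp at hco; omega
    have hYk : (St.f Y lS lN x true).bag.ncard = k + 1 := hF.card
    rw [hcc _ h1, hcc _ h2, hYk]
    refine ⟨by omega, by omega, by omega, by omega, ?_⟩
    intro p hp hsp
    obtain ⟨X, W, rfl, hX⟩ := parent_ft hp hsp
    exact ⟨by simp only [St.bag]; omega, by simp only [St.bag]; omega⟩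

theorem slim3 [Finite V] {s p : St V} (hs : gd G S k s) (hb : Bo G S k s) (hp : gd G S k p)
    (hsp : s ∈ ch G S k p) (hk : s.bag.ncard ≠ k + 1) :
    s.bag = p.bag ∧ ∀ c, SC G S k p c → c = s := by
  have key : ∀ X W, s = .n X W 2 → s.bag = p.bag ∧ ∀ c, SC G S k p c → c = s := by
    rintro X W rfl
    have e := parent_n hp hsp
    subst e
    refine ⟨rfl, ?_⟩
    intro c hc
    have := hc.1
    rw [ch_copy _ _ _ (by omega)] at this
    exact this
  cases bc hs hb with
  | join X W W1 W2 => exact key _ _ rfl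
  | intro X W => exact key _ _ rfl
  | forget X W => exact key _ _ rfl
  | introf Y a lN x hF _ => exact absurd hF.card hk
  | joinf Y lS lN x b hF hl => exact absurd hF.card hk

theorem slim4 [Finite V] {s c : St V} (hs : gd G S k s) (hb : Bo G S k s) (hc : SC G S k s c)
    (hk : c.bag.ncard ≠ k + 1) :
    (∀ d e, SC G S k c d → SC G S k c e → d = e) ∧ ∀ d, SC G S k c d → c.bag = d.bag := by
  have key : ∀ X W, c = .n X W 0 →
      (∀ d e, SC G S k c d → SC G S k c e → d = e) ∧ ∀ d, SC G S k c d → c.bag = d.bag := by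
    rintro X W rfl
    have : ∀ d, SC G S k (.n X W 0) d → d = .n X W 1 := by
      intro d hd
      have := hd.1
      rw [ch_copy _ _ _ (by omega)] at this
      exact this
    refine ⟨fun d e hd he => (this d hd).trans (this e he).symm, fun d hd => by rw [this d hd]; rfl⟩
  have hc1 := hc.1
  cases bc hs hb with
  | join X W W1 W2 _ _ hC =>
    rw [hC] at hc1
    rcases hc1 with rfl | rfl <;> exact key _ _ rfl
  | intro X W x _ _ _ hC => rw [hC] at hc1; exact key _ _ hc1
  | forget X W w c' _ _ _ hC hcb _ hor =>
    rw [hC] at hc1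
    rcases hc1 with rfl
    rcases hor with ⟨X', W', e⟩ | ⟨Y, lS, lN, x, e⟩
    · exact key _ _ e
    · have hg := (loc (step hs)).goodc c hc.1
      rw [e] at hg hk
      exact absurd hg.card hk
  | introf Y a lN x hF _ =>
    rcases chf_cases hc1 with ⟨W, hW, e⟩ | ⟨a, l, e, hl, rfl⟩
    · exact key _ _ e
    · exact absurd hF.card hk
  | joinf Y lS lN x b hF hl =>
    rcases chf_cases hc1 with ⟨W, hW, e⟩ | ⟨a, l, e, hl, rfl⟩
    · exact key _ _ e
    · exact absurd hF.card hk

theorem slim5 [Finite V] {s p q : St V} (hs : gd G S k s) (hb : Bo G S k s) (hp : gd G S k p)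
    (hq : gd G S k q) (hsp : s ∈ ch G S k p) (hpq : p ∈ ch G S k q) (hk : p.bag.ncard ≠ k + 1) :
    ¬ Bo G S k q := by
  have key : ∀ X W, s = .n X W 2 → ¬ Bo G S k q := by
    rintro X W rfl
    have e := parent_n hp hsp
    subst e
    have e := parent_n hq hpq
    subst e
    exact not_bo _ _ _ (by omega)
  have key2 : ∀ Y lS lN x b, s = .f Y lS lN x b → Y.ncard = k + 1 → ¬ Bo G S k q := by
    rintro Y lS lN x b rfl hY
    cases b
    · have := parent_ff hp hsp
      rw [this] at hk
      exact absurd hY hk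
    · obtain ⟨X, W, rfl, _⟩ := parent_ft hp hsp
      have e := parent_n hq hpq
      subst e
      exact not_bo _ _ _ (by omega)
  cases bc hs hb with
  | join X W W1 W2 => exact key _ _ rfl
  | intro X W => exact key _ _ rfl
  | forget X W => exact key _ _ rfl
  | introf Y a lN x hF _ => exact key2 _ _ _ _ _ rfl hF.card
  | joinf Y lS lN x b hF hl => exact key2 _ _ _ _ _ rfl hF.card

/-- state-level operations -/
theorem ops [Finite V] {s : St V} (hs : gd G S k s) (hb : Bo G S k s) :
    (∃ v c, SC G S k s c ∧ (∀ d, SC G S k s d → d = c) ∧ v ∈ S ∧ v ∉ c.bag ∧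
      s.bag ∩ S = (c.bag ∩ S) ∪ {v}) ∨
    (∃ v c, SC G S k s c ∧ (∀ d, SC G S k s d → d = c) ∧ v ∈ S ∧ v ∈ c.bag ∧
      s.bag ∩ S = (c.bag ∩ S) \ {v}) ∨
    (∃ c₁ c₂, c₁ ≠ c₂ ∧ SC G S k s c₁ ∧ SC G S k s c₂ ∧ (∀ d, SC G S k s d → d = c₁ ∨ d = c₂) ∧
      (c₁.bag ∩ S) ∪ (c₂.bag ∩ S) ⊆ s.bag ∩ S) := by
  have hin : ∀ (Y : Set V) (x : V), x ∈ Y → x ∈ S → Y ∩ S = ((Y \ {x}) ∩ S) ∪ {x} := by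
    intro Y x hx hxS
    ext v
    simp only [Set.mem_inter_iff, Set.mem_union, Set.mem_diff, Set.mem_singleton_iff]
    by_cases e : v = x
    · subst e; simp [hx, hxS]
    · simp [e]
  cases bc hs hb with
  | join X W W1 W2 _ hne hC s1 s2 =>
    refine Or.inr (Or.inr ⟨_, _, hne, s1, s2, ?_, ?_⟩)
    · intro d hd
      have := hd.1
      rw [hC] at this
      exact this
    · exact Set.union_subset subset_rfl subset_rfl
  | intro X W x _ hx hxS hC s1 =>
    refine Or.inl ⟨x, _, s1, ?_, hxS, ?_, hin X x hx hxS⟩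
    · intro d hd
      have := hd.1
      rw [hC] at this
      exact this
    · exact fun hh => hh.2 rfl
  | forget X W w c _ hw hwS hC hcb s1 _ =>
    refine Or.inr (Or.inl ⟨w, c, s1, ?_, hwS, by rw [hcb]; exact Set.mem_insert _ _, ?_⟩)
    · intro d hd
      have := hd.1
      rw [hC] at this
      exact this
    · rw [hcb]
      ext v
      simp only [St.bag, Set.mem_inter_iff, Set.mem_diff, Set.mem_singleton_iff, Set.mem_insert_iff]
      by_cases e : v = w
      · subst e; simp [hw]
      · simp [e]
  | introf Y a lN x hF hx =>
    refine Or.inl ⟨x a, br Y x a, ?_, ?_, hx, fun hh => hh.2 rfl, hin Y _ (hF.w a (by simp)).2.1 hx⟩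
    · exact (sc_f hF).2 (Or.inl ⟨by simp, a, by simp, rfl⟩)
    · intro c hc
      rcases (sc_f hF).1 hc with ⟨_, W, hW, rfl⟩ | ⟨b, l, e, hl, _⟩
      · simp only [List.mem_singleton] at hW; rw [hW]
      · injection e with _ e; subst e; simp at hl
  | joinf Y lS lN x b hF hl =>
    obtain ⟨c1, c2, h1, h2, h3, h4, h5, h6⟩ := two_sc hF hl
    exact Or.inr (Or.inr ⟨c1, c2, h1, h2, h3, h4,
      Set.union_subset (Set.inter_subset_inter_left _ h5) (Set.inter_subset_inter_left _ h6)⟩)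
end SlimTD

namespace SlimTD
variable {V : Type} {G : SimpleGraph V} {k : ℕ} {S : Set V}
open Sys

section tree
variable [Finite V] (h : N G S k ∅ Set.univ)

theorem sgd (t : (sys h).Nd) : gd G S k t.st := Sys.gd t

theorem t_sch (t u : (sys h).Nd) : (sys h).td.IsSChild S t u ↔
    ∃ c hc, u = t.cons c hc ∧ SC G S k t.st c := td_sch S t u

theorem t_bot (t : (sys h).Nd) : (sys h).td.IsSBottom S t ↔ Bo G S k t.st := td_bot S t

theorem t_sch1 {t : (sys h).Nd} {c : St V} (hc : SC G S k t.st c) :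
    (sys h).td.IsSChild S t (t.cons c hc.1) := (t_sch h _ _).2 ⟨c, hc.1, rfl, hc⟩

theorem cons_inj' {t t' : (sys h).Nd} {c c' : St V} {hc hc'} (e : t.cons c hc = t'.cons c' hc') : c = c' :=
  congrArg Nd.st e

theorem cons_congr {t : (sys h).Nd} {c c' : St V} {hc hc'} (e : c = c') : t.cons c hc = t.cons c' hc' := by
  subst e; rfl

theorem td_nice : (sys h).td.IsSNice S := by
  constructor
  · intro t t' hp
    obtain ⟨c, hc, rfl⟩ := (td_par _ _).1 hp
    exact st_adj (sgd h t') hc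
  · intro t hb
    rw [t_bot] at hb
    rcases ops (sgd h t) hb with ⟨v, c, hc, hu, h1, h2, h3⟩ | ⟨v, c, hc, hu, h1, h2, h3⟩ |
      ⟨c₁, c₂, hne, h1, h2, hu, h3⟩
    · refine Or.inl ⟨v, _, t_sch1 h hc, ?_, h1, h2, h3⟩
      intro t₂ h'
      obtain ⟨d, hd, rfl, hsd⟩ := (t_sch h _ _).1 h'
      exact cons_congr h (hu d hsd)
    · refine Or.inr (Or.inl ⟨v, _, t_sch1 h hc, ?_, h1, h2, h3⟩)
      intro t₂ h'
      obtain ⟨d, hd, rfl, hsd⟩ := (t_sch h _ _).1 h'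
      exact cons_congr h (hu d hsd)
    · refine Or.inr (Or.inr ⟨_, _, fun e => hne (cons_inj' h e), t_sch1 h h1, t_sch1 h h2, ?_, h3⟩)
      intro t₂ h'
      obtain ⟨d, hd, rfl, hsd⟩ := (t_sch h _ _).1 h'
      rcases hu d hsd with e | e
      · exact Or.inl (cons_congr h e)
      · exact Or.inr (cons_congr h e)

/-- a node whose state is an f-state is not the root -/
theorem f_cons {t : (sys h).Nd} {Y lS lN x b} (e : t.st = .f Y lS lN x b) :
    ∃ p c hc, t = Nd.cons p c hc := by
  rcases Nd.casesR t with rfl | h'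
  · rw [st_rt] at e
    exact absurd e (by simp [sys])
  · exact h'

theorem comb_fjt {t : (sys h).Nd} (hc : Comb t.st) : ∃ A X, (sys h).td.IsFullJoinTree k A X ∧ t ∈ A := by
  obtain ⟨Y, lS, lN, x, b, e, h'⟩ := hc
  have hg := sgd h t
  rw [e] at hg
  have hk : ((sys h).bag t.st).ncard = k + 1 := by rw [e]; exact hg.card
  by_cases hb : b = false
  · subst hb
    obtain ⟨p, c, hc, rfl⟩ := f_cons h e
    have e' : c = .f Y lS lN x false := e
    subst e'
    refine fjt_exists hk (a := p) (Or.inr ⟨rfl, _, hc, rfl⟩) ?_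
    exact parent_ff (sgd h p) hc
  · have h3 : 3 ≤ lS.length := h'.resolve_right hb
    rcases lS with _ | ⟨a, l⟩
    · simp at h3
    have hm : St.f Y l [] x false ∈ (sys h).ch t.st := by
      rw [e]
      exact Or.inr (Or.inr ⟨a, l, rfl, by simpa using h3, Or.inr rfl⟩)
    refine fjt_exists hk (a := t) (b := t.cons _ hm) (Or.inl ⟨rfl, _, hm, rfl⟩) ?_
    rw [e]; rfl

theorem fjt_comb {A : Set (sys h).Nd} {X : Set V} (hA : (sys h).td.IsFullJoinTree k A X) {t : (sys h).Nd}
    (ht : t ∈ A) : Comb t.st := by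
  have hb := hA.2.2.2.1
  have hk := hA.2.2.1
  rcases fjt_nbr hA ht with ⟨c, hc, hcA⟩ | ⟨p, c, hc, rfl, hp⟩
  · refine (same_comb (sgd h t) hc ?_ ?_).1
    · exact (hb _ hcA).trans (hb _ ht).symm
    · rw [← hk, ← hb _ ht]; rfl
  · refine (same_comb (sgd h p) hc ?_ ?_).2
    · exact (hb _ ht).trans (hb _ hp).symm
    · rw [← hk, ← hb _ hp]; rfl

theorem walk {A : Set (sys h).Nd} {Y : Set V} (hA : (sys h).td.IsFullJoinTree k A Y) {x : Set V → V} {W : Set V} :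
    ∀ (l lN : List (Set V)) (b : Bool) (t : (sys h).Nd), t ∈ A → t.st = .f Y l lN x b → 2 ≤ l.length →
      W ∈ l → ∃ ta ∈ A, t.le ta ∧ SC G S k ta.st (br Y x W) := by
  intro l
  induction l with
  | nil => intro lN b t _ _ h2; simp at h2
  | cons a l ih =>
    intro lN b t ht e h2 hW
    have hg := sgd h t
    rw [e] at hg
    by_cases h3 : 2 ≤ l.length
    · rcases List.mem_cons.1 hW with rfl | hW
      · refine ⟨t, ht, le_refl _, ?_⟩
        rw [e, sc_f hg]
        exact Or.inr ⟨_, l, rfl, h3, Or.inl rfl⟩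
      · have hm : St.f Y l [] x false ∈ (sys h).ch t.st := by
          rw [e]
          exact Or.inr (Or.inr ⟨a, l, rfl, h3, Or.inr rfl⟩)
        obtain ⟨ta, hta, hle, hsc⟩ := ih [] false (t.cons _ hm) (fjt_child hA ht hm rfl) rfl h3 hW
        exact ⟨ta, hta, le_trans (le_self_cons _ _ _) hle, hsc⟩
    · refine ⟨t, ht, le_refl _, ?_⟩
      rw [e, sc_f hg]
      exact Or.inl ⟨by simp only [List.length_cons]; omega, W, hW, rfl⟩

theorem touch_br {A : Set (sys h).Nd} {Y : Set V} (hA : (sys h).td.IsFullJoinTree k A Y) {tr : (sys h).Nd}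
    (ht : (sys h).td.IsTopOf A tr) {x : Set V → V} {lS lN : List (Set V)} {b : Bool}
    (e : tr.st = .f Y lS lN x b) (h2 : 2 ≤ lS.length) {B : Set V}
    (hB : B ∈ (Y ∪ UL (lS ++ lN))ᶜ :: lS) {v : V} (hT : Touch G S Y v B) :
    ∃ u t, u ∈ B ∧ (G.Adj v u ∧ u ∉ Y ∧ (∃ s ∈ S, G.ReachableIn Yᶜ u s) ∧
      (sys h).td.FullJoinBranch S A tr u t) ∧
      ((B = (Y ∪ UL (lS ++ lN))ᶜ ∧ t = tr.par) ∨ (t.st = br Y x B ∧ tr.le t)) := by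
  have hg := sgd h tr
  rw [e] at hg
  obtain ⟨u, huB, hvu, huY, hs⟩ := hT
  rcases List.mem_cons.1 hB with rfl | hB
  · refine ⟨u, tr.par, huB, ⟨hvu, huY, hs, Or.inr ⟨?_, rfl, ?_⟩⟩, Or.inl ⟨rfl, rfl⟩⟩
    · obtain ⟨p, c, hc, rfl⟩ := f_cons h e
      exact cons_ne_rt _ _ _
    · rw [td_Vt, mem_vs, e]
      exact huB
  · obtain ⟨ta, hta, hle, hsc⟩ := walk h hA lS lN b tr ht.1 e h2 hB
    refine ⟨u, ta.cons _ hsc.1, huB, ⟨hvu, huY, hs, Or.inl ⟨?_, ⟨ta, hta, t_sch1 h hsc⟩, ?_⟩⟩,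
      Or.inr ⟨rfl, le_trans hle (le_self_cons _ _ _)⟩⟩
    · intro hin
      have h1 : Y \ {x B} = Y := hA.2.2.2.1 _ hin
      have h3 : x B ∈ Y := (hg.w B (by simp [hB])).2.1
      rw [← h1] at h3
      exact h3.2 rfl
    · rw [td_Vt, mem_vs]
      exact Or.inr huB

theorem br_ne {tr : (sys h).Nd} {Y : Set V} {x : Set V → V} {lS lN : List (Set V)} {b : Bool}
    (e : tr.st = .f Y lS lN x b) {B B' O : Set V} {t t' : (sys h).Nd} (hne : B ≠ B')
    (h1 : (B = O ∧ t = tr.par) ∨ (t.st = br Y x B ∧ tr.le t))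
    (h2 : (B' = O ∧ t' = tr.par) ∨ (t'.st = br Y x B' ∧ tr.le t')) : t ≠ t' := by
  obtain ⟨p, c, hc, rfl⟩ := f_cons h e
  rintro rfl
  rcases h1 with ⟨h1, h1'⟩ | ⟨h1, h1'⟩ <;> rcases h2 with ⟨h2, h2'⟩ | ⟨h2, h2'⟩
  · exact hne (h1.trans h2.symm)
  · subst h1'; exact not_cons_le _ _ _ h2'
  · subst h2'; exact not_cons_le _ _ _ h1'
  · rw [h1] at h2
    simp only [br, St.n.injEq] at h2
    exact hne h2.2.1

theorem slim7 {A : Set (sys h).Nd} {X : Set V} (hA : (sys h).td.IsFullJoinTree k A X) {tr : (sys h).Nd}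
    (ht : (sys h).td.IsTopOf A tr) {v : V} (hv : v ∈ X \ S) : ∃ u₁ u₂ u₃ : V, ∃ t₁ t₂ t₃ : (sys h).Nd,
      u₁ ≠ u₂ ∧ u₁ ≠ u₃ ∧ u₂ ≠ u₃ ∧ t₁ ≠ t₂ ∧ t₁ ≠ t₃ ∧ t₂ ≠ t₃ ∧
      (G.Adj v u₁ ∧ u₁ ∉ X ∧ (∃ s ∈ S, G.ReachableIn Xᶜ u₁ s) ∧
        (sys h).td.FullJoinBranch S A tr u₁ t₁) ∧
      (G.Adj v u₂ ∧ u₂ ∉ X ∧ (∃ s ∈ S, G.ReachableIn Xᶜ u₂ s) ∧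
        (sys h).td.FullJoinBranch S A tr u₂ t₂) ∧
      (G.Adj v u₃ ∧ u₃ ∉ X ∧ (∃ s ∈ S, G.ReachableIn Xᶜ u₃ s) ∧
        (sys h).td.FullJoinBranch S A tr u₃ t₃) := by
  obtain ⟨Y, lS, lN, x, b, e, h'⟩ := fjt_comb h hA ht.1
  have hg := sgd h tr
  rw [e] at hg
  have hX : Y = X := by
    rw [← hA.2.2.2.1 _ ht.1, td_bag, e]; rfl
  subst hX
  have hb : b = true := by
    by_contra hb
    have hb : b = false := by simpa using hb
    subst hb
    obtain ⟨p, c, hc, rfl⟩ := f_cons h e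
    have e' : c = .f Y lS lN x false := e
    subst e'
    exact fjt_parent hA ht (parent_ff (sgd h p) hc)
  subst hb
  have h3 : 3 ≤ lS.length := h'.resolve_right (by simp)
  have h7 := (hg.b1 rfl).resolve_left (by omega)
  obtain ⟨B₁, m₁, B₂, m₂, B₃, m₃, n12, n13, n23, T₁, T₂, T₃⟩ := h7 v hv.1 hv.2
  have h2 : 2 ≤ lS.length := by omega
  obtain ⟨u₁, t₁, a₁, b₁, c₁⟩ := touch_br h hA ht e h2 m₁ T₁
  obtain ⟨u₂, t₂, a₂, b₂, c₂⟩ := touch_br h hA ht e h2 m₂ T₂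
  obtain ⟨u₃, t₃, a₃, b₃, c₃⟩ := touch_br h hA ht e h2 m₃ T₃
  have hpw : ((Y ∪ UL (lS ++ lN))ᶜ :: lS).Pairwise Disjoint := by
    rw [List.pairwise_cons]
    constructor
    · intro W hW
      rw [Set.disjoint_left]
      intro z hz hzW
      exact hz (Or.inr ⟨W, by simp [hW], hzW⟩)
    · exact (List.pairwise_append.1 hg.pw).1
  refine ⟨u₁, u₂, u₃, t₁, t₂, t₃, ?_, ?_, ?_, br_ne h e n12 c₁ c₂, br_ne h e n13 c₁ c₃, br_ne h e n23 c₂ c₃,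
    b₁, b₂, b₃⟩
  · rintro rfl; exact n12 (pw_eq hpw m₁ m₂ a₁ a₂)
  · rintro rfl; exact n13 (pw_eq hpw m₁ m₃ a₁ a₃)
  · rintro rfl; exact n23 (pw_eq hpw m₂ m₃ a₂ a₃)

theorem td_slim : (sys h).td.IsSlim S k := by
  refine ⟨?_, ?_, ?_, ?_, ?_, ?_, ?_⟩
  · rw [t_bot]; exact not_bo _ _ _ (by norm_num)
  · intro t t₁ t₂ hb hne h1 h2
    rw [t_bot] at hb
    obtain ⟨c, hc, rfl, hsc⟩ := (t_sch h _ _).1 h1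
    obtain ⟨d, hd, rfl, hsd⟩ := (t_sch h _ _).1 h2
    rcases slim2 (sgd h t) hb (fun e => hne (cons_congr h e)) hsc hsd with hC | ⟨h1, h2, h3, h4, h5⟩
    · exact Or.inl (comb_fjt h hC)
    · refine Or.inr ⟨h1, h2, h3, h4, ?_⟩
      intro tp hp
      obtain ⟨e, he, rfl⟩ := (td_par _ _).1 hp
      exact h5 _ (sgd h tp) he
  · intro t tp hb hk hp
    rw [t_bot] at hb
    obtain ⟨e, he, rfl⟩ := (td_par _ _).1 hp
    obtain ⟨h1, h2⟩ := slim3 (sgd h _) hb (sgd h tp) he hk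
    refine ⟨h1, ?_⟩
    intro t'' h'
    obtain ⟨c, hc, rfl, hsc⟩ := (t_sch h _ _).1 h'
    exact cons_congr h (h2 c hsc)
  · intro t v t' hb _ hc hk
    rw [t_bot] at hb
    obtain ⟨c, hc, rfl, hsc⟩ := (t_sch h _ _).1 hc
    obtain ⟨h1, h2⟩ := slim4 (sgd h t) hb hsc hk
    constructor
    · intro t₁ t₂ g1 g2
      obtain ⟨d, hd, rfl, hsd⟩ := (t_sch h _ _).1 g1
      obtain ⟨e, he, rfl, hse⟩ := (t_sch h _ _).1 g2
      exact cons_congr h (h1 d e hsd hse)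
    · intro t₁ g1
      obtain ⟨d, hd, rfl, hsd⟩ := (t_sch h _ _).1 g1
      exact h2 d hsd
  · intro t tp hb hp hk
    right
    intro tpp hpp
    rw [t_bot] at hb ⊢
    obtain ⟨e, he, rfl⟩ := (td_par _ _).1 hp
    obtain ⟨d, hd, rfl⟩ := (td_par _ _).1 hpp
    exact slim5 (sgd h _) hb (sgd h (tpp.cons d hd)) (sgd h tpp) he hd hk
  · intro A X hA t ht
    obtain ⟨Y, lS, lN, x, b, e, h'⟩ := fjt_comb h hA ht
    have hg := sgd h t
    rw [e] at hg
    have h2 := comb_two hg h'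
    refine ⟨?_, ?_⟩
    · rw [t_bot, e]; exact bo_f hg h2
    · obtain ⟨c₁, c₂, hne, h1, h2, -⟩ := two_sc hg h2
      rw [← e] at h1 h2
      exact ⟨_, _, fun e => hne (cons_inj' h e), t_sch1 h h1, t_sch1 h h2⟩
  · intro A X tr hA ht v hv
    exact slim7 h hA ht hv

end tree

theorem main {ι : Type} [Finite V] (T : RootedTreeDecomp V ι G) (S : Set V) (k : ℕ) (hw : T.HasWidth k) :
    ∃ (ι' : Type) (T' : RootedTreeDecomp V ι' G) (k' : ℕ),
      k' ≤ k ∧ T'.IsSNice S ∧ T'.HasWidth k' ∧ T'.IsSlim S k' := by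
  classical
  have hex : ∃ k, D G k ∅ Set.univ := ⟨k, D_of_td T hw.1⟩
  have hle : Nat.find hex ≤ k := Nat.find_min' hex (D_of_td T hw.1)
  have hN : N G S (Nat.find hex) ∅ Set.univ :=
    thmA _ _ G rfl (fun u _ v _ => Or.inr trivial) (Nat.find_spec hex)
  refine ⟨_, (sys hN).td, Nat.find hex, hle, td_nice hN, ?_, td_slim hN⟩
  have hwm : (sys hN).td.WidthAtMost (Nat.find hex) := fun t => gd_card (sgd hN t)
  refine ⟨hwm, ?_⟩
  by_contra hno
  push Not at hno
  have hlt : ∀ t, ((sys hN).td.bag t).ncard ≤ Nat.find hex := by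
    intro t
    have h1 := hwm t
    have h2 := hno t
    omega
  rcases Nat.eq_zero_or_pos (Nat.find hex) with h0 | h0
  · obtain ⟨t, ht⟩ := hw.2
    have hne : (T.bag t).Nonempty := by
      rw [Set.nonempty_iff_ne_empty]; intro e; rw [e] at ht; simp at ht
    obtain ⟨v, -⟩ := hne
    obtain ⟨t', ht'⟩ := (sys hN).td.bags_cover v
    have h1 := hlt t'
    have h2 : 0 < ((sys hN).td.bag t').ncard := (Set.ncard_pos (Set.toFinite _)).2 ⟨v, ht'⟩
    omega
  · refine Nat.find_min hex (m := Nat.find hex - 1) (by omega) (D_of_td (sys hN).td ?_)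
    intro t
    have := hlt t
    omega

end SlimTD

/-- For every `S`-nice tree decomposition of `G` of width `k`
there is a slim `S`-nice tree decomposition of `G` of width at most `k`. -/
theorem statement9 {V ι : Type} [Fintype V] [DecidableEq V] {G : SimpleGraph V}
    (𝒯 : RootedTreeDecomp V ι G) (S : Set V) (k : ℕ)
    (hnice : 𝒯.IsSNice S) (hw : 𝒯.HasWidth k) :
    ∃ (ι' : Type) (𝒯' : RootedTreeDecomp V ι' G) (k' : ℕ),
      k' ≤ k ∧ 𝒯'.IsSNice S ∧ 𝒯'.HasWidth k' ∧ 𝒯'.IsSlim S k' := by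
  exact SlimTD.main 𝒯 S k hw
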